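/- Let G be a plane graph with outer face F, let P be a subpath of the boundary of F of length at most two, and let L be a list assignment satisfying: (i) |L(v)| ≥ 5 for every vertex v not on F; (ii) |L(v)| ≥ 3 for every vertex v of F not on P; (iii) |L(v)| = 1 for every vertex v of P; (iv) no two vertices with lists of size three are adjacent in G; (v) L gives a proper coloring to the subgraph induced by V(P); and (vi) if P = uvw has length two and x is a common neighbor of u, v and w, then L(x) ≠ L(u) ∪ L(v) ∪ L(w). Then G is L-colorable. -/

import Mathlib

open Set

noncomputable section

/-- A drawing of a simple graph in the plane: vertices are mapped to distinct points,
each edge is realized by a simple arc joining the images of its endpoints, arcs do not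
pass through vertex points, any two arcs realizing distinct edges meet in at most one
point, and no point of the plane that is not a vertex point lies on three or more arcs. -/
structure Drawing {V : Type} (G : SimpleGraph V) where
  pos : V → ℝ × ℝ
  pos_inj : Function.Injective pos
  arc : ∀ ⦃u v : V⦄, G.Adj u v → Path (pos u) (pos v)
  arc_symm : ∀ ⦃u v : V⦄ (h : G.Adj u v), arc h.symm = (arc h).symm
  arc_inj : ∀ ⦃u v : V⦄ (h : G.Adj u v), Function.Injective ⇑(arc h)
  arc_vertex : ∀ ⦃u v : V⦄ (h : G.Adj u v) (t : unitInterval) (w : V),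
    arc h t = pos w → t = 0 ∨ t = 1
  arc_meet_once : ∀ ⦃u v x y : V⦄ (h₁ : G.Adj u v) (h₂ : G.Adj x y),
    s(u, v) ≠ s(x, y) → (Set.range ⇑(arc h₁) ∩ Set.range ⇑(arc h₂)).Subsingleton
  arc_no_triple : ∀ ⦃u₁ v₁ u₂ v₂ u₃ v₃ : V⦄ (h₁ : G.Adj u₁ v₁) (h₂ : G.Adj u₂ v₂)
    (h₃ : G.Adj u₃ v₃), s(u₁, v₁) ≠ s(u₂, v₂) → s(u₁, v₁) ≠ s(u₃, v₃) →
    s(u₂, v₂) ≠ s(u₃, v₃) →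
    ∀ p ∈ Set.range ⇑(arc h₁) ∩ Set.range ⇑(arc h₂) ∩ Set.range ⇑(arc h₃),
      ∃ w : V, p = pos w

namespace Drawing

variable {V : Type} {G : SimpleGraph V} (D : Drawing G)

/-- The set of points used by the arc of an edge. -/
def arcSet ⦃u v : V⦄ (h : G.Adj u v) : Set (ℝ × ℝ) :=
  Set.range ⇑(D.arc h)

/-- The set of interior points of the arc of an edge. -/
def arcInterior ⦃u v : V⦄ (h : G.Adj u v) : Set (ℝ × ℝ) :=
  ⇑(D.arc h) '' {t : unitInterval | t ≠ 0 ∧ t ≠ 1}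

/-- All points of the plane used by the drawing. -/
def graphSet : Set (ℝ × ℝ) :=
  Set.range D.pos ∪ ⋃ (u : V) (v : V) (h : G.Adj u v), D.arcSet h

/-- A crossing of a drawing: a point interior to the arcs of two distinct edges. -/
def IsCrossing (p : ℝ × ℝ) : Prop :=
  ∃ (u v x y : V) (h₁ : G.Adj u v) (h₂ : G.Adj x y),
    s(u, v) ≠ s(x, y) ∧ p ∈ D.arcInterior h₁ ∧ p ∈ D.arcInterior h₂

/-- A drawing is plane if it has no crossings. -/
def IsPlane : Prop := ∀ p : ℝ × ℝ, ¬ D.IsCrossing p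

/-- The faces of a drawing are the connected components of the complement
of the drawing. -/
def IsFace (f : Set (ℝ × ℝ)) : Prop :=
  ∃ q : ℝ × ℝ, q ∉ D.graphSet ∧ f = connectedComponentIn D.graphSetᶜ q

/-- The outer (unbounded) face of a drawing. -/
def outerFace : Set (ℝ × ℝ) :=
  {p : ℝ × ℝ | p ∉ D.graphSet ∧
    ¬ Bornology.IsBounded (connectedComponentIn D.graphSetᶜ p)}

/-- A vertex lies on the outer face if its point is on the boundary of the outer face. -/
def OnOuter (v : V) : Prop := D.pos v ∈ frontier D.outerFace

/-- The set of points of the plane used by the drawing of a walk. -/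
def walkSet {a b : V} (W : G.Walk a b) : Set (ℝ × ℝ) :=
  D.pos '' {v : V | v ∈ W.support} ∪ ⋃ d ∈ W.darts, D.arcSet d.adj

/-- A closed walk bounds the outer face if the boundary of the outer face is exactly
the drawing of the walk. -/
def BoundsOuter {a : V} (W : G.Walk a a) : Prop :=
  frontier D.outerFace = D.walkSet W

end Drawing

/-- The open region enclosed by a set `S` (typically the drawing of a cycle):
all points outside `S` whose connected component in the complement of `S` is bounded. -/
def enclosed (S : Set (ℝ × ℝ)) : Set (ℝ × ℝ) :=
  {p : ℝ × ℝ | p ∉ S ∧ Bornology.IsBounded (connectedComponentIn Sᶜ p)}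

namespace Drawing

variable {V : Type} {G : SimpleGraph V} (D : Drawing G)

/-- The closed disc bounded by (the drawing of) a closed walk. -/
def closedDisc {a : V} (W : G.Walk a a) : Set (ℝ × ℝ) :=
  D.walkSet W ∪ enclosed (D.walkSet W)

/-- The endpoints of the (two) edges incident with a crossing point `p`. -/
def crossingEnds (p : ℝ × ℝ) : Set V :=
  {w : V | ∃ (z : V) (h : G.Adj w z), p ∈ D.arcInterior h}

end Drawing

/-- A proper colouring of `G` from the lists `L`. -/
def IsListColoring {V : Type} (G : SimpleGraph V) (L : V → Finset ℕ) (c : V → ℕ) : Prop :=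
  (∀ v, c v ∈ L v) ∧ ∀ ⦃u v : V⦄, G.Adj u v → c u ≠ c v

/-- `G` is colourable from the lists `L`. -/
def ListColorable {V : Type} (G : SimpleGraph V) (L : V → Finset ℕ) : Prop :=
  ∃ c : V → ℕ, IsListColoring G L c


/-! ### A parity obstruction to planar drawings of `K₅` and `K₃,₃` -/

/-- Total change of a continuous logarithm of `p - w` along `p`. -/
def thetaVar (p : ℝ → ℂ) (w : ℂ) : ℂ :=
  open Classical in
  if h : ∃ l : ℝ → ℂ, Continuous l ∧ ∀ s, Complex.exp (l s) = p s - w then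
    h.choose 1 - h.choose 0 else 0

lemma lift_diff_const {l l' : ℝ → ℂ} (hl : Continuous l) (hl' : Continuous l')
    (h : ∀ s, Complex.exp (l s) = Complex.exp (l' s)) : l 1 - l 0 = l' 1 - l' 0 := by
  have key : ∀ s, ∃ n : ℤ, l s = l' s + n * (2 * Real.pi * Complex.I) := fun s =>
    Complex.exp_eq_exp_iff_exists_int.1 (h s)
  choose n hn using key
  have hc : Continuous fun s : ℝ => ((n s : ℤ) : ℝ) := by
    have : (fun s : ℝ => ((n s : ℤ) : ℝ)) = fun s => ((l s - l' s) / (2 * Real.pi * Complex.I)).re := by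
      funext s
      have h2 : (2 * Real.pi * Complex.I : ℂ) ≠ 0 := by simp [Real.pi_ne_zero]
      rw [hn s, add_sub_cancel_left, mul_div_cancel_right₀ _ h2]
      simp
    rw [this]
    fun_prop
  have hn' : Continuous n := Int.isClosedEmbedding_coe_real.isInducing.continuous_iff.2 hc
  have h01 : n 0 = n 1 := by
    exact PreconnectedSpace.constant inferInstance hn'
  rw [hn 0, hn 1, h01]
  ring

lemma thetaVar_eq {p l : ℝ → ℂ} {w : ℂ} (hl : Continuous l)
    (h : ∀ s, Complex.exp (l s) = p s - w) : thetaVar p w = l 1 - l 0 := by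
  have hex : ∃ l : ℝ → ℂ, Continuous l ∧ ∀ s, Complex.exp (l s) = p s - w := ⟨l, hl, h⟩
  unfold thetaVar
  rw [dif_pos hex]
  exact lift_diff_const hex.choose_spec.1 hl fun s => by rw [hex.choose_spec.2 s, h s]

lemma square_lift {p q : ℝ → ℂ} (hp : Continuous p) (hq : Continuous q)
    (hd : ∀ s t, p s ≠ q t) :
    ∃ F : ℝ × ℝ → ℂ, Continuous F ∧ ∀ s t, Complex.exp (F (s, t)) = p s - q t := by
  have hU : IsSimplyConnected (univ : Set (ℝ × ℝ)) :=
    haveI : ContractibleSpace (univ : Set (ℝ × ℝ)) := convex_univ.contractibleSpace univ_nonempty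
    show SimplyConnectedSpace (univ : Set (ℝ × ℝ)) from inferInstance
  obtain ⟨f, hf, hfe⟩ := Complex.exists_continuousOn_eqOn_exp_comp hU isOpen_univ
    (g := fun x : ℝ × ℝ => p x.1 - q x.2) (by fun_prop) (by
      rintro ⟨x, -, hx⟩
      exact hd x.1 x.2 (sub_eq_zero.1 hx))
  exact ⟨f, continuousOn_univ.1 hf, fun s t => hfe (mem_univ (s, t))⟩

lemma thetaVar_square {p q : ℝ → ℂ} (hp : Continuous p) (hq : Continuous q)
    (hd : ∀ s t, p s ≠ q t) :
    thetaVar p (q 0) - thetaVar p (q 1) = thetaVar q (p 0) - thetaVar q (p 1) := by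
  obtain ⟨F, hF, hFe⟩ := square_lift hp hq hd
  rw [thetaVar_eq (p := p) (w := q 0) (l := fun s => F (s, 0)) (by fun_prop) (fun s => hFe s 0),
    thetaVar_eq (p := p) (w := q 1) (l := fun s => F (s, 1)) (by fun_prop) (fun s => hFe s 1),
    thetaVar_eq (p := q) (w := p 0) (l := fun t => F (0, t) + Real.pi * Complex.I) (by fun_prop)
      (fun s => by rw [Complex.exp_add, hFe, Complex.exp_pi_mul_I]; ring),
    thetaVar_eq (p := q) (w := p 1) (l := fun t => F (1, t) + Real.pi * Complex.I) (by fun_prop)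
      (fun s => by rw [Complex.exp_add, hFe, Complex.exp_pi_mul_I]; ring)]
  ring

lemma thetaVar_mod {p q : ℝ → ℂ} (hp : Continuous p) (hq : Continuous q)
    (hd : ∀ s t, p s ≠ q t) (t : ℝ) {A B : ℂ} (hA : Complex.exp A = p 1 - q t)
    (hB : Complex.exp B = p 0 - q t) :
    ∃ n : ℤ, thetaVar p (q t) = A - B + n * (2 * Real.pi * Complex.I) := by
  obtain ⟨F, hF, hFe⟩ := square_lift hp hq hd
  rw [thetaVar_eq (p := p) (w := q t) (l := fun s => F (s, t)) (by fun_prop) (fun s => hFe s t)]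
  obtain ⟨n, hn⟩ := Complex.exp_eq_exp_iff_exists_int.1 ((hFe 1 t).trans hA.symm)
  obtain ⟨m, hm⟩ := Complex.exp_eq_exp_iff_exists_int.1 ((hFe 0 t).trans hB.symm)
  refine ⟨n - m, ?_⟩
  rw [hn, hm]
  push_cast
  ring

/-- A consistent choice of logarithms of differences. -/
def logDiff {n : ℕ} (z : Fin n → ℂ) (u v : Fin n) : ℂ :=
  if u < v then Complex.log (z u - z v) else Complex.log (z v - z u) + Real.pi * Complex.I

lemma exp_logDiff {n : ℕ} {z : Fin n → ℂ} {u v : Fin n} (h : z u ≠ z v) :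
    Complex.exp (logDiff z u v) = z u - z v := by
  unfold logDiff
  split_ifs
  · exact Complex.exp_log (sub_ne_zero.2 h)
  · rw [Complex.exp_add, Complex.exp_log (sub_ne_zero.2 h.symm), Complex.exp_pi_mul_I]; ring

/-- The sign of an ordered pair. -/
def pairSign {n : ℕ} (u v : Fin n) : ℤ := if u < v then -1 else 1

lemma logDiff_sub {n : ℕ} {z : Fin n → ℂ} {u v : Fin n} (h : u ≠ v) :
    logDiff z u v - logDiff z v u = pairSign u v * (Real.pi * Complex.I) := by
  unfold logDiff pairSign
  rcases lt_or_gt_of_ne h with h | h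
  · rw [if_pos h, if_neg h.asymm, if_pos h]; push_cast; ring
  · rw [if_neg h.asymm, if_pos h, if_neg h.asymm]; push_cast; ring

/-- The integer defect of the variation of the edge `a b` seen from the vertex `w`. -/
def defect {n : ℕ} (z : Fin n → ℂ) (p : Fin n → Fin n → ℝ → ℂ) (a b w : Fin n) : ℤ :=
  open Classical in
  if h : ∃ m : ℤ, thetaVar (p a b) (z w) =
    logDiff z b w - logDiff z a w + m * (2 * Real.pi * Complex.I) then h.choose else 0

lemma defect_rel {n : ℕ} (z : Fin n → ℂ) (p : Fin n → Fin n → ℝ → ℂ) {a b c d : Fin n}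
    (hac : a ≠ c) (had : a ≠ d) (hbc : b ≠ c) (hbd : b ≠ d)
    (hp : Continuous (p a b)) (hq : Continuous (p c d))
    (ha : p a b 0 = z a) (hb : p a b 1 = z b) (hc : p c d 0 = z c) (hd : p c d 1 = z d)
    (hdis : ∀ s t, p a b s ≠ p c d t) :
    pairSign b c - pairSign a c - pairSign b d + pairSign a d +
      2 * (defect z p a b c - defect z p a b d - defect z p c d a + defect z p c d b) = 0 := by
  have hdis' : ∀ s t, p c d s ≠ p a b t := fun s t => (hdis t s).symm
  have zac : z a ≠ z c := by rw [← ha, ← hc]; exact hdis _ _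
  have zad : z a ≠ z d := by rw [← ha, ← hd]; exact hdis _ _
  have zbc : z b ≠ z c := by rw [← hb, ← hc]; exact hdis _ _
  have zbd : z b ≠ z d := by rw [← hb, ← hd]; exact hdis _ _
  have e1 : ∃ m : ℤ, thetaVar (p a b) (z c) =
      logDiff z b c - logDiff z a c + m * (2 * Real.pi * Complex.I) := by
    have := thetaVar_mod hp hq hdis 0 (A := logDiff z b c) (B := logDiff z a c)
      (by rw [exp_logDiff zbc, hb, hc]) (by rw [exp_logDiff zac, ha, hc])
    rwa [hc] at this
  have e2 : ∃ m : ℤ, thetaVar (p a b) (z d) =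
      logDiff z b d - logDiff z a d + m * (2 * Real.pi * Complex.I) := by
    have := thetaVar_mod hp hq hdis 1 (A := logDiff z b d) (B := logDiff z a d)
      (by rw [exp_logDiff zbd, hb, hd]) (by rw [exp_logDiff zad, ha, hd])
    rwa [hd] at this
  have e3 : ∃ m : ℤ, thetaVar (p c d) (z a) =
      logDiff z d a - logDiff z c a + m * (2 * Real.pi * Complex.I) := by
    have := thetaVar_mod hq hp hdis' 0 (A := logDiff z d a) (B := logDiff z c a)
      (by rw [exp_logDiff zad.symm, ha, hd]) (by rw [exp_logDiff zac.symm, ha, hc])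
    rwa [ha] at this
  have e4 : ∃ m : ℤ, thetaVar (p c d) (z b) =
      logDiff z d b - logDiff z c b + m * (2 * Real.pi * Complex.I) := by
    have := thetaVar_mod hq hp hdis' 1 (A := logDiff z d b) (B := logDiff z c b)
      (by rw [exp_logDiff zbd.symm, hb, hd]) (by rw [exp_logDiff zbc.symm, hb, hc])
    rwa [hb] at this
  have k := thetaVar_square hp hq hdis
  rw [ha, hb, hc, hd] at k
  have d1 : defect z p a b c = e1.choose := dif_pos e1
  have d2 : defect z p a b d = e2.choose := dif_pos e2
  have d3 : defect z p c d a = e3.choose := dif_pos e3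
  have d4 : defect z p c d b = e4.choose := dif_pos e4
  rw [e1.choose_spec, e2.choose_spec, e3.choose_spec, e4.choose_spec, ← d1, ← d2, ← d3, ← d4] at k
  have l1 := logDiff_sub (z := z) hac
  have l2 := logDiff_sub (z := z) had
  have l3 := logDiff_sub (z := z) hbc
  have l4 := logDiff_sub (z := z) hbd
  have hpi : (Real.pi * Complex.I : ℂ) ≠ 0 := by simp [Real.pi_ne_zero]
  have : ((pairSign b c - pairSign a c - pairSign b d + pairSign a d +
      2 * (defect z p a b c - defect z p a b d - defect z p c d a + defect z p c d b) : ℤ) : ℂ)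
      * (Real.pi * Complex.I) = 0 := by
    push_cast
    linear_combination k - l3 + l1 + l4 - l2
  have := (mul_eq_zero.1 this).resolve_right hpi
  exact_mod_cast this

lemma no_K5_paths (z : Fin 5 → ℂ) (p : Fin 5 → Fin 5 → ℝ → ℂ)
    (hp : ∀ i j, i < j → Continuous (p i j))
    (h0 : ∀ i j, i < j → p i j 0 = z i) (h1 : ∀ i j, i < j → p i j 1 = z j)
    (hd : ∀ a b c d, a < b → c < d → a ≠ c → a ≠ d → b ≠ c → b ≠ d → ∀ s t, p a b s ≠ p c d t) :
    False := by
  have rel : ∀ a b c d : Fin 5, a < b → c < d → a ≠ c → a ≠ d → b ≠ c → b ≠ d → _ :=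
    fun a b c d hab hcd hac had hbc hbd =>
    defect_rel z p hac had hbc hbd (hp _ _ hab) (hp _ _ hcd) (h0 _ _ hab) (h1 _ _ hab)
      (h0 _ _ hcd) (h1 _ _ hcd) (hd a b c d hab hcd hac had hbc hbd)
  have r1 := rel 0 1 2 3 (by decide) (by decide) (by decide) (by decide) (by decide) (by decide)
  have r2 := rel 0 2 1 3 (by decide) (by decide) (by decide) (by decide) (by decide) (by decide)
  have r3 := rel 0 3 1 2 (by decide) (by decide) (by decide) (by decide) (by decide) (by decide)
  have r4 := rel 0 1 2 4 (by decide) (by decide) (by decide) (by decide) (by decide) (by decide)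
  have r5 := rel 0 2 1 4 (by decide) (by decide) (by decide) (by decide) (by decide) (by decide)
  have r6 := rel 0 4 1 2 (by decide) (by decide) (by decide) (by decide) (by decide) (by decide)
  have r7 := rel 0 1 3 4 (by decide) (by decide) (by decide) (by decide) (by decide) (by decide)
  have r8 := rel 0 3 1 4 (by decide) (by decide) (by decide) (by decide) (by decide) (by decide)
  have r9 := rel 0 4 1 3 (by decide) (by decide) (by decide) (by decide) (by decide) (by decide)
  have r10 := rel 0 2 3 4 (by decide) (by decide) (by decide) (by decide) (by decide) (by decide)
  have r11 := rel 0 3 2 4 (by decide) (by decide) (by decide) (by decide) (by decide) (by decide)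
  have r12 := rel 0 4 2 3 (by decide) (by decide) (by decide) (by decide) (by decide) (by decide)
  have r13 := rel 1 2 3 4 (by decide) (by decide) (by decide) (by decide) (by decide) (by decide)
  have r14 := rel 1 3 2 4 (by decide) (by decide) (by decide) (by decide) (by decide) (by decide)
  have r15 := rel 1 4 2 3 (by decide) (by decide) (by decide) (by decide) (by decide) (by decide)
  have s1 : ∀ u v : Fin 5, u < v → pairSign u v = -1 := fun u v h => if_pos h
  have s2 : ∀ u v : Fin 5, v < u → pairSign u v = 1 := fun u v h => if_neg h.asymm
  simp (discharger := decide) only [s1, s2] at r1 r2 r3 r4 r5 r6 r7 r8 r9 r10 r11 r12 r13 r14 r15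
  omega

/-- `x i` is the vertex `i`, `y j` is the vertex `3 + j`. -/
lemma no_K33_paths (z : Fin 6 → ℂ) (p : Fin 6 → Fin 6 → ℝ → ℂ)
    (hp : ∀ i j, i < 3 → 3 ≤ j → Continuous (p i j))
    (h0 : ∀ i j, i < 3 → 3 ≤ j → p i j 0 = z i) (h1 : ∀ i j, i < 3 → 3 ≤ j → p i j 1 = z j)
    (hd : ∀ a b c d, a < 3 → 3 ≤ b → c < 3 → 3 ≤ d → a ≠ c → b ≠ d →
      ∀ s t, p a b s ≠ p c d t) : False := by
  have rel : ∀ a b c d : Fin 6, a < 3 → 3 ≤ b → c < 3 → 3 ≤ d → a ≠ c → b ≠ d → _ :=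
    fun a b c d ha hb hc hd' hac hbd =>
    defect_rel z p hac (ha.trans_le hd').ne (hc.trans_le hb).ne' hbd (hp _ _ ha hb) (hp _ _ hc hd')
      (h0 _ _ ha hb) (h1 _ _ ha hb)
      (h0 _ _ hc hd') (h1 _ _ hc hd') (hd a b c d ha hb hc hd' hac hbd)
  have r1 := rel 0 3 1 4 (by decide) (by decide) (by decide) (by decide) (by decide) (by decide)
  have r2 := rel 0 3 1 5 (by decide) (by decide) (by decide) (by decide) (by decide) (by decide)
  have r3 := rel 0 4 1 3 (by decide) (by decide) (by decide) (by decide) (by decide) (by decide)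
  have r4 := rel 0 4 1 5 (by decide) (by decide) (by decide) (by decide) (by decide) (by decide)
  have r5 := rel 0 5 1 3 (by decide) (by decide) (by decide) (by decide) (by decide) (by decide)
  have r6 := rel 0 5 1 4 (by decide) (by decide) (by decide) (by decide) (by decide) (by decide)
  have r7 := rel 0 3 2 4 (by decide) (by decide) (by decide) (by decide) (by decide) (by decide)
  have r8 := rel 0 3 2 5 (by decide) (by decide) (by decide) (by decide) (by decide) (by decide)
  have r9 := rel 0 4 2 3 (by decide) (by decide) (by decide) (by decide) (by decide) (by decide)
  have r10 := rel 0 4 2 5 (by decide) (by decide) (by decide) (by decide) (by decide) (by decide)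
  have r11 := rel 0 5 2 3 (by decide) (by decide) (by decide) (by decide) (by decide) (by decide)
  have r12 := rel 0 5 2 4 (by decide) (by decide) (by decide) (by decide) (by decide) (by decide)
  have r13 := rel 1 3 2 4 (by decide) (by decide) (by decide) (by decide) (by decide) (by decide)
  have r14 := rel 1 3 2 5 (by decide) (by decide) (by decide) (by decide) (by decide) (by decide)
  have r15 := rel 1 4 2 3 (by decide) (by decide) (by decide) (by decide) (by decide) (by decide)
  have r16 := rel 1 4 2 5 (by decide) (by decide) (by decide) (by decide) (by decide) (by decide)
  have r17 := rel 1 5 2 3 (by decide) (by decide) (by decide) (by decide) (by decide) (by decide)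
  have r18 := rel 1 5 2 4 (by decide) (by decide) (by decide) (by decide) (by decide) (by decide)
  have s1 : ∀ u v : Fin 6, u < v → pairSign u v = -1 := fun u v h => if_pos h
  have s2 : ∀ u v : Fin 6, v < u → pairSign u v = 1 := fun u v h => if_neg h.asymm
  simp (discharger := decide) only [s1, s2] at r1 r2 r3 r4 r5 r6 r7 r8 r9 r10 r11 r12 r13 r14 r15 r16 r17 r18
  omega

/-! ### Minors -/

/-- A nonempty set of vertices inducing a connected subgraph. -/
def Conn {W : Type} (H : SimpleGraph W) (B : Set W) : Prop :=
  B.Nonempty ∧ ∀ x ∈ B, ∀ y ∈ B, Relation.ReflTransGen (fun a b => H.Adj a b ∧ b ∈ B) x y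

/-- Two sets of vertices are joined by an edge. -/
def Touch {W : Type} (H : SimpleGraph W) (B C : Set W) : Prop :=
  ∃ b ∈ B, ∃ c ∈ C, H.Adj b c

/-- No `K₅` minor and no `K₃,₃` minor. -/
def Good {W : Type} (H : SimpleGraph W) : Prop :=
  (∀ B : Fin 5 → Set W, (∀ i, Conn H (B i)) → (∀ i j, i < j → Disjoint (B i) (B j)) →
    (∀ i j, i < j → Touch H (B i) (B j)) → False) ∧
  (∀ B : Fin 6 → Set W, (∀ i, Conn H (B i)) → (∀ i j, i < j → Disjoint (B i) (B j)) →
    (∀ i j, i < 3 → 3 ≤ j → Touch H (B i) (B j)) → False)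

lemma good_of_regions {W : Type} (H : SimpleGraph W) (pt : W → ℝ × ℝ)
    (U : Set W → Set (ℝ × ℝ))
    (hpt : ∀ Y, ∀ v ∈ Y, pt v ∈ U Y)
    (hmono : ∀ Y Z, Y ⊆ Z → U Y ⊆ U Z)
    (hadj : ∀ Y, ∀ u ∈ Y, ∀ v ∈ Y, H.Adj u v → JoinedIn (U Y) (pt u) (pt v))
    (hdisj : ∀ Y Z, Disjoint Y Z → Disjoint (U Y) (U Z)) : Good H := by
  have hconn : ∀ B, Conn H B → ∀ x ∈ B, ∀ y ∈ B, JoinedIn (U B) (pt x) (pt y) := by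
    intro B hB x hx y hy
    have h := hB.2 x hx y hy
    have : y ∈ B ∧ JoinedIn (U B) (pt x) (pt y) := by
      clear hy
      induction h with
      | refl => exact ⟨hx, JoinedIn.refl (hpt _ _ hx)⟩
      | tail _ h2 ih => exact ⟨h2.2, ih.2.trans (hadj _ _ ih.1 _ h2.2 h2.1)⟩
    exact this.2
  have hpath : ∀ B C, Conn H B → Conn H C → Touch H B C → ∀ x ∈ B, ∀ y ∈ C,
      JoinedIn (U (B ∪ C)) (pt x) (pt y) := by
    intro B C hB hC ⟨b, hb, c, hc, hbc⟩ x hx y hy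
    exact ((hconn B hB x hx b hb).mono (hmono _ _ subset_union_left)).trans
      ((hadj (B ∪ C) b (Or.inl hb) c (Or.inr hc) hbc).trans
        ((hconn C hC c hc y hy).mono (hmono _ _ subset_union_right)))
  let e : ℝ × ℝ → ℂ := fun q => ⟨q.1, q.2⟩
  have he : Continuous e := Complex.equivRealProdCLM.symm.continuous
  have hei : Function.Injective e := by
    rintro ⟨a, b⟩ ⟨c, d⟩ h
    simpa [e, Complex.ext_iff] using h
  constructor
  · intro B hB hD hT
    choose r hr using fun i => (hB i).1
    have hp : ∀ i j, ∃ f : ℝ → ℂ, i < j → Continuous f ∧ f 0 = e (pt (r i)) ∧ f 1 = e (pt (r j)) ∧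
        ∀ s, f s ∈ e '' U (B i ∪ B j) := by
      intro i j
      by_cases hij : i < j
      · obtain ⟨γ, hγ⟩ := hpath _ _ (hB i) (hB j) (hT i j hij) _ (hr i) _ (hr j)
        refine ⟨fun s => e (γ.extend s), fun _ => ⟨by fun_prop, by simp, by simp, fun s => ⟨_, ?_, rfl⟩⟩⟩
        exact hγ _
      · exact ⟨0, fun h => absurd h hij⟩
    choose p hp using hp
    refine no_K5_paths (fun i => e (pt (r i))) p (fun i j h => (hp i j h).1)
      (fun i j h => (hp i j h).2.1) (fun i j h => (hp i j h).2.2.1) ?_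
    intro a b c d hab hcd hac had hbc hbd s t heq
    have hD' : ∀ i j, i ≠ j → Disjoint (B i) (B j) := fun i j h =>
      (lt_or_gt_of_ne h).elim (hD i j) fun h => (hD j i h).symm
    obtain ⟨q, hq, hq'⟩ := (hp a b hab).2.2.2 s
    obtain ⟨q2, hq2, hq2'⟩ := (hp c d hcd).2.2.2 t
    have : q = q2 := hei (by rw [hq', hq2', heq])
    subst this
    refine (hdisj (B a ∪ B b) (B c ∪ B d) ?_).le_bot ⟨hq, hq2⟩
    simp only [disjoint_union_left, disjoint_union_right]
    exact ⟨⟨hD' _ _ hac, hD' _ _ hbc⟩, hD' _ _ had, hD' _ _ hbd⟩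
  · intro B hB hD hT
    choose r hr using fun i => (hB i).1
    have hp : ∀ i j, ∃ f : ℝ → ℂ, i < 3 → 3 ≤ j → Continuous f ∧ f 0 = e (pt (r i)) ∧
        f 1 = e (pt (r j)) ∧ ∀ s, f s ∈ e '' U (B i ∪ B j) := by
      intro i j
      by_cases hij : i < 3 ∧ 3 ≤ j
      · obtain ⟨γ, hγ⟩ := hpath _ _ (hB i) (hB j) (hT i j hij.1 hij.2) _ (hr i) _ (hr j)
        refine ⟨fun s => e (γ.extend s), fun _ _ => ⟨by fun_prop, by simp, by simp, fun s => ⟨_, ?_, rfl⟩⟩⟩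
        exact hγ _
      · exact ⟨0, fun h h' => absurd ⟨h, h'⟩ hij⟩
    choose p hp using hp
    refine no_K33_paths (fun i => e (pt (r i))) p (fun i j h h' => (hp i j h h').1)
      (fun i j h h' => (hp i j h h').2.1) (fun i j h h' => (hp i j h h').2.2.1) ?_
    intro a b c d ha hb hc hd hac hbd s t heq
    have hD' : ∀ i j, i ≠ j → Disjoint (B i) (B j) := fun i j h =>
      (lt_or_gt_of_ne h).elim (hD i j) fun h => (hD j i h).symm
    obtain ⟨q, hq, hq'⟩ := (hp a b ha hb).2.2.2 s
    obtain ⟨q2, hq2, hq2'⟩ := (hp c d hc hd).2.2.2 t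
    have : q = q2 := hei (by rw [hq', hq2', heq])
    subst this
    refine (hdisj (B a ∪ B b) (B c ∪ B d) ?_).le_bot ⟨hq, hq2⟩
    simp only [disjoint_union_left, disjoint_union_right]
    exact ⟨⟨hD' _ _ hac, hD' _ _ (hc.trans_le hb).ne'⟩, hD' _ _ (ha.trans_le hd).ne, hD' _ _ hbd⟩

lemma isConnected_norm_gt (R : ℝ) (hR : 0 ≤ R) : IsConnected {x : ℝ × ℝ | R < ‖x‖} := by
  have hrank : 1 < Module.rank ℝ (ℝ × ℝ) := by
    rw [← Module.finrank_eq_rank]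
    norm_num
  have h0 := isConnected_compl_singleton_of_one_lt_rank hrank (0 : ℝ × ℝ)
  have himg : {x : ℝ × ℝ | R < ‖x‖} = (fun x : ℝ × ℝ => (1 + R / ‖x‖) • x) '' {0}ᶜ := by
    ext x
    simp only [mem_ofPred_eq, mem_image, mem_compl_iff, mem_singleton_iff]
    constructor
    · intro hx
      have hx0 : 0 < ‖x‖ := hR.trans_lt hx
      have h1 : 0 < 1 - R / ‖x‖ := by
        rw [sub_pos, div_lt_one hx0]; exact hx
      have hn : ‖(1 - R / ‖x‖) • x‖ = ‖x‖ - R := by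
        rw [norm_smul, Real.norm_of_nonneg h1.le]
        field_simp
      refine ⟨(1 - R / ‖x‖) • x, ?_, ?_⟩
      · exact smul_ne_zero h1.ne' (norm_pos_iff.1 hx0)
      · rw [hn, smul_smul]
        have : (1 + R / (‖x‖ - R)) * (1 - R / ‖x‖) = 1 := by
          have : ‖x‖ - R ≠ 0 := by linarith
          field_simp
          ring
        rw [this, one_smul]
    · rintro ⟨y, hy, rfl⟩
      have hy0 : 0 < ‖y‖ := norm_pos_iff.2 hy
      rw [norm_smul, Real.norm_of_nonneg (by positivity)]
      have : (1 + R / ‖y‖) * ‖y‖ = ‖y‖ + R := by field_simp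
      rw [this]; linarith
  rw [himg]
  refine h0.image _ ?_
  intro x hx
  have : ‖x‖ ≠ 0 := norm_ne_zero_iff.2 hx
  apply ContinuousAt.continuousWithinAt
  fun_prop (disch := assumption)

namespace Drawing

variable {V : Type} {G : SimpleGraph V} (D : Drawing G)

lemma isCompact_arcSet ⦃u v : V⦄ (h : G.Adj u v) : IsCompact (D.arcSet h) :=
  isCompact_range (D.arc h).continuous

lemma isCompact_graphSet [Finite V] : IsCompact D.graphSet := by
  refine (finite_range D.pos).isCompact.union ?_
  refine isCompact_iUnion fun u => isCompact_iUnion fun v => isCompact_iUnion fun h => ?_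
  exact D.isCompact_arcSet h

lemma outer_open_conn [Finite V] : IsOpen D.outerFace ∧ IsPathConnected D.outerFace := by
  have hc := D.isCompact_graphSet
  obtain ⟨R, hR⟩ := hc.isBounded.subset_closedBall 0
  set E : Set (ℝ × ℝ) := {x | max R 0 < ‖x‖}
  have hE : IsConnected E := isConnected_norm_gt _ (le_max_right _ _)
  have hEG : E ⊆ D.graphSetᶜ := by
    intro x hx hx'
    have := hR hx'
    rw [mem_closedBall_zero_iff] at this
    exact absurd ((lt_of_le_of_lt (le_max_left _ _) hx)) (not_lt.2 this)
  have hEc : ∀ B : Set (ℝ × ℝ), ¬ Bornology.IsBounded B → (B ∩ E).Nonempty := by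
    intro B hB
    by_contra hne
    apply hB
    refine (Metric.isBounded_closedBall (x := (0 : ℝ × ℝ)) (r := max R 0)).subset ?_
    intro x hx
    rw [mem_closedBall_zero_iff]
    by_contra hx'
    exact hne ⟨x, hx, not_le.1 hx'⟩
  have hEu : ¬ Bornology.IsBounded E := by
    intro hb
    obtain ⟨C, hC⟩ := hb.exists_norm_le
    have : ((max (max R 0) C + 1 : ℝ), (0 : ℝ)) ∈ E := by
      show max R 0 < ‖((max (max R 0) C + 1 : ℝ), (0 : ℝ))‖
      refine lt_of_lt_of_le ?_ (norm_fst_le _)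
      show _ < ‖max (max R 0) C + 1‖
      rw [Real.norm_eq_abs]
      refine lt_of_lt_of_le ?_ (le_abs_self _)
      linarith [le_max_left (max R 0) C]
    have h2 := hC _ this
    have h3 : max (max R 0) C + 1 ≤ ‖((max (max R 0) C + 1 : ℝ), (0 : ℝ))‖ :=
      (le_abs_self _).trans (norm_fst_le ((max (max R 0) C + 1 : ℝ), (0 : ℝ)))
    linarith [le_max_right (max R 0) C]
  obtain ⟨q0, hq0⟩ := hE.1
  have hEsub : E ⊆ connectedComponentIn D.graphSetᶜ q0 :=
    hE.isPreconnected.subset_connectedComponentIn hq0 hEG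
  have heq : D.outerFace = connectedComponentIn D.graphSetᶜ q0 := by
    ext p
    constructor
    · rintro ⟨hp, hpu⟩
      obtain ⟨x, hx, hxE⟩ := hEc _ hpu
      have h1 := connectedComponentIn_eq hx
      have h2 := connectedComponentIn_eq (hEsub hxE)
      rw [h2, ← h1]
      exact mem_connectedComponentIn hp
    · intro hp
      refine ⟨connectedComponentIn_subset _ _ hp, ?_⟩
      rw [← connectedComponentIn_eq hp]
      exact fun h => hEu (h.subset hEsub)
  have ho : IsOpen D.outerFace := by
    rw [heq]
    exact hc.isClosed.isOpen_compl.connectedComponentIn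
  refine ⟨ho, ho.isConnected_iff_isPathConnected.1 ?_⟩
  rw [heq]
  exact isConnected_connectedComponentIn_iff.2 (hEG hq0)

lemma outer_of_preconnected {S : Set (ℝ × ℝ)} (hS : IsPreconnected S) {q : ℝ × ℝ}
    (hq : q ∈ D.outerFace) (hqS : q ∈ S) (hSG : S ⊆ D.graphSetᶜ) : S ⊆ D.outerFace := by
  intro x hx
  have h1 := hS.subset_connectedComponentIn hqS hSG hx
  refine ⟨hSG hx, ?_⟩
  rw [← connectedComponentIn_eq h1]
  exact hq.2

lemma pos_mem_graphSet (v : V) : D.pos v ∈ D.graphSet := Or.inl ⟨v, rfl⟩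

lemma arc_mem_graphSet ⦃u v : V⦄ (h : G.Adj u v) (t) : D.arc h t ∈ D.graphSet :=
  Or.inr (mem_iUnion.2 ⟨u, mem_iUnion.2 ⟨v, mem_iUnion.2 ⟨h, ⟨t, rfl⟩⟩⟩⟩)

lemma joined_outer [Finite V] (v : V) (hv : D.OnOuter v) (q0 : ℝ × ℝ) (hq0 : q0 ∈ D.outerFace) :
    JoinedIn (D.outerFace ∪ {D.pos v} ∪ ⋃ (w : V) (h : G.Adj v w), D.arcInterior h)
      q0 (D.pos v) := by
  obtain ⟨ho, hpc⟩ := D.outer_open_conn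
  set T : Set (ℝ × ℝ) := D.pos '' {w | w ≠ v} ∪
    ⋃ (u : V) (w : V) (h : G.Adj u w) (_ : u ≠ v ∧ w ≠ v), D.arcSet h with hT
  have hTc : IsClosed T := by
    refine ((toFinite _).isClosed).union ?_
    refine isClosed_iUnion_of_finite fun u => isClosed_iUnion_of_finite fun w =>
      isClosed_iUnion_of_finite fun h => isClosed_iUnion_of_finite fun _ =>
        (D.isCompact_arcSet h).isClosed
  have hvT : D.pos v ∉ T := by
    rintro (⟨w, hw, hwv⟩ | h)
    · exact hw (D.pos_inj hwv)
    · simp only [mem_iUnion] at h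
      obtain ⟨u, w, h, ⟨hu, hw⟩, t, ht⟩ := h
      rcases D.arc_vertex h t v ht with rfl | rfl
      · rw [Path.source] at ht; exact hu (D.pos_inj ht)
      · rw [Path.target] at ht; exact hw (D.pos_inj ht)
  obtain ⟨ε, hε, hball⟩ := Metric.isOpen_iff.1 hTc.isOpen_compl _ hvT
  have hcl : D.pos v ∈ closure D.outerFace := frontier_subset_closure hv
  obtain ⟨q, hq, hqd⟩ := Metric.mem_closure_iff.1 hcl ε hε
  let f : ℝ → ℝ × ℝ := fun t => AffineMap.lineMap q (D.pos v) t
  have hf : Continuous f := AffineMap.lineMap_continuous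
  have hf0 : f 0 = q := by simp [f]
  have hf1 : f 1 = D.pos v := by simp [f]
  have hfb : ∀ t ∈ Icc (0:ℝ) 1, f t ∈ Metric.ball (D.pos v) ε := by
    intro t ht
    refine (convex_ball (D.pos v) ε).segment_subset (x := q) (y := D.pos v) ?_ ?_ ?_
    · rw [Metric.mem_ball, dist_comm]; exact hqd
    · exact Metric.mem_ball_self hε
    · rw [segment_eq_image_lineMap]; exact ⟨t, ht, rfl⟩
  set K : Set ℝ := Icc 0 1 ∩ f ⁻¹' D.graphSet
  have hK : IsCompact K := isCompact_Icc.inter_right (D.isCompact_graphSet.isClosed.preimage hf)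
  have hK1 : (1:ℝ) ∈ K := ⟨by simp, by rw [mem_preimage, hf1]; exact D.pos_mem_graphSet v⟩
  obtain ⟨t0, ht0K, ht0⟩ := hK.exists_isLeast ⟨1, hK1⟩
  have ht00 : 0 < t0 := by
    rcases eq_or_lt_of_le ht0K.1.1 with h | h
    · exfalso
      have := ht0K.2
      rw [← h, mem_preimage, hf0] at this
      exact hq.1 this
    · exact h
  have hout : f '' (Ico 0 t0) ⊆ D.outerFace := by
    refine D.outer_of_preconnected (isPreconnected_Ico.image _ hf.continuousOn) (q := q) hq
      ⟨0, ⟨le_rfl, ht00⟩, hf0⟩ ?_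
    rintro _ ⟨t, ht, rfl⟩ hG
    exact absurd (ht0 ⟨⟨ht.1, ht.2.le.trans ht0K.1.2⟩, hG⟩) (not_le.2 ht.2)
  have hT' : f t0 ∉ T := hball (hfb t0 ht0K.1)
  set F := D.outerFace ∪ {D.pos v} ∪ ⋃ (w : V) (h : G.Adj v w), D.arcInterior h with hF
  have J1 : JoinedIn F q0 q :=
    (hpc.joinedIn q0 hq0 q hq).mono (fun x hx => Or.inl (Or.inl hx))
  have hhit : f t0 ∈ F → JoinedIn F q (f t0) := by
    intro hmem
    refine JoinedIn.ofLine (f := fun s => f (t0 * s)) (by fun_prop) (by simp [hf0]) (by simp) ?_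
    rintro _ ⟨s, hs, rfl⟩
    rcases eq_or_lt_of_le hs.2 with h | h
    · simpa [h] using hmem
    · exact Or.inl (Or.inl (hout ⟨_, ⟨mul_nonneg ht00.le hs.1, by nlinarith⟩, rfl⟩))
  have hcase : f t0 = D.pos v ∨ ∃ w, ∃ h : G.Adj v w, ∃ s : unitInterval, s ≠ 0 ∧ s ≠ 1 ∧
      D.arc h s = f t0 := by
    rcases ht0K.2 with ⟨w, hw⟩ | h
    · left
      by_cases hwv : w = v
      · rw [← hw, hwv]
      · exact absurd (Or.inl ⟨w, hwv, hw⟩) hT'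
    · simp only [mem_iUnion] at h
      obtain ⟨u, w, h, s, hs⟩ := h
      by_cases hs0 : s = 0
      · left
        rw [hs0, Path.source] at hs
        by_cases hwv : u = v
        · rw [← hs, hwv]
        · exact absurd (Or.inl ⟨u, hwv, hs⟩) hT'
      by_cases hs1 : s = 1
      · left
        rw [hs1, Path.target] at hs
        by_cases hwv : w = v
        · rw [← hs, hwv]
        · exact absurd (Or.inl ⟨w, hwv, hs⟩) hT'
      right
      by_cases hu : u = v
      · subst hu
        exact ⟨w, h, s, hs0, hs1, hs⟩
      by_cases hw : w = v
      · subst hw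
        refine ⟨u, h.symm, unitInterval.symm s, ?_, ?_, ?_⟩
        · simpa using hs1
        · simpa using hs0
        · rw [D.arc_symm h, Path.symm_apply, Function.comp_apply, unitInterval.symm_symm, hs]
      · refine absurd (Or.inr ?_) hT'
        simp only [mem_iUnion]
        exact ⟨u, w, h, ⟨hu, hw⟩, s, hs⟩
  refine J1.trans ?_
  rcases hcase with h | ⟨w, h, s, hs0, hs1, hs⟩
  · rw [← h]
    exact hhit (by rw [h]; exact Or.inl (Or.inr rfl))
  · have hin : ∀ s : unitInterval, s ≠ 0 → s ≠ 1 → D.arc h s ∈ F := fun s h0 h1 =>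
      Or.inr (mem_iUnion.2 ⟨w, mem_iUnion.2 ⟨h, ⟨s, ⟨h0, h1⟩, rfl⟩⟩⟩)
    refine (hhit (by rw [← hs]; exact hin s hs0 hs1)).trans ?_
    have hs0' : 0 < (s : ℝ) := unitInterval.pos_iff_ne_zero.2 hs0
    have hs1' : (s : ℝ) < 1 := unitInterval.lt_one_iff_ne_one.2 hs1
    symm
    refine JoinedIn.ofLine (f := fun r => (D.arc h).extend (s * r)) (by fun_prop) (by simp)
      (by simp [hs]) ?_
    rintro _ ⟨r, hr, rfl⟩
    have hm : (s : ℝ) * r ∈ unitInterval := ⟨mul_nonneg hs0'.le hr.1, by nlinarith [hr.1, hr.2]⟩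
    show (D.arc h).extend (s * r) ∈ F
    rw [Path.extend_apply _ hm]
    by_cases hr0 : r = 0
    · have : (⟨(s:ℝ) * r, hm⟩ : unitInterval) = 0 := by ext; simp [hr0]
      rw [this, Path.source]
      exact Or.inl (Or.inr rfl)
    · have hr0' : 0 < r := lt_of_le_of_ne hr.1 (Ne.symm hr0)
      refine hin _ ?_ ?_
      · intro h'
        have h2 : (s : ℝ) * r = 0 := congrArg Subtype.val h'
        have := mul_pos hs0' hr0'
        linarith
      · intro h'
        have h2 : (s : ℝ) * r = 1 := congrArg Subtype.val h'
        nlinarith [hr.2]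

/-- The graph with an apex vertex added in the outer face. -/
def apex : SimpleGraph (Option V) where
  Adj := fun x y => match x, y with
    | some u, some v => G.Adj u v
    | none, some v => D.OnOuter v
    | some v, none => D.OnOuter v
    | none, none => False
  symm := by
    refine ⟨?_⟩
    rintro (_ | u) (_ | v) h
    · exact h
    · exact h
    · exact h
    · exact G.adj_symm h
  loopless := by
    refine ⟨?_⟩
    rintro (_ | u) h
    · exact h
    · exact G.irrefl h

/-- The region used by a set of vertices of the apex graph. -/
def region (Y : Set (Option V)) : Set (ℝ × ℝ) :=
  {x | (∃ v, some v ∈ Y ∧ x = D.pos v) ∨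
    (∃ u v, ∃ h : G.Adj u v, some u ∈ Y ∧ (some v ∈ Y ∨ none ∈ Y) ∧ x ∈ D.arcInterior h) ∨
    (none ∈ Y ∧ x ∈ D.outerFace)}

lemma arcInterior_inter (hpl : D.IsPlane) {u v x y : V} (h₁ : G.Adj u v) (h₂ : G.Adj x y)
    {p : ℝ × ℝ} (hp : p ∈ D.arcInterior h₁) (hp' : p ∈ D.arcInterior h₂) : s(u, v) = s(x, y) := by
  by_contra hne
  exact hpl p ⟨u, v, x, y, h₁, h₂, hne, hp, hp'⟩

lemma pos_not_arcInterior {u v w : V} (h : G.Adj u v) : D.pos w ∉ D.arcInterior h := by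
  rintro ⟨t, ⟨h0, h1⟩, ht⟩
  rcases D.arc_vertex h t w ht with h | h
  · exact h0 h
  · exact h1 h

lemma good_apex [Finite V] (hpl : D.IsPlane) : Good D.apex := by
  obtain ⟨ho, hpc⟩ := D.outer_open_conn
  obtain ⟨q0, hq0⟩ := hpc.nonempty
  have hpt : ∀ Y : Set (Option V), ∀ v ∈ Y, (fun o : Option V => o.elim q0 D.pos) v ∈ D.region Y := by
    rintro Y (_ | v) hv
    · exact Or.inr (Or.inr ⟨hv, hq0⟩)
    · exact Or.inl ⟨v, hv, rfl⟩
  have key : ∀ Y : Set (Option V), none ∈ Y → ∀ v, some v ∈ Y → D.OnOuter v →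
      JoinedIn (D.region Y) q0 (D.pos v) := by
    intro Y h0 v hv hov
    refine (D.joined_outer v hov q0 hq0).mono ?_
    rintro x ((hx | hx) | hx)
    · exact Or.inr (Or.inr ⟨h0, hx⟩)
    · exact Or.inl ⟨v, hv, hx⟩
    · simp only [mem_iUnion] at hx
      obtain ⟨w, h, hx⟩ := hx
      exact Or.inr (Or.inl ⟨v, w, h, hv, Or.inr h0, hx⟩)
  refine good_of_regions D.apex (fun o => o.elim q0 D.pos) D.region hpt ?_ ?_ ?_
  · rintro Y Z hYZ x (⟨v, hv, hx⟩ | ⟨u, v, h, hu, hv, hx⟩ | ⟨h, hx⟩)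
    · exact Or.inl ⟨v, hYZ hv, hx⟩
    · exact Or.inr (Or.inl ⟨u, v, h, hYZ hu, hv.imp (fun h => hYZ h) (fun h => hYZ h), hx⟩)
    · exact Or.inr (Or.inr ⟨hYZ h, hx⟩)
  · rintro Y (_ | u) hu (_ | v) hv h
    · exact h.elim
    · exact key Y hu v hv h
    · exact (key Y hv u hu h).symm
    · have h' : G.Adj u v := h
      show JoinedIn (D.region Y) (D.pos u) (D.pos v)
      refine ⟨D.arc h', fun t => ?_⟩
      by_cases h0 : t = 0
      · rw [h0, Path.source]; exact hpt Y _ hu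
      by_cases h1 : t = 1
      · rw [h1, Path.target]; exact hpt Y _ hv
      exact Or.inr (Or.inl ⟨u, v, h', hu, Or.inl hv, ⟨t, ⟨h0, h1⟩, rfl⟩⟩)
  · intro Y Z hYZ
    have hno : ∀ {o}, o ∈ Y → o ∈ Z → False := fun h h' => hYZ.le_bot ⟨h, h'⟩
    have hai : ∀ {u v : V} {h : G.Adj u v} {x}, x ∈ D.arcInterior h → x ∈ D.graphSet := by
      rintro u v h _ ⟨t, -, rfl⟩
      exact D.arc_mem_graphSet h t
    rw [Set.disjoint_left]
    rintro x (⟨v, hv, rfl⟩ | ⟨u, v, h, hu, hv, hx⟩ | ⟨h, hx⟩)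
      (⟨v', hv', hx'⟩ | ⟨u', v', h', hu', hv', hx'⟩ | ⟨h', hx'⟩)
    · exact hno hv (D.pos_inj hx' ▸ hv')
    · exact D.pos_not_arcInterior h' hx'
    · exact hx'.1 (D.pos_mem_graphSet v)
    · exact D.pos_not_arcInterior h (hx' ▸ hx)
    · rcases Sym2.eq_iff.1 (D.arcInterior_inter hpl h h' hx hx') with ⟨rfl, rfl⟩ | ⟨rfl, rfl⟩
      · exact hno hu hu'
      · rcases hv with hv | hv
        · exact hno hv hu'
        · rcases hv' with hv' | hv'
          · exact hno hu hv'
          · exact hno hv hv'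
    · exact hx'.1 (hai hx)
    · exact hx.1 (hx' ▸ D.pos_mem_graphSet v')
    · exact hx.1 (hai hx')
    · exact hno h h'

end Drawing

/-! ### Connectivity tools -/

section Combi

open scoped Classical

variable {W : Type} {H : SimpleGraph W}

/-- The component of `p` in the subgraph induced by `Y`. -/
def comp (H : SimpleGraph W) (Y : Set W) (p : W) : Set W :=
  {x | Relation.ReflTransGen (fun a b => H.Adj a b ∧ b ∈ Y) p x}

lemma comp_self (Y : Set W) (p : W) : p ∈ comp H Y p := Relation.ReflTransGen.refl

lemma comp_closed {Y : Set W} {p x y : W} (hx : x ∈ comp H Y p) (hy : y ∈ Y) (h : H.Adj x y) :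
    y ∈ comp H Y p := Relation.ReflTransGen.tail hx ⟨h, hy⟩

lemma comp_min {Y K : Set W} {p : W} (hp : p ∈ K)
    (hK : ∀ x ∈ K, ∀ y ∈ Y, H.Adj x y → y ∈ K) : comp H Y p ⊆ K := by
  intro x hx
  induction hx with
  | refl => exact hp
  | tail _ h ih => exact hK _ ih _ h.2 h.1

lemma comp_sub {Y : Set W} {p : W} (hp : p ∈ Y) : comp H Y p ⊆ Y :=
  comp_min hp fun _ _ _ hy _ => hy

lemma comp_trans {Y : Set W} {p q r : W} (h : q ∈ comp H Y p) (h' : r ∈ comp H Y q) :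
    r ∈ comp H Y p := Relation.ReflTransGen.trans h h'

lemma comp_symm {Y : Set W} {p q : W} (hp : p ∈ Y) (h : q ∈ comp H Y p) : p ∈ comp H Y q := by
  have : comp H Y p ⊆ {x | x ∈ Y ∧ p ∈ comp H Y x} := by
    refine comp_min ⟨hp, comp_self _ _⟩ ?_
    rintro x ⟨hx, hx'⟩ y hy hxy
    exact ⟨hy, comp_trans (comp_closed (comp_self _ _) hx hxy.symm) hx'⟩
  exact (this h).2

lemma comp_mono {Y Z : Set W} {p : W} (h : Y ⊆ Z) : comp H Y p ⊆ comp H Z p :=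
  comp_min (comp_self _ _) fun _ hx _ hy hxy => comp_closed hx (h hy) hxy

lemma comp_conn {Y : Set W} {p : W} (hp : p ∈ Y) : Conn H (comp H Y p) := by
  have key : ∀ x ∈ comp H Y p,
      comp H Y p ⊆ {y | Relation.ReflTransGen (fun a b => H.Adj a b ∧ b ∈ comp H Y p) x y} := by
    intro x hx
    have h1 : comp H Y x ⊆ {y | y ∈ comp H Y p ∧
        Relation.ReflTransGen (fun a b => H.Adj a b ∧ b ∈ comp H Y p) x y} := by
      refine comp_min ⟨hx, Relation.ReflTransGen.refl⟩ ?_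
      rintro a ⟨ha, ha'⟩ b hb hab
      have := comp_closed ha hb hab
      exact ⟨this, ha'.tail ⟨hab, this⟩⟩
    intro y hy
    exact (h1 (comp_trans (comp_symm hp hx) hy)).2
  exact ⟨⟨p, comp_self _ _⟩, fun x hx y hy => key x hx hy⟩

lemma comp_exit {Y Y' : Set W} {p q : W} (hq : q ∈ comp H Y p)
    (hq' : q ∉ comp H Y' p) : ∃ a ∈ comp H Y' p, ∃ b ∈ Y, b ∉ Y' ∧ H.Adj a b := by
  by_contra hcon
  push Not at hcon
  refine hq' (comp_min (comp_self _ _) ?_ hq)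
  intro x hx y hy hxy
  by_cases hy' : y ∈ Y'
  · exact comp_closed hx hy' hxy
  · exact absurd hxy (hcon x hx y hy hy')

lemma conn_singleton (v : W) : Conn H {v} :=
  ⟨⟨v, rfl⟩, by rintro x rfl y rfl; exact Relation.ReflTransGen.refl⟩

lemma conn_union {B C : Set W} (hB : Conn H B) (hC : Conn H C) (h : Touch H B C) :
    Conn H (B ∪ C) := by
  obtain ⟨b, hb, c, hc, hbc⟩ := h
  have lB : ∀ x ∈ B, ∀ y ∈ B, Relation.ReflTransGen (fun a d => H.Adj a d ∧ d ∈ B ∪ C) x y :=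
    fun x hx y hy => Relation.ReflTransGen.mono (fun _ _ h => ⟨h.1, Or.inl h.2⟩) _ _ (hB.2 x hx y hy)
  have lC : ∀ x ∈ C, ∀ y ∈ C, Relation.ReflTransGen (fun a d => H.Adj a d ∧ d ∈ B ∪ C) x y :=
    fun x hx y hy => Relation.ReflTransGen.mono (fun _ _ h => ⟨h.1, Or.inr h.2⟩) _ _ (hC.2 x hx y hy)
  refine ⟨⟨b, Or.inl hb⟩, ?_⟩
  rintro x (hx | hx) y (hy | hy)
  · exact lB x hx y hy
  · exact ((lB x hx b hb).tail ⟨hbc, Or.inr hc⟩).trans (lC c hc y hy)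
  · exact ((lC x hx c hc).tail ⟨hbc.symm, Or.inl hb⟩).trans (lB b hb y hy)
  · exact lC x hx y hy

/-- `v` is adjacent to some vertex of `A`. -/
def Att (H : SimpleGraph W) (A : Set W) (v : W) : Prop := ∃ a ∈ A, H.Adj a v

lemma att_union {A B : Set W} {v : W} : Att H (A ∪ B) v ↔ Att H A v ∨ Att H B v := by
  simp only [Att, mem_union, or_and_right, exists_or]

lemma att_singleton {a v : W} : Att H {a} v ↔ H.Adj a v := by
  simp [Att]

lemma conn_insert {A : Set W} {v : W} (hA : Conn H A) (hv : Att H A v) : Conn H (A ∪ {v}) :=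
  conn_union hA (conn_singleton v) (by obtain ⟨a, ha, h⟩ := hv; exact ⟨a, ha, v, rfl, h⟩)

lemma touch_symm {B C : Set W} (h : Touch H B C) : Touch H C B := by
  obtain ⟨b, hb, c, hc, h⟩ := h
  exact ⟨c, hc, b, hb, h.symm⟩

lemma touch_of {B C : Set W} {b c : W} (hb : b ∈ B) (hc : c ∈ C) (h : H.Adj b c) : Touch H B C :=
  ⟨b, hb, c, hc, h⟩

lemma touch_att {A C : Set W} {c : W} (hc : c ∈ C) (h : Att H A c) : Touch H A C := by
  obtain ⟨a, ha, h⟩ := h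
  exact ⟨a, ha, c, hc, h⟩

lemma noK5 (good : Good H) (B1 B2 B3 B4 B5 : Set W)
    (c1 : Conn H B1) (c2 : Conn H B2) (c3 : Conn H B3) (c4 : Conn H B4) (c5 : Conn H B5)
    (d : ∀ x, (x ∈ B1 → x ∉ B2 ∧ x ∉ B3 ∧ x ∉ B4 ∧ x ∉ B5) ∧ (x ∈ B2 → x ∉ B3 ∧ x ∉ B4 ∧ x ∉ B5) ∧
      (x ∈ B3 → x ∉ B4 ∧ x ∉ B5) ∧ (x ∈ B4 → x ∉ B5))
    (t12 : Touch H B1 B2) (t13 : Touch H B1 B3) (t14 : Touch H B1 B4) (t15 : Touch H B1 B5)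
    (t23 : Touch H B2 B3) (t24 : Touch H B2 B4) (t25 : Touch H B2 B5)
    (t34 : Touch H B3 B4) (t35 : Touch H B3 B5) (t45 : Touch H B4 B5) : False := by
  refine good.1 ![B1, B2, B3, B4, B5] ?_ ?_ ?_
  · intro i; fin_cases i <;> assumption
  · intro i j hij
    rw [Set.disjoint_left]
    intro x
    have := d x
    fin_cases i <;> fin_cases j <;> first | (exfalso; revert hij; decide) | (simp; tauto)
  · intro i j hij
    fin_cases i <;> fin_cases j <;> first | (exfalso; revert hij; decide) | assumption

set_option maxHeartbeats 2000000 in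
lemma noK33 (good : Good H) (B1 B2 B3 C1 C2 C3 : Set W)
    (c1 : Conn H B1) (c2 : Conn H B2) (c3 : Conn H B3) (c4 : Conn H C1) (c5 : Conn H C2)
    (c6 : Conn H C3)
    (d : ∀ x, (x ∈ B1 → x ∉ B2 ∧ x ∉ B3 ∧ x ∉ C1 ∧ x ∉ C2 ∧ x ∉ C3) ∧
      (x ∈ B2 → x ∉ B3 ∧ x ∉ C1 ∧ x ∉ C2 ∧ x ∉ C3) ∧
      (x ∈ B3 → x ∉ C1 ∧ x ∉ C2 ∧ x ∉ C3) ∧ (x ∈ C1 → x ∉ C2 ∧ x ∉ C3) ∧ (x ∈ C2 → x ∉ C3))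
    (t11 : Touch H B1 C1) (t12 : Touch H B1 C2) (t13 : Touch H B1 C3)
    (t21 : Touch H B2 C1) (t22 : Touch H B2 C2) (t23 : Touch H B2 C3)
    (t31 : Touch H B3 C1) (t32 : Touch H B3 C2) (t33 : Touch H B3 C3) : False := by
  refine good.2 ![B1, B2, B3, C1, C2, C3] ?_ ?_ ?_
  · intro i; fin_cases i <;> assumption
  · intro i j hij
    rw [Set.disjoint_left]
    intro x
    have := d x
    fin_cases i <;> fin_cases j <;> first | (exfalso; revert hij; decide) | (simp; tauto)
  · intro i j hi hj
    fin_cases i <;> fin_cases j <;>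
      first | (exfalso; revert hi; decide) | (exfalso; revert hj; decide) | assumption

/-- `X` can be coloured from the lists `L`. -/
def Col (H : SimpleGraph W) (X : Set W) (L : W → Finset ℕ) : Prop :=
  ∃ c : W → ℕ, (∀ v ∈ X, c v ∈ L v) ∧ ∀ u ∈ X, ∀ v ∈ X, H.Adj u v → c u ≠ c v

lemma Col.sub {X : Set W} {L L' : W → Finset ℕ} (h : Col H X L') (hs : ∀ v ∈ X, L' v ⊆ L v) :
    Col H X L := by
  obtain ⟨c, h1, h2⟩ := h
  exact ⟨c, fun v hv => hs v hv (h1 v hv), h2⟩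

/-- Lists with the vertices of `Y` precoloured. -/
def pre (Y : Set W) (c : W → ℕ) (L : W → Finset ℕ) : W → Finset ℕ :=
  fun v => if v ∈ Y then {c v} else L v

lemma col_glue {X X1 X2 : Set W} {L : W → Finset ℕ} {c : W → ℕ}
    (h1 : ∀ v ∈ X1, c v ∈ L v) (h2 : ∀ u ∈ X1, ∀ v ∈ X1, H.Adj u v → c u ≠ c v)
    (h : Col H X2 (pre X1 c L)) (hX : ∀ x ∈ X, x ∈ X1 ∨ x ∈ X2)
    (he : ∀ u ∈ X1, u ∉ X2 → ∀ v ∈ X2, v ∉ X1 → ¬ H.Adj u v) : Col H X L := by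
  obtain ⟨d, g1, g2⟩ := h
  have hd : ∀ v ∈ X2, v ∈ X1 → d v = c v := by
    intro v hv hv'
    have := g1 v hv
    simpa [pre, hv'] using this
  refine ⟨fun v => if v ∈ X1 then c v else d v, ?_, ?_⟩
  · intro v hv
    by_cases hv1 : v ∈ X1
    · simpa [hv1] using h1 v hv1
    · have := g1 v ((hX v hv).resolve_left hv1)
      simpa [hv1, pre] using this
  · have aux : ∀ u ∈ X, ∀ v ∈ X, H.Adj u v → u ∈ X1 → v ∉ X1 → c u ≠ d v := by
      intro u hu v hv huv hu1 hv1
      have hv2 := (hX v hv).resolve_left hv1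
      by_cases hu2 : u ∈ X2
      · rw [← hd u hu2 hu1]; exact g2 u hu2 v hv2 huv
      · exact absurd huv (he u hu1 hu2 v hv2 hv1)
    intro u hu v hv huv
    by_cases hu1 : u ∈ X1 <;> by_cases hv1 : v ∈ X1
    · simpa [hu1, hv1] using h2 u hu1 v hv1 huv
    · simpa [hu1, hv1] using aux u hu v hv huv hu1 hv1
    · simpa [hu1, hv1] using (aux v hv u hu huv.symm hv1 hu1).symm
    · simpa [hu1, hv1] using g2 u ((hX u hu).resolve_left hu1) v ((hX v hv).resolve_left hv1) huv

lemma col_del {X : Set W} (Z : Set W) {L : W → Finset ℕ} (L' : W → Finset ℕ) (φ : W → ℕ)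
    (h1 : ∀ z ∈ Z, φ z ∈ L z) (h2 : ∀ u ∈ Z, ∀ v ∈ Z, H.Adj u v → φ u ≠ φ v)
    (h : Col H (X \ Z) L')
    (hL : ∀ v ∈ X, v ∉ Z → ∀ c ∈ L' v, c ∈ L v ∧ ∀ z ∈ Z, H.Adj z v → c ≠ φ z) : Col H X L := by
  obtain ⟨d, g1, g2⟩ := h
  refine ⟨fun v => if v ∈ Z then φ v else d v, ?_, ?_⟩
  · intro v hv
    by_cases hz : v ∈ Z
    · simpa [hz] using h1 v hz
    · simpa [hz] using (hL v hv hz _ (g1 v ⟨hv, hz⟩)).1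
  · intro u hu v hv huv
    by_cases hu1 : u ∈ Z <;> by_cases hv1 : v ∈ Z
    · simpa [hu1, hv1] using h2 u hu1 v hv1 huv
    · simpa [hu1, hv1] using ((hL v hv hv1 _ (g1 v ⟨hv, hv1⟩)).2 u hu1 huv).symm
    · simpa [hu1, hv1] using ((hL u hu hu1 _ (g1 u ⟨hu, hu1⟩)).2 v hv1 huv.symm)
    · simpa [hu1, hv1] using g2 u ⟨hu, hu1⟩ v ⟨hv, hv1⟩ huv

lemma lemmaD (good : Good H) {A X : Set W} (hA : Conn H A) (hAX : ∀ a ∈ A, a ∉ X)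
    {v x y z : W} (hv : v ∈ X) (hx : x ∈ X) (hy : y ∈ X) (hz : z ∈ X)
    (av : Att H A v) (ax : Att H A x) (ay : Att H A y) (az : Att H A z)
    (vx : H.Adj v x) (vy : H.Adj v y) (vz : H.Adj v z) (xy : x ≠ y) (xz : x ≠ z) (yz : y ≠ z) :
    z ∉ comp H (X \ {v, x}) y ∨ z ∉ comp H (X \ {v, y}) x ∨ y ∉ comp H (X \ {v, z}) x := by
  by_contra hcon
  push Not at hcon
  obtain ⟨h1, h2, h3⟩ := hcon
  have nvx := vx.ne
  have nvy := vy.ne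
  have nvz := vz.ne
  have hxB : x ∈ X \ {v, y, z} := by simp [*, Ne.symm nvx]
  have hBs : ∀ b ∈ comp H (X \ {v, y, z}) x, b ∈ X ∧ b ≠ v ∧ b ≠ y ∧ b ≠ z := by
    intro b hb
    simpa using comp_sub hxB hb
  have cB := comp_conn (H := H) hxB
  have xB := comp_self (H := H) (X \ {v, y, z}) x
  have Bz : Touch H (comp H (X \ {v, y, z}) x) {z} := by
    obtain ⟨a, ha, b, hb, hb', hab⟩ := comp_exit (Y' := X \ {v, y, z}) h2
      (fun h => (hBs z h).2.2.2 rfl)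
    have : b = z := by simp at hb hb'; tauto
    exact ⟨a, ha, z, rfl, this ▸ hab⟩
  have By : Touch H (comp H (X \ {v, y, z}) x) {y} := by
    obtain ⟨a, ha, b, hb, hb', hab⟩ := comp_exit (Y' := X \ {v, y, z}) h3
      (fun h => (hBs y h).2.2.1 rfl)
    have : b = y := by simp at hb hb'; tauto
    exact ⟨a, ha, y, rfl, this ▸ hab⟩
  by_cases hyz : H.Adj y z
  · refine noK5 good A {v} (comp H (X \ {v, y, z}) x) {y} {z} hA (conn_singleton _) cB
      (conn_singleton _) (conn_singleton _) ?_ (touch_att rfl av) (touch_att xB ax)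
      (touch_att rfl ay) (touch_att rfl az) (touch_of rfl xB vx) (touch_of rfl rfl vy)
      (touch_of rfl rfl vz) By Bz (touch_of rfl rfl hyz)
    intro b
    have := hBs b
    have := hAX b
    simp only [mem_singleton_iff]
    repeat' (first | apply And.intro | intro _)
    all_goals grind
  · have hyY : y ∈ X \ {v, x, z} := by simp [*, Ne.symm nvy, Ne.symm xy]
    obtain ⟨k, hk, b, hb, hb', hkb⟩ := comp_exit (Y' := X \ {v, x, z}) h1
      (fun h => by have := comp_sub hyY h; simp at this)
    have : b = z := by simp at hb hb'; tauto
    subst this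
    have hky : k ≠ y := by rintro rfl; exact hyz hkb
    have hkY := comp_sub hyY hk
    have hkK : k ∈ X \ {v, x, y, b} := by simp at hkY ⊢; tauto
    have hKs : ∀ c ∈ comp H (X \ {v, x, y, b}) k, c ∈ X ∧ c ≠ v ∧ c ≠ x ∧ c ≠ y ∧ c ≠ b := by
      intro c hc
      simpa using comp_sub hkK hc
    have cK := comp_conn (H := H) hkK
    have kK := comp_self (H := H) (X \ {v, x, y, b}) k
    have Ky : Touch H (comp H (X \ {v, x, y, b}) k) {y} := by
      obtain ⟨a, ha, d, hd, hd', had⟩ := comp_exit (Y' := X \ {v, x, y, b}) (comp_symm hyY hk)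
        (fun h => (hKs y h).2.2.2.1 rfl)
      have : d = y := by simp at hd hd'; tauto
      exact ⟨a, ha, y, rfl, this ▸ had⟩
    by_cases hKx : Touch H (comp H (X \ {v, x, y, b}) k) {x}
    · refine noK33 good A {v} (comp H (X \ {v, x, y, b}) k) {x} {y} {b} hA (conn_singleton _) cK
        (conn_singleton _) (conn_singleton _) (conn_singleton _) ?_ (touch_att rfl ax)
        (touch_att rfl ay) (touch_att rfl az) (touch_of rfl rfl vx) (touch_of rfl rfl vy)
        (touch_of rfl rfl vz) hKx Ky (touch_of kK rfl hkb)
      intro c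
      have := hKs c
      have := hAX c
      simp only [mem_singleton_iff]
      repeat' (first | apply And.intro | intro _)
      all_goals grind
    · have hdis : ∀ c ∈ comp H (X \ {v, y, b}) x, c ∉ comp H (X \ {v, x, y, b}) k := by
        intro c hc hc'
        have h := comp_symm hxB hc
        have h2 : comp H (X \ {v, y, b}) c ⊆ comp H (X \ {v, x, y, b}) k := by
          refine comp_min hc' ?_
          intro d hd e he hde
          by_cases hex : e = x
          · subst hex
            exact absurd ⟨d, hd, e, rfl, hde⟩ hKx
          · refine comp_closed hd ?_ hde
            simp at he ⊢; tauto
        exact (hKs x (h2 h)).2.2.1 rfl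
      refine noK5 good A {v} (comp H (X \ {v, y, b}) x) {y} ({b} ∪ comp H (X \ {v, x, y, b}) k) hA
        (conn_singleton _) cB
        (conn_singleton _) (conn_union (conn_singleton _) cK (touch_of rfl kK hkb.symm)) ?_
        (touch_att rfl av) (touch_att xB ax)
        (touch_att rfl ay) (touch_att (Or.inl rfl) az) (touch_of rfl xB vx) (touch_of rfl rfl vy)
        (touch_of rfl (Or.inl rfl) vz) By ?_ ?_
      · intro c
        have := hBs c
        have := hKs c
        have := hAX c
        have := hdis c
        simp only [mem_singleton_iff, mem_union]
        repeat' (first | apply And.intro | intro _)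
        all_goals grind
      · obtain ⟨b1, h1, b2, h2, h3⟩ := Bz
        exact ⟨b1, h1, b2, Or.inl h2, h3⟩
      · obtain ⟨b1, h1, b2, h2, h3⟩ := touch_symm Ky
        exact ⟨b1, h1, b2, Or.inr h2, h3⟩

end Combi

section Combi

open scoped Classical

variable {W : Type} {H : SimpleGraph W}

/-- The hypotheses of Thomassen's theorem. -/
structure TS (H : SimpleGraph W) (A X P : Set W) (L : W → Finset ℕ) : Prop where
  conn : Conn H A
  disj : ∀ a ∈ A, a ∉ X
  sub : ∀ p ∈ P, p ∈ X
  att : ∀ p ∈ P, Att H A p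
  adj : ∀ p ∈ P, ∀ q ∈ P, p ≠ q → H.Adj p q
  ne : ∀ p ∈ P, ∀ q ∈ P, p ≠ q → L p ≠ L q
  one : ∀ p ∈ P, (L p).card = 1
  three : ∀ v ∈ X, v ∉ P → 3 ≤ (L v).card
  five : ∀ v ∈ X, v ∉ P → ¬ Att H A v → 5 ≤ (L v).card

lemma card_sdiff_ge (s t : Finset ℕ) (n k : ℕ) (hs : n + k ≤ s.card) (ht : t.card ≤ k) :
    n ≤ (s \ t).card := by
  have := Finset.le_card_sdiff t s
  omega

lemma exists_mem_sdiff (s t : Finset ℕ) (h : t.card < s.card) : ∃ c ∈ s, c ∉ t := by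
  by_contra hcon
  push Not at hcon
  exact absurd (Finset.card_le_card (fun c hc => hcon c hc)) (not_le.2 h)

lemma ncard_lt [Finite W] {X Y : Set W} (h : X ⊆ Y) {x : W} (hx : x ∈ Y) (hx' : x ∉ X) :
    X.ncard < Y.ncard :=
  Set.ncard_lt_ncard ⟨h, fun h' => hx' (h' hx)⟩ (toFinite _)

/-- Cutting off a part of the graph behind a clique of size two. -/
lemma TS.cut {A X P : Set W} {L : W → Finset ℕ} (hT : TS H A X P L) {v t : W}
    (hv : v ∈ X) (ht : t ∈ X) (av : Att H A v) (att : Att H A t) (vt : H.Adj v t)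
    {K : Set W} (hK : ∀ k ∈ K, k ∈ X ∧ k ≠ v ∧ k ≠ t ∧ k ∉ P)
    (hcl : ∀ k ∈ K, ∀ y ∈ X, y ≠ v → y ≠ t → H.Adj k y → y ∈ K)
    (h1 : TS H A (X \ K) P L → Col H (X \ K) L)
    (h2 : ∀ L', TS H A (K ∪ {v, t}) {v, t} L' → Col H (K ∪ {v, t}) L') : Col H X L := by
  obtain ⟨c, c1, c2⟩ := h1
    { conn := hT.conn
      disj := fun a ha h => hT.disj a ha h.1
      sub := fun p hp => ⟨hT.sub p hp, fun h => (hK p h).2.2.2 hp⟩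
      att := hT.att
      adj := hT.adj
      ne := hT.ne
      one := hT.one
      three := fun v hv hp => hT.three v hv.1 hp
      five := fun v hv hp => hT.five v hv.1 hp }
  have hvK : v ∉ K := fun h => (hK v h).2.1 rfl
  have htK : t ∉ K := fun h => (hK t h).2.2.1 rfl
  refine col_glue c1 c2 (X2 := K ∪ {v, t}) (h2 _ ?_) ?_ ?_
  · refine ⟨hT.conn, ?_, ?_, ?_, ?_, ?_, ?_, ?_, ?_⟩
    · rintro a ha (h | rfl | rfl)
      · exact hT.disj a ha (hK a h).1
      · exact hT.disj a ha hv
      · exact hT.disj a ha ht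
    · exact fun p hp => Or.inr hp
    · rintro p (rfl | rfl)
      · exact av
      · exact att
    · rintro p (rfl | rfl) q (rfl | rfl) h
      · exact absurd rfl h
      · exact vt
      · exact vt.symm
      · exact absurd rfl h
    · rintro p (rfl | rfl) q (rfl | rfl) h
      · exact absurd rfl h
      · simpa [pre, *] using c2 p ⟨hv, hvK⟩ q ⟨ht, htK⟩ vt
      · simpa [pre, *] using c2 p ⟨ht, htK⟩ q ⟨hv, hvK⟩ vt.symm
      · exact absurd rfl h
    · rintro p (rfl | rfl)
      · simp [pre, *]
      · simp [pre, *]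
    · rintro u (hu | hu) hu'
      · have := hT.three u (hK u hu).1 (hK u hu).2.2.2
        simpa [pre, hu] using this
      · exact absurd hu hu'
    · rintro u (hu | hu) hu' hua
      · have := hT.five u (hK u hu).1 (hK u hu).2.2.2 hua
        simpa [pre, hu] using this
      · exact absurd hu hu'
  · intro x hx
    by_cases h : x ∈ K
    · exact Or.inr (Or.inl h)
    · exact Or.inl ⟨hx, h⟩
  · rintro u ⟨hu, huK⟩ hu2 w (hw | hw) hw2 huw
    · refine huK (hcl w hw u hu ?_ ?_ huw.symm)
      · rintro rfl; exact hu2 (Or.inr (Or.inl rfl))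
      · rintro rfl; exact hu2 (Or.inr (Or.inr rfl))
    · rcases hw with rfl | rfl
      · exact hw2 ⟨hv, hvK⟩
      · exact hw2 ⟨ht, htK⟩

lemma TS.del {A X P : Set W} {L : W → Finset ℕ} (hT : TS H A X P L) {q : W} (hq : q ∈ P)
    (hno : ∀ v ∈ X, Att H A v → v ∉ P → ¬ H.Adj q v)
    (h : ∀ L', TS H (A ∪ {q}) (X \ {q}) (P \ {q}) L' → Col H (X \ {q}) L') : Col H X L := by
  obtain ⟨cq, hcq⟩ := Finset.card_eq_one.1 (hT.one q hq)
  have hfive : ∀ v ∈ X, v ∉ P → H.Adj q v → 5 ≤ (L v).card := fun v hv hvP hqv =>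
    hT.five v hv hvP fun ha => hno v hv ha hvP hqv
  refine col_del {q} (fun v => if H.Adj q v ∧ v ∉ P then L v \ {cq} else L v) (fun _ => cq)
    (by rintro z rfl; simp [hcq]) (by rintro u rfl v rfl huv; exact absurd huv (H.irrefl)) (h _ ?_) ?_
  · refine ⟨conn_insert hT.conn (hT.att q hq), ?_, ?_, ?_, ?_, ?_, ?_, ?_, ?_⟩
    · rintro a (ha | rfl) ⟨hx, hx'⟩
      · exact hT.disj a ha hx
      · exact hx' rfl
    · rintro p ⟨hp, hpq⟩
      exact ⟨hT.sub p hp, hpq⟩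
    · rintro p ⟨hp, hpq⟩
      exact att_union.2 (Or.inl (hT.att p hp))
    · rintro p ⟨hp, -⟩ r ⟨hr, -⟩ h
      exact hT.adj p hp r hr h
    · rintro p ⟨hp, -⟩ r ⟨hr, -⟩ h
      simpa [hp, hr] using hT.ne p hp r hr h
    · rintro p ⟨hp, -⟩
      simpa [hp] using hT.one p hp
    · rintro v ⟨hv, hvq⟩ hvP
      have hvP' : v ∉ P := fun h => hvP ⟨h, hvq⟩
      by_cases hqv : H.Adj q v
      · have := hfive v hv hvP' hqv
        simp only [hqv, hvP', not_false_eq_true, and_self, if_true]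
        exact card_sdiff_ge _ _ 3 2 this (by simp)
      · simpa [hqv] using hT.three v hv hvP'
    · rintro v ⟨hv, hvq⟩ hvP hva
      have hvP' : v ∉ P := fun h => hvP ⟨h, hvq⟩
      rw [att_union, att_singleton] at hva
      push Not at hva
      simpa [hva.2] using hT.five v hv hvP' hva.1
  · rintro v hv hvq c hc
    have hvq' : v ≠ q := hvq
    by_cases hcond : H.Adj q v ∧ v ∉ P
    · rw [if_pos hcond] at hc
      simp only [Finset.mem_sdiff, Finset.mem_singleton] at hc
      refine ⟨hc.1, ?_⟩
      rintro z rfl -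
      exact hc.2
    · rw [if_neg hcond] at hc
      refine ⟨hc, ?_⟩
      rintro z rfl hzv
      have hvP : v ∈ P := by tauto
      have := hT.ne v hvP z hq hvq'
      obtain ⟨cv, hcv⟩ := Finset.card_eq_one.1 (hT.one v hvP)
      rw [hcv, hcq] at this
      rw [hcv] at hc
      simp at hc
      subst hc
      simpa using this

lemma TS.pin {A X P : Set W} {L : W → Finset ℕ} (hT : TS H A X P L) {v : W} (hv : v ∈ X)
    (hvP : v ∉ P) (av : Att H A v) {c : ℕ} (hc : ∀ p ∈ P, H.Adj p v ∧ L p ≠ {c}) :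
    TS H A X (P ∪ {v}) (Function.update L v {c}) := by
  have hup : ∀ u, u ≠ v → Function.update L v {c} u = L u := fun u hu => by
    simp [Function.update_of_ne hu]
  have hPv : ∀ p ∈ P, p ≠ v := fun p hp h => hvP (h ▸ hp)
  refine ⟨hT.conn, hT.disj, ?_, ?_, ?_, ?_, ?_, ?_, ?_⟩
  · rintro p (hp | rfl)
    · exact hT.sub p hp
    · exact hv
  · rintro p (hp | rfl)
    · exact hT.att p hp
    · exact av
  · rintro p (hp | rfl) q (hq | rfl) h
    · exact hT.adj p hp q hq h
    · exact (hc p hp).1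
    · exact (hc q hq).1.symm
    · exact absurd rfl h
  · rintro p (hp | rfl) q (hq | rfl) h
    · rw [hup p (hPv p hp), hup q (hPv q hq)]; exact hT.ne p hp q hq h
    · rw [hup p (hPv p hp), Function.update_self]; exact (hc p hp).2
    · rw [hup q (hPv q hq), Function.update_self]; exact (hc q hq).2.symm
    · exact absurd rfl h
  · rintro p (hp | rfl)
    · rw [hup p (hPv p hp)]; exact hT.one p hp
    · simp
  · intro u hu huP
    rw [hup u fun h => huP (Or.inr h)]
    exact hT.three u hu fun h => huP (Or.inl h)
  · intro u hu huP
    rw [hup u fun h => huP (Or.inr h)]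
    exact hT.five u hu fun h => huP (Or.inl h)

lemma TS.step2 [Finite W] (good : Good H) {A X : Set W} {L : W → Finset ℕ} {p q : W} (hpq : p ≠ q)
    (hT : TS H A X {p, q} L)
    (IH : ∀ (A' X' P' : Set W) (L' : W → Finset ℕ), X'.ncard < X.ncard → TS H A' X' P' L' →
      (∃ p q, P' ⊆ {p, q}) → Col H X' L') : Col H X L := by
  have hqX := hT.sub q (by simp)
  have hpX := hT.sub p (by simp)
  have hqA := hT.att q (by simp)
  have hpqA := hT.adj p (by simp) q (by simp) hpq
  by_cases hex : ∃ v ∈ X, Att H A v ∧ v ∉ ({p, q} : Set W) ∧ H.Adj q v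
  swap
  · refine hT.del (q := q) (by simp) (fun v hv ha hvP hqv => hex ⟨v, hv, ha, hvP, hqv⟩) ?_
    intro L' hL'
    refine IH _ _ _ _ (ncard_lt diff_subset hqX (by simp)) hL' ⟨p, q, diff_subset⟩
  obtain ⟨v, hv, av, hvP, hqv⟩ := hex
  have hvp : v ≠ p := fun h => hvP (by simp [h])
  have hvq : v ≠ q := fun h => hvP (by simp [h])
  obtain ⟨cq, hcq⟩ := Finset.card_eq_one.1 (hT.one q (by simp))
  by_cases hsmall : ∃ v', ∀ u ∈ X, Att H A u → H.Adj v u → u = q ∨ u = v'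
  · obtain ⟨v', hv'⟩ := hsmall
    obtain ⟨C, hC, hCc⟩ := Finset.exists_subset_card_eq
      (card_sdiff_ge (L v) {cq} 2 1 (hT.three v hv hvP) (by simp))
    have hPatt : ∀ u ∈ ({p, q} : Set W), Att H A u := hT.att
    set L' : W → Finset ℕ := fun u => if H.Adj v u ∧ ¬ Att H A u then L u \ C else L u with hL'
    have hLP : ∀ u, Att H A u → L' u = L u := fun u hu => by simp [hL', hu]
    obtain ⟨c, c1, c2⟩ := IH (A ∪ {v}) (X \ {v}) {p, q} L' (ncard_lt diff_subset hv (by simp)) (by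
      refine ⟨conn_insert hT.conn av, ?_, ?_, ?_, hT.adj, ?_, ?_, ?_, ?_⟩
      · rintro a (ha | rfl) ⟨hx, hx'⟩
        · exact hT.disj a ha hx
        · exact hx' rfl
      · intro r hr
        exact ⟨hT.sub r hr, fun h => hvP (by rw [← show r = v from h]; exact hr)⟩
      · intro r hr
        exact att_union.2 (Or.inl (hT.att r hr))
      · intro r hr s hs
        rw [hLP r (hT.att r hr), hLP s (hT.att s hs)]
        exact hT.ne r hr s hs
      · intro r hr
        rw [hLP r (hT.att r hr)]
        exact hT.one r hr
      · rintro u ⟨hu, huv⟩ huP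
        by_cases hcond : H.Adj v u ∧ ¬ Att H A u
        · simp only [hL', if_pos hcond]
          exact card_sdiff_ge _ _ 3 2 (hT.five u hu huP hcond.2) hCc.le
        · simp only [hL', if_neg hcond]
          exact hT.three u hu huP
      · rintro u ⟨hu, huv⟩ huP hua
        rw [att_union, att_singleton] at hua
        push Not at hua
        simp only [hL', if_neg (fun h : H.Adj v u ∧ ¬ Att H A u => hua.2 h.1)]
        exact hT.five u hu huP hua.1) ⟨p, q, subset_rfl⟩
    obtain ⟨cv, hcvC, hcv⟩ := exists_mem_sdiff C {c v'} (by simp [hCc])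
    simp only [Finset.mem_singleton] at hcv
    have hcvL := hC hcvC
    simp only [Finset.mem_sdiff, Finset.mem_singleton] at hcvL
    refine col_del {v} (fun u => {c u}) (fun _ => cv) (by rintro z rfl; exact hcvL.1)
      (by rintro u rfl w rfl huw; exact absurd huw (H.irrefl)) ⟨c, by simp, c2⟩ ?_
    intro u hu huv d hd
    simp only [Finset.mem_singleton] at hd
    subst hd
    have hmem := c1 u ⟨hu, huv⟩
    constructor
    · by_cases hcond : H.Adj v u ∧ ¬ Att H A u
      · simp only [hL', if_pos hcond] at hmem
        exact (Finset.mem_sdiff.1 hmem).1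
      · simp only [hL', if_neg hcond] at hmem
        exact hmem
    · rintro z rfl hzu
      by_cases ha : Att H A u
      · rw [hLP u ha] at hmem
        rcases hv' u hu ha hzu with rfl | rfl
        · rw [hcq] at hmem
          simp at hmem
          rw [hmem]; exact fun h => hcvL.2 h.symm
        · exact fun h => hcv h.symm
      · simp only [hL', if_pos (show H.Adj z u ∧ ¬ Att H A u from ⟨hzu, ha⟩)] at hmem
        rintro rfl
        exact (Finset.mem_sdiff.1 hmem).2 hcvC
  · -- separation
    have sep : ∀ t ∈ X, Att H A t → H.Adj v t → ∀ r ∈ X \ {v, t}, ∀ s ∈ X \ {v, t},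
        s ∉ comp H (X \ {v, t}) r → Col H X L := by
      intro t ht att vt r hr s hs hsr
      have ⟨p', hp'P, hp't⟩ : ∃ p' ∈ ({p, q} : Set W), p' ≠ t := by
        by_cases h : t = q
        · exact ⟨p, by simp, h ▸ hpq⟩
        · exact ⟨q, by simp, fun h' => h h'.symm⟩
      have hp'Y : p' ∈ X \ {v, t} := by
        refine ⟨hT.sub p' hp'P, ?_⟩
        rintro (h | h)
        · exact hvP (h ▸ hp'P)
        · exact hp't h
      have ⟨k, hk, hpk⟩ : ∃ k ∈ X \ {v, t}, p' ∉ comp H (X \ {v, t}) k := by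
        by_cases h : p' ∈ comp H (X \ {v, t}) r
        · exact ⟨s, hs, fun h' => hsr (comp_trans h (comp_symm hs h'))⟩
        · exact ⟨r, hr, h⟩
      have hsub := comp_sub (H := H) hk
      refine hT.cut hv ht av att vt (K := comp H (X \ {v, t}) k) ?_ ?_ ?_ ?_
      · intro x hx
        have hx' := hsub hx
        simp only [mem_diff, mem_insert_iff, mem_singleton_iff, not_or] at hx'
        refine ⟨hx'.1, hx'.2.1, hx'.2.2, fun hxP => ?_⟩
        by_cases hxp : x = p'
        · exact hpk (hxp ▸ hx)
        · exact hpk (comp_closed hx hp'Y (hT.adj x hxP p' hp'P hxp))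
      · intro x hx y hy hyv hyt hxy
        exact comp_closed hx (by simp [hy, hyv, hyt]) hxy
      · intro h
        exact IH _ _ _ _ (ncard_lt diff_subset hk.1 fun h => h.2 (comp_self _ _)) h
          ⟨p, q, subset_rfl⟩
      · intro L' h
        refine IH _ _ _ _ (ncard_lt (x := p') ?_ hp'Y.1 ?_) h ⟨v, t, subset_rfl⟩
        · rintro x (hx | rfl | rfl)
          · exact (hsub hx).1
          · exact hv
          · exact ht
        · rintro (h | h)
          · exact hpk h
          · exact hp'Y.2 h
    push Not at hsmall
    obtain ⟨y, hy, ay, vy, hyq, -⟩ := hsmall q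
    obtain ⟨z, hz, az, vz, hzq, hzy⟩ := hsmall y
    have nvy := vy.ne'
    have nvz := vz.ne'
    have nvq := hvq.symm
    rcases lemmaD good hT.conn hT.disj hv hqX hy hz av hqA ay az hqv.symm vy vz (Ne.symm hyq)
      (Ne.symm hzq) (Ne.symm hzy) with h | h | h
    · exact sep q hqX hqA hqv.symm y (by simp [*]) z (by simp [*]) h
    · exact sep y hy ay vy q (by simp [*, Ne.symm hyq]) z (by simp [*]) h
    · exact sep z hz az vz q (by simp [*, Ne.symm hzq]) y (by simp [*, Ne.symm hzy]) h

theorem thmT [Finite W] (good : Good H) (n : ℕ) : ∀ (A X P : Set W) (L : W → Finset ℕ),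
    X.ncard = n → TS H A X P L → (∃ p q, P ⊆ {p, q}) → Col H X L := by
  induction n using Nat.strong_induction_on with
  | _ n IH0 =>
  have IH : ∀ (A' X' P' : Set W) (L' : W → Finset ℕ), X'.ncard < n → TS H A' X' P' L' →
      (∃ p q, P' ⊆ {p, q}) → Col H X' L' := fun A' X' P' L' h => IH0 _ h A' X' P' L' rfl
  clear IH0
  have t2 : ∀ (A X : Set W) (L : W → Finset ℕ) (p q : W), X.ncard = n → p ≠ q →
      TS H A X {p, q} L → Col H X L := by
    rintro A X L p q rfl hpq hT
    exact hT.step2 good hpq IH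
  have t1 : ∀ (A X : Set W) (L : W → Finset ℕ) (p : W), X.ncard = n →
      TS H A X {p} L → Col H X L := by
    rintro A X L p rfl hT
    by_cases hex : ∃ v ∈ X, Att H A v ∧ v ∉ ({p} : Set W) ∧ H.Adj p v
    · obtain ⟨v, hv, av, hvp, hpv⟩ := hex
      obtain ⟨c, hc, hcp⟩ := exists_mem_sdiff (L v) (L p)
        (by have := hT.three v hv hvp; have := hT.one p rfl; omega)
      have h := hT.pin hv hvp av (c := c) (by
        rintro r rfl
        refine ⟨hpv, fun h => hcp (by simp [h])⟩)
      refine (t2 A X _ p v rfl hpv.ne h).sub ?_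
      intro u hu
      by_cases huv : u = v
      · subst huv; simpa using hc
      · rw [Function.update_of_ne huv]
    · refine hT.del (q := p) rfl (fun v hv ha hvP hqv => hex ⟨v, hv, ha, hvP, hqv⟩) ?_
      intro L' hL'
      exact IH _ _ _ _ (ncard_lt diff_subset (hT.sub p rfl) (by simp)) hL' ⟨p, p, by simp⟩
  have t0 : ∀ (A X : Set W) (L : W → Finset ℕ), X.ncard = n →
      TS H A X ∅ L → Col H X L := by
    rintro A X L rfl hT
    by_cases hX : X.Nonempty
    swap
    · rw [not_nonempty_iff_eq_empty] at hX
      subst hX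
      exact ⟨fun _ => 0, by simp, by simp⟩
    by_cases hex : ∃ v ∈ X, Att H A v
    · obtain ⟨v, hv, av⟩ := hex
      obtain ⟨c, hc⟩ := Finset.card_pos.1 (lt_of_lt_of_le (by norm_num) (hT.three v hv (by simp)))
      have h := hT.pin hv (by simp) av (c := c) (by simp)
      rw [empty_union] at h
      refine (t1 A X _ v rfl h).sub ?_
      intro u hu
      by_cases huv : u = v
      · subst huv; simpa using hc
      · rw [Function.update_of_ne huv]
    · obtain ⟨p, hp⟩ := hX
      have hfive : ∀ v ∈ X, 5 ≤ (L v).card := fun v hv =>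
        hT.five v hv (by simp) fun ha => hex ⟨v, hv, ha⟩
      obtain ⟨c, hc⟩ := Finset.card_pos.1 (lt_of_lt_of_le (by norm_num) (hfive p hp))
      refine col_del {p} (fun v => if H.Adj p v then L v \ {c} else L v) (fun _ => c)
        (by rintro z rfl; exact hc) (by rintro u rfl v rfl huv; exact absurd huv (H.irrefl))
        (IH {p} (X \ {p}) ∅ _ (ncard_lt diff_subset hp (by simp)) ?_ ⟨p, p, by simp⟩) ?_
      · refine ⟨conn_singleton p, ?_, by simp, by simp, by simp, by simp, by simp, ?_, ?_⟩
        · rintro a rfl h; exact h.2 rfl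
        · rintro v ⟨hv, hvp⟩ -
          have := hfive v hv
          split_ifs
          · exact card_sdiff_ge _ _ 3 2 this (by simp)
          · omega
        · rintro v ⟨hv, hvp⟩ - ha
          rw [att_singleton] at ha
          simpa [ha] using hfive v hv
      · intro v hv hvp d hd
        split_ifs at hd with h
        · simp at hd
          refine ⟨hd.1, ?_⟩
          rintro z rfl -
          exact hd.2
        · refine ⟨hd, ?_⟩
          rintro z rfl hz
          exact absurd hz h
  rintro A X P L hn hT ⟨p, q, hP⟩
  rcases Set.subset_pair_iff_eq.1 hP with h | h | h | h
  · subst h; exact t0 A X L hn hT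
  · subst h; exact t1 A X L p hn hT
  · subst h; exact t1 A X L q hn hT
  · subst h
    by_cases hpq : p = q
    · subst hpq
      rw [pair_eq_singleton] at hT
      exact t1 A X L p hn hT
    · exact t2 A X L p q hn hpq hT

theorem thmT' [Finite W] (good : Good H) {A X P : Set W} {L : W → Finset ℕ}
    (hT : TS H A X P L) (hP : ∃ p q, P ⊆ {p, q}) : Col H X L :=
  thmT good _ A X P L rfl hT hP

end Combi

section Combi

open scoped Classical

variable {W : Type} {H : SimpleGraph W}

/-- The hypotheses of the main theorem, for a precoloured path `p0 p1 p2`. -/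
structure MS (H : SimpleGraph W) (A X : Set W) (p0 p1 p2 : W) (L : W → Finset ℕ) : Prop where
  conn : Conn H A
  disj : ∀ a ∈ A, a ∉ X
  m0 : p0 ∈ X
  m1 : p1 ∈ X
  m2 : p2 ∈ X
  n02 : p0 ≠ p2
  e01 : H.Adj p0 p1
  e12 : H.Adj p1 p2
  a0 : Att H A p0
  a2 : Att H A p2
  o0 : (L p0).card = 1
  o1 : (L p1).card = 1
  o2 : (L p2).card = 1
  d01 : L p0 ≠ L p1
  d12 : L p1 ≠ L p2
  d02 : H.Adj p0 p2 → L p0 ≠ L p2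
  three : ∀ v ∈ X, v ≠ p0 → v ≠ p1 → v ≠ p2 → 3 ≤ (L v).card
  five : ∀ v ∈ X, v ≠ p0 → v ≠ p1 → v ≠ p2 → ¬ Att H A v → 5 ≤ (L v).card
  ind : ∀ u ∈ X, ∀ v ∈ X, H.Adj u v → (L u).card = 3 → (L v).card ≠ 3
  six : ∀ x ∈ X, H.Adj x p0 → H.Adj x p1 → H.Adj x p2 → L x ≠ L p0 ∪ L p1 ∪ L p2

/-- The induction hypothesis. -/
def IHM (H : SimpleGraph W) (n : ℕ) : Prop :=
  ∀ (A X : Set W) (p0 p1 p2 : W) (L : W → Finset ℕ), X.ncard < n → MS H A X p0 p1 p2 L → Col H X L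

lemma MS.symm {A X : Set W} {p0 p1 p2 : W} {L : W → Finset ℕ} (h : MS H A X p0 p1 p2 L) :
    MS H A X p2 p1 p0 L where
  conn := h.conn
  disj := h.disj
  m0 := h.m2
  m1 := h.m1
  m2 := h.m0
  n02 := h.n02.symm
  e01 := h.e12.symm
  e12 := h.e01.symm
  a0 := h.a2
  a2 := h.a0
  o0 := h.o2
  o1 := h.o1
  o2 := h.o0
  d01 := h.d12.symm
  d12 := h.d01.symm
  d02 := fun e => (h.d02 e.symm).symm
  three := fun v hv h0 h1 h2 => h.three v hv h2 h1 h0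
  five := fun v hv h0 h1 h2 => h.five v hv h2 h1 h0
  ind := h.ind
  six := fun x hx h0 h1 h2 e => h.six x hx h2 h1 h0 (by
    rw [e, Finset.union_comm, Finset.union_comm (L p2), Finset.union_assoc])

/-- Restricting to a smaller vertex set. -/
lemma MS.mono {A X : Set W} {p0 p1 p2 : W} {L : W → Finset ℕ} (h : MS H A X p0 p1 p2 L)
    {Y : Set W} (hY : Y ⊆ X) (h0 : p0 ∈ Y) (h1 : p1 ∈ Y) (h2 : p2 ∈ Y) :
    MS H A Y p0 p1 p2 L where
  conn := h.conn
  disj := fun a ha hy => h.disj a ha (hY hy)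
  m0 := h0
  m1 := h1
  m2 := h2
  n02 := h.n02
  e01 := h.e01
  e12 := h.e12
  a0 := h.a0
  a2 := h.a2
  o0 := h.o0
  o1 := h.o1
  o2 := h.o2
  d01 := h.d01
  d12 := h.d12
  d02 := h.d02
  three := fun v hv => h.three v (hY hv)
  five := fun v hv => h.five v (hY hv)
  ind := fun u hu v hv => h.ind u (hY hu) v (hY hv)
  six := fun x hx => h.six x (hY hx)

variable [Finite W] {A X : Set W} {p0 p1 p2 : W} {L : W → Finset ℕ}

/-- Colour `X \ K` first and then extend to `K`, whose boundary is `Q`. -/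
lemma MS.split (hM : MS H A X p0 p1 p2 L) (IH : IHM H X.ncard) {K Q : Set W} {k : W} (hk : k ∈ K)
    (hK : ∀ k ∈ K, k ∈ X ∧ k ≠ p0 ∧ k ≠ p1 ∧ k ≠ p2 ∧ k ∉ Q) (hQ : ∀ q ∈ Q, q ∈ X)
    (hcl : ∀ k ∈ K, ∀ y ∈ X, H.Adj k y → y ∈ Q ∨ y ∈ K)
    (h2 : ∀ c : W → ℕ, (∀ u ∈ Q, ∀ v ∈ Q, H.Adj u v → c u ≠ c v) → (∀ q ∈ Q, c q ∈ L q) →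
      Col H (K ∪ Q) (fun v => if v ∈ K then L v else {c v})) : Col H X L := by
  obtain ⟨c, c1, c2⟩ := IH A (X \ K) p0 p1 p2 L (ncard_lt sdiff_subset (hK k hk).1 (fun h => h.2 hk))
    (hM.mono sdiff_subset ⟨hM.m0, fun h => (hK _ h).2.1 rfl⟩ ⟨hM.m1, fun h => (hK _ h).2.2.1 rfl⟩
      ⟨hM.m2, fun h => (hK _ h).2.2.2.1 rfl⟩)
  have hQK : ∀ q ∈ Q, q ∈ X \ K := fun q hq => ⟨hQ q hq, fun h => (hK q h).2.2.2.2 hq⟩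
  refine col_glue c1 c2 (X2 := K ∪ Q) ((h2 c ?_ ?_).sub ?_) ?_ ?_
  · exact fun u hu v hv => c2 u (hQK u hu) v (hQK v hv)
  · exact fun q hq => c1 q (hQK q hq)
  · rintro v (hv | hv)
    · simp [hv, pre]
    · have := hQK v hv
      simp [this.1, this.2, pre]
  · intro x hx
    by_cases h : x ∈ K
    · exact Or.inr (Or.inl h)
    · exact Or.inl ⟨hx, h⟩
  · rintro u ⟨hu, huK⟩ hu2 w (hw | hw) hw2 huw
    · rcases hcl w hw u hu huw.symm with h | h
      · exact hu2 (Or.inr h)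
      · exact huK h
    · exact hw2 (hQK w hw)

/-- Reduction: a part behind an edge with both ends attached to `A`. -/
lemma MS.R (good : Good H) (hM : MS H A X p0 p1 p2 L) (IH : IHM H X.ncard) {u v : W}
    (hu : u ∈ X) (hv : v ∈ X) (au : Att H A u) (av : Att H A v) (uv : H.Adj u v)
    {K : Set W} {k : W} (hk : k ∈ K)
    (hK : ∀ k ∈ K, k ∈ X ∧ k ≠ p0 ∧ k ≠ p1 ∧ k ≠ p2 ∧ k ≠ u ∧ k ≠ v)
    (hcl : ∀ k ∈ K, ∀ y ∈ X, H.Adj k y → y = u ∨ y = v ∨ y ∈ K) : Col H X L := by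
  refine hM.split IH (K := K) (Q := {u, v}) hk (fun k hk => by simpa using hK k hk)
    (by rintro q (rfl | rfl) <;> assumption) (fun k hk y hy h => by
      simpa [or_assoc] using hcl k hk y hy h) ?_
  intro c c1 c2
  have huK : u ∉ K := fun h => (hK u h).2.2.2.2.1 rfl
  have hvK : v ∉ K := fun h => (hK v h).2.2.2.2.2 rfl
  refine thmT' good (A := A) (P := {u, v}) ⟨hM.conn, ?_, fun p hp => Or.inr hp, ?_, ?_, ?_, ?_, ?_, ?_⟩
    ⟨u, v, subset_rfl⟩
  · rintro a ha (h | rfl | rfl)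
    · exact hM.disj a ha (hK a h).1
    · exact hM.disj a ha hu
    · exact hM.disj a ha hv
  · rintro p (rfl | rfl) <;> assumption
  · rintro p (rfl | rfl) q (rfl | rfl) h
    · exact absurd rfl h
    · exact uv
    · exact uv.symm
    · exact absurd rfl h
  · rintro p (rfl | rfl) q (rfl | rfl) h
    · exact absurd rfl h
    · simpa [*] using c1 p (by simp) q (by simp) uv
    · simpa [*] using c1 p (by simp) q (by simp) uv.symm
    · exact absurd rfl h
  · rintro p (rfl | rfl) <;> simp [*]
  · rintro w (hw | hw) hw'
    · obtain ⟨h1, h2, h3, h4, h5⟩ := hK w hw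
      simpa [hw] using hM.three w h1 h2 h3 h4
    · exact absurd hw hw'
  · rintro w (hw | hw) hw' ha
    · obtain ⟨h1, h2, h3, h4, h5⟩ := hK w hw
      simpa [hw] using hM.five w h1 h2 h3 h4 ha
    · exact absurd hw hw'

/-- Reduction: the inside of a triangle. -/
lemma MS.RT (good : Good H) (hM : MS H A X p0 p1 p2 L) (IH : IHM H X.ncard) {u v w : W}
    (hu : u ∈ X) (hv : v ∈ X) (hw : w ∈ X) (uv : H.Adj u v) (uw : H.Adj u w) (vw : H.Adj v w)
    {K : Set W} {k : W} (hk : k ∈ K)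
    (hK : ∀ k ∈ K, k ∈ X ∧ k ≠ p0 ∧ k ≠ p1 ∧ k ≠ p2 ∧ k ≠ u ∧ k ≠ v ∧ k ≠ w)
    (hcl : ∀ k ∈ K, ∀ y ∈ X, H.Adj k y → y = u ∨ y = v ∨ y = w ∨ y ∈ K)
    (hS : ∀ k ∈ K, ¬ Att H A k) : Col H X L := by
  refine hM.split IH (K := K) (Q := {u, v, w}) hk (fun k hk => by simpa using hK k hk)
    (by rintro q (rfl | rfl | rfl) <;> assumption) (fun k hk y hy h => by
      simpa [or_assoc] using hcl k hk y hy h) ?_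
  intro c c1 c2
  have huK : u ∉ K := fun h => (hK u h).2.2.2.2.1 rfl
  have hvK : v ∉ K := fun h => (hK v h).2.2.2.2.2.1 rfl
  have hwK : w ∉ K := fun h => (hK w h).2.2.2.2.2.2 rfl
  have h5 : ∀ k ∈ K, 5 ≤ (L k).card := fun k hk => by
    obtain ⟨h1, h2, h3, h4, h5⟩ := hK k hk
    exact hM.five k h1 h2 h3 h4 (hS k hk)
  have cuv := c1 u (by simp) v (by simp) uv
  have cuw := c1 u (by simp) w (by simp) uw
  have cvw := c1 v (by simp) w (by simp) vw
  have hset : (K ∪ {u, v, w}) \ {u} = K ∪ {v, w} := by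
    ext x
    have := uv.ne
    have := uw.ne
    simp only [mem_sdiff, mem_union, mem_insert_iff, mem_singleton_iff]
    grind
  refine col_del {u} (fun x => if x ∈ K then (if H.Adj u x then L x \ {c u} else L x) else {c x}) c
    (by rintro z rfl; simp [huK]) (by rintro a rfl b rfl hab; exact absurd hab H.irrefl) ?_ ?_
  · rw [hset]
    refine thmT' good (A := {u}) (P := {v, w}) ⟨conn_singleton u, ?_, fun p hp => Or.inr hp,
      ?_, ?_, ?_, ?_, ?_, ?_⟩ ⟨v, w, subset_rfl⟩
    · rintro a rfl (h | rfl | rfl)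
      · exact huK h
      · exact uv.ne rfl
      · exact uw.ne rfl
    · rintro p (rfl | rfl) <;> rw [att_singleton] <;> assumption
    · rintro p (rfl | rfl) q (rfl | rfl) h
      · exact absurd rfl h
      · exact vw
      · exact vw.symm
      · exact absurd rfl h
    · rintro p (rfl | rfl) q (rfl | rfl) h
      · exact absurd rfl h
      · simpa [*] using cvw
      · simpa [*] using cvw.symm
      · exact absurd rfl h
    · rintro p (rfl | rfl) <;> simp [*]
    · rintro x (hx | hx) hx'
      · have := h5 x hx
        simp only [hx, if_true]
        split_ifs
        · exact card_sdiff_ge _ _ 3 2 this (by simp)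
        · omega
      · exact absurd hx hx'
    · rintro x (hx | hx) hx' ha
      · rw [att_singleton] at ha
        simpa [hx, ha] using h5 x hx
      · exact absurd hx hx'
  · rintro x (hx | rfl | rfl | rfl) hxu d hd
    · simp only [hx, if_true] at hd ⊢
      split_ifs at hd with h
      · simp at hd
        exact ⟨hd.1, by rintro z rfl -; exact hd.2⟩
      · exact ⟨hd, by rintro z rfl h'; exact absurd h' h⟩
    · exact absurd rfl hxu
    · simp only [hvK, if_false, Finset.mem_singleton] at hd ⊢
      subst hd
      exact ⟨rfl, by rintro z rfl -; exact cuv.symm⟩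
    · simp only [hwK, if_false, Finset.mem_singleton] at hd ⊢
      subst hd
      exact ⟨rfl, by rintro z rfl -; exact cuw.symm⟩

/-- Reduction: a part behind a path of length two whose ends are attached to `A`. -/
lemma MS.R3 (hM : MS H A X p0 p1 p2 L) (IH : IHM H X.ncard) {u w v : W}
    (hu : u ∈ X) (hw : w ∈ X) (hv : v ∈ X) (au : Att H A u) (av : Att H A v)
    (uw : H.Adj u w) (wv : H.Adj w v) (nuv : u ≠ v) (h3 : (L u).card = 3)
    (n1 : p1 ≠ u ∧ p1 ≠ w ∧ p1 ≠ v)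
    {K : Set W} {k : W} (hk : k ∈ K)
    (hK : ∀ k ∈ K, k ∈ X ∧ k ≠ p0 ∧ k ≠ p1 ∧ k ≠ p2 ∧ k ≠ u ∧ k ≠ w ∧ k ≠ v)
    (hcl : ∀ k ∈ K, ∀ y ∈ X, H.Adj k y → y = u ∨ y = w ∨ y = v ∨ y ∈ K) : Col H X L := by
  refine hM.split IH (K := K) (Q := {u, w, v}) hk (fun k hk => by simpa using hK k hk)
    (by rintro q (rfl | rfl | rfl) <;> assumption) (fun k hk y hy h => by
      simpa [or_assoc] using hcl k hk y hy h) ?_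
  intro c c1 c2
  have huK : u ∉ K := fun h => (hK u h).2.2.2.2.1 rfl
  have hwK : w ∉ K := fun h => (hK w h).2.2.2.2.2.1 rfl
  have hvK : v ∉ K := fun h => (hK v h).2.2.2.2.2.2 rfl
  have hsub : K ∪ {u, w, v} ⊆ X := by
    rintro x (hx | rfl | rfl | rfl)
    · exact (hK x hx).1
    all_goals assumption
  have h3' : ∀ x ∈ K, 3 ≤ (L x).card := fun x hx => by
    obtain ⟨h1, h2, h3, h4, h5⟩ := hK x hx
    exact hM.three x h1 h2 h3 h4
  have hcard : ∀ x ∈ K ∪ {u, w, v}, x ∉ K → (if x ∈ K then L x else {c x}).card = 1 := by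
    intro x _ hx; simp [hx]
  refine IH A _ u w v _ (ncard_lt hsub hM.m1 ?_)
    { conn := hM.conn
      disj := fun a ha h => hM.disj a ha (hsub h)
      m0 := by simp
      m1 := by simp
      m2 := by simp
      n02 := nuv
      e01 := uw
      e12 := wv
      a0 := au
      a2 := av
      o0 := by simp [huK]
      o1 := by simp [hwK]
      o2 := by simp [hvK]
      d01 := by simpa [huK, hwK] using c1 u (by simp) w (by simp) uw
      d12 := by simpa [hvK, hwK] using c1 w (by simp) v (by simp) wv
      d02 := fun e => by simpa [hvK, huK] using c1 u (by simp) v (by simp) e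
      three := ?_
      five := ?_
      ind := ?_
      six := ?_ }
  · rintro (h | rfl | rfl | rfl)
    · exact (hK _ h).2.2.1 rfl
    · exact n1.1 rfl
    · exact n1.2.1 rfl
    · exact n1.2.2 rfl
  · rintro x (hx | rfl | rfl | rfl) g0 g1 g2
    · simpa [hx] using h3' x hx
    all_goals exact absurd rfl (by assumption)
  · rintro x (hx | rfl | rfl | rfl) g0 g1 g2 ha
    · obtain ⟨h1, h2, h3, h4, h5⟩ := hK x hx
      simpa [hx] using hM.five x h1 h2 h3 h4 ha
    all_goals exact absurd rfl (by assumption)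
  · intro x hx y hy hxy h1 h2
    have hxK : x ∈ K := by by_contra h; rw [hcard x hx h] at h1; omega
    have hyK : y ∈ K := by by_contra h; rw [hcard y hy h] at h2; omega
    simp only [hxK, hyK, if_true] at h1 h2
    exact hM.ind x (hsub hx) y (hsub hy) hxy h1 h2
  · rintro x (hx | rfl | rfl | rfl) g0 g1 g2 he
    · simp only [hx, huK, hwK, hvK, if_true, if_false] at he
      have : (L x).card ≤ 3 := by
        rw [he]
        exact (Finset.card_union_le _ _).trans (Nat.add_le_add_right (Finset.card_union_le _ _) _)
      have h4 := h3' x hx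
      exact hM.ind x (hK x hx).1 u hu g0 (by omega) h3
    · exact absurd g0 H.irrefl
    · exact absurd g1 H.irrefl
    · exact absurd g2 H.irrefl

/-- Reduction: a part behind the precoloured path. -/
lemma MS.RP (hM : MS H A X p0 p1 p2 L) (IH : IHM H X.ncard)
    {K : Set W} {k z : W} (hk : k ∈ K)
    (hK : ∀ k ∈ K, k ∈ X ∧ k ≠ p0 ∧ k ≠ p1 ∧ k ≠ p2)
    (hcl : ∀ k ∈ K, ∀ y ∈ X, H.Adj k y → y = p0 ∨ y = p1 ∨ y = p2 ∨ y ∈ K)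
    (hz : z ∈ X) (hzK : z ∉ K) (hzP : z ≠ p0 ∧ z ≠ p1 ∧ z ≠ p2) : Col H X L := by
  refine hM.split IH (K := K) (Q := {p0, p1, p2}) hk (fun k hk => by
      have := hK k hk
      simp only [mem_insert_iff, mem_singleton_iff]
      tauto)
    (by rintro q (rfl | rfl | rfl); exacts [hM.m0, hM.m1, hM.m2]) (fun k hk y hy h => by
      simpa [or_assoc] using hcl k hk y hy h) ?_
  intro c c1 c2
  have hsub : K ∪ {p0, p1, p2} ⊆ X := by
    rintro x (hx | rfl | rfl | rfl)
    · exact (hK x hx).1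
    exacts [hM.m0, hM.m1, hM.m2]
  refine (IH A (K ∪ {p0, p1, p2}) p0 p1 p2 L (ncard_lt hsub hz (by simpa [hzK] using hzP))
    (hM.mono hsub (by simp) (by simp) (by simp))).sub ?_
  have aux : ∀ p, p ∈ ({p0, p1, p2} : Set W) → (L p).card = 1 → L p ⊆ {c p} := by
    intro p hp h1
    obtain ⟨d, hd⟩ := Finset.card_eq_one.1 h1
    have := c2 p hp
    rw [hd] at this ⊢
    simp at this
    simp [this]
  intro x hx
  by_cases hxK : x ∈ K
  · simp [hxK]
  · simp only [hxK, if_false]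
    rcases hx with hx | rfl | rfl | rfl
    · exact absurd hx hxK
    · exact aux _ (by simp) hM.o0
    · exact aux _ (by simp) hM.o1
    · exact aux _ (by simp) hM.o2

end Combi

section Combi

open scoped Classical

variable {W : Type} {H : SimpleGraph W}

lemma col_glue2 {X X1 X2 : Set W} {L : W → Finset ℕ} (h1 : Col H X1 L) (h2 : Col H X2 L)
    (hX : ∀ x ∈ X, x ∈ X1 ∨ x ∈ X2) (hs : ∀ x ∈ X1, x ∈ X2 → (L x).card = 1)
    (he : ∀ u ∈ X1, u ∉ X2 → ∀ v ∈ X2, v ∉ X1 → H.Adj u v → ∀ c ∈ L u, c ∉ L v) : Col H X L := by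
  obtain ⟨c, c1, c2⟩ := h1
  obtain ⟨d, d1, d2⟩ := h2
  have hcd : ∀ x ∈ X1, x ∈ X2 → c x = d x := by
    intro x hx hx'
    have := hs x hx hx'
    rw [Finset.card_eq_one] at this
    obtain ⟨e, he⟩ := this
    have h1 := c1 x hx
    have h2 := d1 x hx'
    rw [he] at h1 h2
    simp at h1 h2
    rw [h1, h2]
  have aux : ∀ u ∈ X, ∀ v ∈ X, H.Adj u v → u ∈ X1 → v ∉ X1 → c u ≠ d v := by
    intro u hu v hv huv hu1 hv1
    have hv2 := (hX v hv).resolve_left hv1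
    by_cases hu2 : u ∈ X2
    · rw [hcd u hu1 hu2]; exact d2 u hu2 v hv2 huv
    · intro h
      exact he u hu1 hu2 v hv2 hv1 huv (c u) (c1 u hu1) (h ▸ d1 v hv2)
  refine ⟨fun v => if v ∈ X1 then c v else d v, ?_, ?_⟩
  · intro v hv
    by_cases hv1 : v ∈ X1
    · simpa [hv1] using c1 v hv1
    · simpa [hv1] using d1 v ((hX v hv).resolve_left hv1)
  · intro u hu v hv huv
    by_cases hu1 : u ∈ X1 <;> by_cases hv1 : v ∈ X1
    · simpa [hu1, hv1] using c2 u hu1 v hv1 huv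
    · simpa [hu1, hv1] using aux u hu v hv huv hu1 hv1
    · simpa [hu1, hv1] using (aux v hv u hu huv.symm hv1 hu1).symm
    · simpa [hu1, hv1] using d2 u ((hX u hu).resolve_left hu1) v ((hX v hv).resolve_left hv1) huv

lemma card3 {a b : Finset ℕ} {c : ℕ} (ha : a.card = 1) (hb : b.card = 1) :
    (a ∪ b ∪ {c}).card ≤ 3 := by
  refine (Finset.card_union_le _ _).trans ?_
  have := Finset.card_union_le a b
  simp only [Finset.card_singleton]
  omega

variable [Finite W] {A X : Set W} {p0 p1 p2 : W} {L : W → Finset ℕ}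

lemma MS.side (good : Good H) (hM : MS H A X p0 p1 p2 L) {v : W} (hv : v ∈ X) (av : Att H A v)
    (v0 : v ≠ p0) (v2 : v ≠ p2) (v1 : H.Adj v p1) (h3v : 3 ≤ (L v).card) :
    ∃ f : Finset ℕ, f.card ≤ 1 ∧ (H.Adj v p0 → L p0 ⊆ f) ∧
      (∀ x ∈ X, x ≠ p2 → H.Adj x p0 → H.Adj x p1 → H.Adj x v → ∀ c, c ∉ f →
        L x ≠ L p0 ∪ L p1 ∪ {c}) ∧ (f = ∅ ∨ (H.Adj v p0 ∧ f = L p0) ∨ 4 ≤ (L v).card) := by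
  have hbad : ∀ x ∈ X, x ≠ p2 → H.Adj x p0 → H.Adj x p1 → ∀ c, L x = L p0 ∪ L p1 ∪ {c} →
      (L x).card = 3 ∧ Att H A x := by
    intro x hx x2 x0 x1 c hc
    have := hM.three x hx x0.ne x1.ne x2
    have h3 := card3 (c := c) hM.o0 hM.o1
    rw [← hc] at h3
    refine ⟨by omega, ?_⟩
    by_contra ha
    have := hM.five x hx x0.ne x1.ne x2 ha
    omega
  have n02 := hM.n02
  have n01 := hM.e01.ne
  have n12 := hM.e12.ne
  have cA : Conn H (A ∪ {p2}) := conn_insert hM.conn hM.a2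
  have hd := hM.disj
  have m0 := hM.m0
  have m1 := hM.m1
  have m2 := hM.m2
  by_cases vp0 : H.Adj v p0
  · refine ⟨L p0, hM.o0.le, fun _ => subset_rfl, ?_, Or.inr (Or.inl ⟨vp0, rfl⟩)⟩
    intro x hx x2 x0 x1 xv c hc he
    obtain ⟨-, ax⟩ := hbad x hx x2 x0 x1 c he
    refine noK5 good {p0} {p1} {v} {x} (A ∪ {p2}) (conn_singleton _) (conn_singleton _)
      (conn_singleton _) (conn_singleton _) cA ?_ (touch_of rfl rfl hM.e01)
      (touch_of rfl rfl vp0.symm) (touch_of rfl rfl x0.symm)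
      (touch_symm (touch_att rfl (att_union.2 (Or.inl hM.a0)))) (touch_of rfl rfl v1.symm)
      (touch_of rfl rfl x1.symm) (touch_of rfl (Or.inr rfl) hM.e12) (touch_of rfl rfl xv.symm)
      (touch_symm (touch_att rfl (att_union.2 (Or.inl av))))
      (touch_symm (touch_att rfl (att_union.2 (Or.inl ax))))
    have := x0.ne
    have := x1.ne
    have := xv.ne
    have := v1.ne
    intro b
    have := hd b
    simp only [mem_singleton_iff, mem_union]
    repeat' (first | apply And.intro | intro _)
    all_goals grind
  · by_cases hex : ∃ x ∈ X, x ≠ p2 ∧ H.Adj x p0 ∧ H.Adj x p1 ∧ H.Adj x v ∧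
      ∃ c, L x = L p0 ∪ L p1 ∪ {c}
    swap
    · refine ⟨∅, by simp, fun h => absurd h vp0, ?_, Or.inl rfl⟩
      intro x hx x2 x0 x1 xv c hc he
      exact hex ⟨x, hx, x2, x0, x1, xv, c, he⟩
    · obtain ⟨x, hx, x2, x0, x1, xv, c, he⟩ := hex
      obtain ⟨h3x, ax⟩ := hbad x hx x2 x0 x1 c he
      refine ⟨{c}, by simp, fun h => absurd h vp0, ?_, Or.inr (Or.inr ?_)⟩
      · intro y hy y2 y0 y1 yv d hd' hye
        obtain ⟨h3y, ay⟩ := hbad y hy y2 y0 y1 d hye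
        have hxy : x ≠ y := by
          rintro rfl
          have hdm : d ∈ L p0 ∪ L p1 ∪ {c} := by rw [← he, hye]; simp
          simp only [Finset.mem_singleton] at hd'
          have hdm' : d ∈ L p0 ∪ L p1 := by
            rw [Finset.mem_union] at hdm
            rcases hdm with h | h
            · exact h
            · simp at h; exact absurd h hd'
          have : L x = L p0 ∪ L p1 := by
            rw [hye]
            exact Finset.union_eq_left.2 (by simpa using hdm')
          have h2 := Finset.card_union_le (L p0) (L p1)
          rw [← this, hM.o0, hM.o1] at h2
          omega
        refine noK33 good {p0} {p1} {v} {x} {y} (A ∪ {p2}) (conn_singleton _) (conn_singleton _)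
          (conn_singleton _) (conn_singleton _) (conn_singleton _) cA ?_
          (touch_of rfl rfl x0.symm) (touch_of rfl rfl y0.symm)
          (touch_symm (touch_att rfl (att_union.2 (Or.inl hM.a0))))
          (touch_of rfl rfl x1.symm) (touch_of rfl rfl y1.symm) (touch_of rfl (Or.inr rfl) hM.e12)
          (touch_of rfl rfl xv.symm) (touch_of rfl rfl yv.symm)
          (touch_symm (touch_att rfl (att_union.2 (Or.inl av))))
        have := x0.ne
        have := x1.ne
        have := xv.ne
        have := y0.ne
        have := y1.ne
        have := yv.ne
        have := v1.ne
        intro b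
        have := hd b
        simp only [mem_singleton_iff, mem_union]
        repeat' (first | apply And.intro | intro _)
        all_goals grind
      · have := hM.ind x hx v hv xv h3x
        omega

/-- A colour for a chord of the precoloured path. -/
lemma MS.chordColor (good : Good H) (hM : MS H A X p0 p1 p2 L) {v : W} (hv : v ∈ X)
    (av : Att H A v) (v0 : v ≠ p0) (v2 : v ≠ p2) (v1 : H.Adj v p1) :
    ∃ c ∈ L v, c ∉ L p1 ∧ (H.Adj v p0 → c ∉ L p0) ∧ (H.Adj v p2 → c ∉ L p2) ∧
      (∀ x ∈ X, x ≠ p2 → H.Adj x p0 → H.Adj x p1 → H.Adj x v → L x ≠ L p0 ∪ L p1 ∪ {c}) ∧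
      (∀ x ∈ X, x ≠ p0 → H.Adj x p2 → H.Adj x p1 → H.Adj x v → L x ≠ L p2 ∪ L p1 ∪ {c}) := by
  have h3v := hM.three v hv v0 v1.ne v2
  obtain ⟨f, f1, f2, f3, f4⟩ := hM.side good hv av v0 v2 v1 h3v
  obtain ⟨g, g1, g2, g3, g4⟩ := hM.symm.side good hv av v2 v0 v1 h3v
  have o0 := hM.o0
  have o1 := hM.o1
  have o2 := hM.o2
  have key : ∃ c ∈ L v, c ∉ L p1 ∪ f ∪ g := by
    have u1 := Finset.card_union_le (L p1 ∪ f) g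
    have u2 := Finset.card_union_le (L p1) f
    by_cases h4 : 4 ≤ (L v).card
    · exact exists_mem_sdiff _ _ (by omega)
    rcases f4 with rfl | ⟨e0, rfl⟩ | h
    · have : (∅ : Finset ℕ).card = 0 := rfl
      exact exists_mem_sdiff _ _ (by omega)
    · rcases g4 with rfl | ⟨e2, rfl⟩ | h
      · have : (∅ : Finset ℕ).card = 0 := rfl
        exact exists_mem_sdiff _ _ (by omega)
      · by_contra hcon
        push Not at hcon
        have hs : L v ⊆ L p1 ∪ L p0 ∪ L p2 := hcon
        have := Finset.eq_of_subset_of_card_le hs (by omega)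
        rw [Finset.union_comm (L p1)] at this
        exact hM.six v hv e0 v1 e2 this
      · exact absurd h h4
    · exact absurd h h4
  obtain ⟨c, hc, hc'⟩ := key
  simp only [Finset.mem_union, not_or] at hc'
  exact ⟨c, hc, hc'.1.1, fun h hh => hc'.1.2 (f2 h hh), fun h hh => hc'.2 (g2 h hh),
    fun x hx x2 x0 x1 xv => f3 x hx x2 x0 x1 xv c hc'.1.2,
    fun x hx x2 x0 x1 xv => g3 x hx x2 x0 x1 xv c hc'.2⟩

/-- The sub-problem on one side of a chord. -/
lemma MS.chordSide (hM : MS H A X p0 p1 p2 L) {v : W} (hv : v ∈ X)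
    (av : Att H A v) (v0 : v ≠ p0) (v2 : v ≠ p2) (v1 : H.Adj v p1) {c : ℕ} (hc1 : c ∉ L p1)
    (hc0 : H.Adj v p0 → c ∉ L p0)
    (hc6 : ∀ x ∈ X, x ≠ p2 → H.Adj x p0 → H.Adj x p1 → H.Adj x v → L x ≠ L p0 ∪ L p1 ∪ {c})
    {Y : Set W} (hY : Y ⊆ X) (h0 : p0 ∈ Y) (h1 : p1 ∈ Y) (hvY : v ∈ Y) (h2 : p2 ∉ Y) :
    MS H A Y p0 p1 v (Function.update L v {c}) := by
  have hup : ∀ u, u ≠ v → Function.update L v {c} u = L u := fun u hu => by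
    simp [Function.update_of_ne hu]
  have hy2 : ∀ y ∈ Y, y ≠ p2 := fun y hy h => h2 (h ▸ hy)
  refine
    { conn := hM.conn
      disj := fun a ha h => hM.disj a ha (hY h)
      m0 := h0
      m1 := h1
      m2 := hvY
      n02 := v0.symm
      e01 := hM.e01
      e12 := v1.symm
      a0 := hM.a0
      a2 := av
      o0 := by rw [hup _ v0.symm]; exact hM.o0
      o1 := by rw [hup _ v1.ne']; exact hM.o1
      o2 := by simp
      d01 := by rw [hup _ v0.symm, hup _ v1.ne']; exact hM.d01
      d12 := ?_
      d02 := ?_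
      three := ?_
      five := ?_
      ind := ?_
      six := ?_ }
  · rw [hup _ v1.ne']
    intro h
    exact hc1 (by simp [h])
  · rw [hup _ v0.symm]
    intro e h
    exact hc0 e.symm (by simp [h])
  · intro u hu u0 u1 uv
    rw [hup u uv]
    exact hM.three u (hY hu) u0 u1 (hy2 u hu)
  · intro u hu u0 u1 uv
    rw [hup u uv]
    exact hM.five u (hY hu) u0 u1 (hy2 u hu)
  · intro u hu w hw huw
    by_cases hu' : u = v
    · subst hu'; simp
    · by_cases hw' : w = v
      · subst hw'; simp
      · rw [hup u hu', hup w hw']; exact hM.ind u (hY hu) w (hY hw) huw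
  · intro x hx x0 x1 xv
    rw [hup x xv.ne, hup _ v0.symm, hup _ v1.ne', Function.update_self]
    exact hc6 x (hY hx) (hy2 x hx) x0 x1 xv

/-- Reduction: a chord from the middle vertex of the precoloured path. -/
lemma MS.R4 (good : Good H) (hM : MS H A X p0 p1 p2 L) (IH : IHM H X.ncard) {v : W}
    (hv : v ∈ X) (av : Att H A v) (v0 : v ≠ p0) (v2 : v ≠ p2) (v1 : H.Adj v p1) : Col H X L := by
  have n02 := hM.n02
  have n01 := hM.e01.ne
  have n12 := hM.e12.ne
  have nv1 := v1.ne
  have m0 := hM.m0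
  have m1 := hM.m1
  have m2 := hM.m2
  have hp0Y : p0 ∈ X \ {p1, v, p2} := by simp [*, Ne.symm v0]
  set K0 := comp H (X \ {p1, v, p2}) p0 with hK0
  have hK0s : ∀ k ∈ K0, k ∈ X ∧ k ≠ p1 ∧ k ≠ v ∧ k ≠ p2 := fun k hk => by
    simpa using comp_sub hp0Y hk
  have h0K : p0 ∈ K0 := comp_self _ _
  by_cases hE : ∀ k ∈ K0, H.Adj k p2 → k = p0
  · obtain ⟨c, hcv, hc1, hc0, hc2, hc3, hc4⟩ := hM.chordColor good hv av v0 v2 v1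
    have hsub0 : K0 ∪ {p1, v} ⊆ X := by
      rintro x (hx | rfl | rfl)
      · exact (hK0s x hx).1
      all_goals assumption
    have C0 := IH _ _ _ _ _ _ (ncard_lt hsub0 m2 (by
        rintro (h | h | h)
        · exact (hK0s _ h).2.2.2 rfl
        · exact n12 h.symm
        · exact v2 h.symm))
      (hM.chordSide hv av v0 v2 v1 hc1 hc0 hc3 hsub0 (Or.inl h0K) (by simp) (by simp) (by
        rintro (h | h | h)
        · exact (hK0s _ h).2.2.2 rfl
        · exact n12 h.symm
        · exact v2 h.symm))
    have hp2 : p2 ∉ K0 := fun h => (hK0s _ h).2.2.2 rfl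
    have hp1 : p1 ∉ K0 := fun h => (hK0s _ h).2.1 rfl
    have hvK : v ∉ K0 := fun h => (hK0s _ h).2.2.1 rfl
    have C2 := IH _ _ _ _ _ _ (ncard_lt (X := X \ K0) sdiff_subset m0 (fun h => h.2 h0K))
      (hM.symm.chordSide hv av v2 v0 v1 hc1 hc2 hc4 (Y := X \ K0) sdiff_subset ⟨m2, hp2⟩
        ⟨m1, hp1⟩ ⟨hv, hvK⟩ (fun h => h.2 h0K))
    have C := col_glue2 (X := X) C0 C2 (fun x hx => by
      by_cases h : x ∈ K0
      · exact Or.inl (Or.inl h)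
      · exact Or.inr ⟨hx, h⟩) ?_ ?_
    · refine C.sub ?_
      intro u hu
      by_cases huv : u = v
      · subst huv; simpa using hcv
      · rw [Function.update_of_ne huv]
    · rintro x (hx | rfl | rfl) hx'
      · exact absurd hx hx'.2
      · rw [Function.update_of_ne nv1.symm]; exact hM.o1
      · simp
    · rintro u (hu | rfl | rfl) hu2 w ⟨hw, hwK⟩ hw2 huw
      · have hw2' : w = p2 := by
          by_contra h
          refine hwK (comp_closed hu ?_ huw)
          simp only [mem_union, mem_insert_iff, mem_singleton_iff, not_or] at hw2
          simp [hw, h, hw2.2.1, hw2.2.2]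
        subst hw2'
        have := hE u hu huw
        subst this
        rw [Function.update_of_ne v0.symm, Function.update_of_ne v2.symm]
        intro d hd hd'
        refine hM.d02 huw ?_
        obtain ⟨a, ha⟩ := Finset.card_eq_one.1 hM.o0
        obtain ⟨b, hb⟩ := Finset.card_eq_one.1 hM.o2
        rw [ha] at hd ⊢
        rw [hb] at hd' ⊢
        simp at hd hd'
        rw [← hd, ← hd']
      · exact absurd ⟨m1, hp1⟩ hu2
      · exact absurd ⟨hv, hvK⟩ hu2
  · push Not at hE
    obtain ⟨k, hkK, kp2, kp0⟩ := hE
    have hks := hK0s k hkK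
    have hkY : k ∈ X \ {p0, p1, p2, v} := by simp [*]
    have hCs : ∀ x ∈ comp H (X \ {p0, p1, p2, v}) k, x ∈ X ∧ x ≠ p0 ∧ x ≠ p1 ∧ x ≠ p2 ∧ x ≠ v :=
      fun x hx => by simpa using comp_sub hkY hx
    have kk := comp_self (H := H) (X \ {p0, p1, p2, v}) k
    have cK := comp_conn (H := H) hkY
    by_cases ht : Touch H (comp H (X \ {p0, p1, p2, v}) k) {v}
    · have t0 : Touch H (comp H (X \ {p0, p1, p2, v}) k) {p0} := by
        obtain ⟨a, ha, b, hb, hb', hab⟩ := comp_exit (Y' := X \ {p0, p1, p2, v})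
          (comp_symm hp0Y hkK) (fun h => (hCs _ h).2.1 rfl)
        have : b = p0 := by simp at hb hb'; tauto
        exact ⟨a, ha, p0, rfl, this ▸ hab⟩
      exfalso
      refine noK33 good A {p1} (comp H (X \ {p0, p1, p2, v}) k) {p0} {v} {p2} hM.conn
        (conn_singleton _) cK (conn_singleton _) (conn_singleton _) (conn_singleton _) ?_
        (touch_att rfl hM.a0) (touch_att rfl av) (touch_att rfl hM.a2)
        (touch_of rfl rfl hM.e01.symm) (touch_of rfl rfl v1.symm) (touch_of rfl rfl hM.e12)
        t0 ht (touch_of kk rfl kp2)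
      intro b
      have := hCs b
      have := hM.disj b
      simp only [mem_singleton_iff]
      clear_value K0
      repeat' (first | apply And.intro | intro _)
      all_goals grind
    · refine hM.RP IH (z := v) kk (fun x hx => ?_) ?_ hv (fun h => (hCs v h).2.2.2.2 rfl)
        ⟨v0, nv1, v2⟩
      · have := hCs x hx
        tauto
      · intro x hx y hy hxy
        by_cases hyv : y = v
        · exact absurd (touch_of hx (show y ∈ ({v} : Set W) from hyv) hxy) ht
        by_cases h0 : y = p0
        · exact Or.inl h0
        by_cases h1 : y = p1
        · exact Or.inr (Or.inl h1)
        by_cases h2 : y = p2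
        · exact Or.inr (Or.inr (Or.inl h2))
        · exact Or.inr (Or.inr (Or.inr (comp_closed hx (by simp [*]) hxy)))

end Combi

section Combi

open scoped Classical

variable {W : Type} {H : SimpleGraph W}
variable [Finite W] {A X : Set W} {p0 p1 p2 : W} {L : W → Finset ℕ}

set_option linter.unusedSectionVars false in
lemma MS.pfree (hM : MS H A X p0 p1 p2 L) {Y : Set W} {k : W} (h1 : p1 ∈ Y)
    (hp : p1 ∉ comp H Y k) : ∀ x ∈ comp H Y k, x ≠ p0 ∧ x ≠ p1 ∧ x ≠ p2 := by
  intro x hx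
  refine ⟨?_, ?_, ?_⟩
  · rintro rfl; exact hp (comp_closed hx h1 hM.e01)
  · rintro rfl; exact hp hx
  · rintro rfl; exact hp (comp_closed hx h1 hM.e12.symm)

lemma MS.Rc (good : Good H) (hM : MS H A X p0 p1 p2 L) (IH : IHM H X.ncard) {u v : W}
    (hu : u ∈ X) (hv : v ∈ X) (au : Att H A u) (av : Att H A v) (uv : H.Adj u v)
    (n1 : p1 ≠ u ∧ p1 ≠ v) {k : W} (hk : k ∈ X \ {u, v}) (hp : p1 ∉ comp H (X \ {u, v}) k) :
    Col H X L := by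
  have h1 : p1 ∈ X \ {u, v} := by simp [hM.m1, n1]
  refine hM.R good IH hu hv au av uv (comp_self (H := H) (X \ {u, v}) k) ?_ ?_
  · intro x hx
    have h2 := hM.pfree h1 hp x hx
    have h3 := comp_sub hk hx
    simp at h3
    tauto
  · intro x hx y hy hxy
    by_cases h : y ∈ X \ {u, v}
    · exact Or.inr (Or.inr (comp_closed hx h hxy))
    · simp [hy] at h
      tauto

lemma MS.RTc (good : Good H) (hM : MS H A X p0 p1 p2 L) (IH : IHM H X.ncard) {u v w : W}
    (hu : u ∈ X) (hv : v ∈ X) (hw : w ∈ X) (uv : H.Adj u v) (uw : H.Adj u w) (vw : H.Adj v w)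
    (n1 : p1 ≠ u ∧ p1 ≠ v ∧ p1 ≠ w) {k : W} (hk : k ∈ X \ {u, v, w})
    (hp : p1 ∉ comp H (X \ {u, v, w}) k) (hS : ∀ x ∈ comp H (X \ {u, v, w}) k, ¬ Att H A x) :
    Col H X L := by
  have h1 : p1 ∈ X \ {u, v, w} := by simp [hM.m1, n1]
  refine hM.RT good IH hu hv hw uv uw vw (comp_self (H := H) (X \ {u, v, w}) k) ?_ ?_ hS
  · intro x hx
    have h2 := hM.pfree h1 hp x hx
    have h3 := comp_sub hk hx
    simp at h3
    tauto
  · intro x hx y hy hxy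
    by_cases h : y ∈ X \ {u, v, w}
    · exact Or.inr (Or.inr (Or.inr (comp_closed hx h hxy)))
    · simp [hy] at h
      tauto

lemma MS.R3c (hM : MS H A X p0 p1 p2 L) (IH : IHM H X.ncard) {u w v : W}
    (hu : u ∈ X) (hw : w ∈ X) (hv : v ∈ X) (au : Att H A u) (av : Att H A v)
    (uw : H.Adj u w) (wv : H.Adj w v) (nuv : u ≠ v) (h3 : (L u).card = 3)
    (n1 : p1 ≠ u ∧ p1 ≠ w ∧ p1 ≠ v) {k : W} (hk : k ∈ X \ {u, w, v})
    (hp : p1 ∉ comp H (X \ {u, w, v}) k) : Col H X L := by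
  have h1 : p1 ∈ X \ {u, w, v} := by simp [hM.m1, n1]
  refine hM.R3 IH hu hw hv au av uw wv nuv h3 n1 (comp_self (H := H) (X \ {u, w, v}) k) ?_ ?_
  · intro x hx
    have h2 := hM.pfree h1 hp x hx
    have h3 := comp_sub hk hx
    simp at h3
    tauto
  · intro x hx y hy hxy
    by_cases h : y ∈ X \ {u, w, v}
    · exact Or.inr (Or.inr (Or.inr (comp_closed hx h hxy)))
    · simp [hy] at h
      tauto

/-- If `p2` has no further outer neighbour, delete it. -/
lemma MS.delP (good : Good H) (hM : MS H A X p0 p1 p2 L)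
    (hno : ∀ v ∈ X, Att H A v → v ≠ p0 → v ≠ p1 → ¬ H.Adj v p2) : Col H X L := by
  obtain ⟨c2, hc2⟩ := Finset.card_eq_one.1 hM.o2
  have n02 := hM.n02
  have n01 := hM.e01.ne
  have n12 := hM.e12.ne
  have hne : ∀ p, L p ≠ L p2 → (L p).card = 1 → ∀ d ∈ L p, d ≠ c2 := by
    intro p hp hp1 d hd hdc
    obtain ⟨a, ha⟩ := Finset.card_eq_one.1 hp1
    rw [ha] at hd
    simp at hd
    exact hp (by rw [ha, hc2, ← hdc, hd])
  set L' : W → Finset ℕ := fun v => if H.Adj p2 v ∧ v ≠ p0 ∧ v ≠ p1 then L v \ {c2} else L v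
    with hL'
  have l0 : L' p0 = L p0 := by simp [hL']
  have l1 : L' p1 = L p1 := by simp [hL']
  have l5 : ∀ v ∈ X, v ≠ p0 → v ≠ p1 → H.Adj p2 v → 5 ≤ (L v).card := by
    intro v hv v0 v1 h
    exact hM.five v hv v0 v1 h.ne' fun ha => hno v hv ha v0 v1 h.symm
  refine col_del {p2} L' (fun _ => c2)
    (by rintro z rfl; simp [hc2]) (by rintro u rfl v rfl huv; exact absurd huv (H.irrefl))
    (thmT' good (A := A ∪ {p2}) (P := {p0, p1}) ?_ ⟨p0, p1, subset_rfl⟩) ?_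
  · refine ⟨conn_insert hM.conn hM.a2, ?_, ?_, ?_, ?_, ?_, ?_, ?_, ?_⟩
    · rintro a (ha | rfl) ⟨hx, hx'⟩
      · exact hM.disj a ha hx
      · exact hx' rfl
    · rintro p (rfl | rfl)
      · exact ⟨hM.m0, n02⟩
      · exact ⟨hM.m1, n12⟩
    · rintro p (rfl | rfl)
      · exact att_union.2 (Or.inl hM.a0)
      · exact att_union.2 (Or.inr (att_singleton.2 hM.e12.symm))
    · rintro p (rfl | rfl) q (rfl | rfl) h
      · exact absurd rfl h
      · exact hM.e01
      · exact hM.e01.symm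
      · exact absurd rfl h
    · rintro p (rfl | rfl) q (rfl | rfl) h
      · exact absurd rfl h
      · rw [l0, l1]; exact hM.d01
      · rw [l0, l1]; exact hM.d01.symm
      · exact absurd rfl h
    · rintro p (rfl | rfl)
      · rw [l0]; exact hM.o0
      · rw [l1]; exact hM.o1
    · rintro v ⟨hv, hv2⟩ hvP
      simp only [mem_insert_iff, mem_singleton_iff, not_or] at hvP
      simp only [hL']
      split_ifs with h
      · exact card_sdiff_ge _ _ 3 2 (l5 v hv hvP.1 hvP.2 h.1) (by simp)
      · exact hM.three v hv hvP.1 hvP.2 hv2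
    · rintro v ⟨hv, hv2⟩ hvP hva
      simp only [mem_insert_iff, mem_singleton_iff, not_or] at hvP
      rw [att_union, att_singleton] at hva
      push Not at hva
      simpa [hL', hva.2] using hM.five v hv hvP.1 hvP.2 hv2 hva.1
  · rintro v hv hv2 c hc
    by_cases hcond : H.Adj p2 v ∧ v ≠ p0 ∧ v ≠ p1
    · simp only [hL', if_pos hcond, Finset.mem_sdiff, Finset.mem_singleton] at hc
      refine ⟨hc.1, ?_⟩
      rintro z rfl -
      exact hc.2
    · simp only [hL', if_neg hcond] at hc
      refine ⟨hc, ?_⟩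
      rintro z rfl hzv
      by_cases h0 : v = p0
      · subst h0; exact hne _ (hM.d02 hzv.symm) hM.o0 c hc
      · by_cases h1 : v = p1
        · subst h1; exact hne _ hM.d12 hM.o1 c hc
        · exact absurd ⟨hzv, h0, h1⟩ hcond

/-- An outer vertex with three outer neighbours. -/
lemma MS.F2 (good : Good H) (hM : MS H A X p0 p1 p2 L) (IH : IHM H X.ncard)
    (F1 : ∀ v ∈ X, Att H A v → v ≠ p0 → v ≠ p2 → ¬ H.Adj v p1)
    {v x y z : W} (hv : v ∈ X) (v0 : v ≠ p0) (v1 : v ≠ p1) (v2 : v ≠ p2)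
    (hx : x ∈ X) (hy : y ∈ X) (hz : z ∈ X)
    (av : Att H A v) (ax : Att H A x) (ay : Att H A y) (az : Att H A z)
    (vx : H.Adj v x) (vy : H.Adj v y) (vz : H.Adj v z) (xy : x ≠ y) (xz : x ≠ z) (yz : y ≠ z) :
    Col H X L := by
  have sep : ∀ t ∈ X, Att H A t → H.Adj v t → ∀ r ∈ X \ {v, t}, ∀ s ∈ X \ {v, t},
      s ∉ comp H (X \ {v, t}) r → Col H X L := by
    intro t ht att vt r hr s hs hsr
    have t1 : p1 ≠ t := by rintro rfl; exact F1 v hv av v0 v2 vt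
    by_cases h : p1 ∈ comp H (X \ {v, t}) r
    · exact hM.Rc good IH hv ht av att vt ⟨v1.symm, t1⟩ hs fun h' =>
        hsr (comp_trans h (comp_symm hs h'))
    · exact hM.Rc good IH hv ht av att vt ⟨v1.symm, t1⟩ hr h
  have nx := vx.ne'
  have ny := vy.ne'
  have nz := vz.ne'
  rcases lemmaD good hM.conn hM.disj hv hx hy hz av ax ay az vx vy vz xy xz yz with h | h | h
  · exact sep x hx ax vx y (by simp [*, xy.symm]) z (by simp [*, xz.symm]) h
  · exact sep y hy ay vy x (by simp [*]) z (by simp [*, yz.symm]) h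
  · exact sep z hz az vz x (by simp [*]) y (by simp [*]) h

/-- First conflict of a pair deletion. -/
lemma MS.PD1 (good : Good H) (hM : MS H A X p0 p1 p2 L) (IH : IHM H X.ncard) {s t r w y : W}
    (hs : s ∈ X) (ht : t ∈ X) (hr : r ∈ X) (hw : w ∈ X) (hy : y ∈ X)
    (sP : s ≠ p1 ∧ s ≠ p2) (tP : t ≠ p1 ∧ t ≠ p2) (wP : w ≠ p1 ∧ w ≠ p2) (yP : y ≠ p1 ∧ y ≠ p2)
    (as : Att H A s) (at' : Att H A t) (ay : Att H A y) (st : H.Adj s t) (rs : H.Adj r s)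
    (hr2 : r = p2 ∨ H.Adj r p2) (sw : H.Adj s w) (tw : H.Adj t w) (wy : H.Adj w y)
    (h3 : (L s).card = 3) (ys : y ≠ s) (yt : y ≠ t) (yr : y ≠ r) (rt : r ≠ t) (rw' : r ≠ w) :
    Col H X L := by
  have nst := st.ne
  have nsw := sw.ne
  have ntw := tw.ne
  have nwy := wy.ne
  have nrs := rs.ne
  have m1 := hM.m1
  have m2 := hM.m2
  have htY : t ∈ X \ {s, w, y} := by simp [*, yt.symm, nst.symm]
  by_cases hpK : p1 ∈ comp H (X \ {s, w, y}) t
  swap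
  · exact hM.R3c IH hs hw hy as ay sw wy ys.symm h3 ⟨sP.1.symm, wP.1.symm, yP.1.symm⟩ htY hpK
  have p1Y : p1 ∈ X \ {s, t, w, y} := by simp [m1, sP.1.symm, tP.1.symm, wP.1.symm, yP.1.symm]
  have p2Y : p2 ∈ X \ {s, t, w, y} := by simp [m2, sP.2.symm, tP.2.symm, wP.2.symm, yP.2.symm]
  have rY : r ∈ X \ {s, t, w, y} := by simp [hr, nrs, rt, rw', yr.symm]
  have cB := comp_conn (H := H) p1Y
  have hBs : ∀ b ∈ comp H (X \ {s, t, w, y}) p1, b ∈ X ∧ b ≠ s ∧ b ≠ t ∧ b ≠ w ∧ b ≠ y :=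
    fun b hb => by simpa using comp_sub p1Y hb
  have p2B : p2 ∈ comp H (X \ {s, t, w, y}) p1 := comp_closed (comp_self _ _) p2Y hM.e12
  have rB : r ∈ comp H (X \ {s, t, w, y}) p1 := by
    rcases hr2 with rfl | h
    · exact p2B
    · exact comp_closed p2B rY h.symm
  have tB : Touch H (comp H (X \ {s, t, w, y}) p1) {t} := by
    obtain ⟨a, ha, b, hb, hb', hab⟩ := comp_exit (Y' := X \ {s, t, w, y})
      (comp_symm htY hpK) (fun h => (hBs _ h).2.2.1 rfl)
    have : b = t := by simp at hb hb'; tauto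
    exact ⟨a, ha, t, rfl, this ▸ hab⟩
  by_cases hT : Touch H (comp H (X \ {s, t, w, y}) p1) ({w} ∪ {y})
  · exfalso
    refine noK5 good A {s} {t} (comp H (X \ {s, t, w, y}) p1) ({w} ∪ {y}) hM.conn
      (conn_singleton _) (conn_singleton _) cB
      (conn_union (conn_singleton _) (conn_singleton _) (touch_of rfl rfl wy)) ?_
      (touch_att rfl as) (touch_att rfl at') (touch_att p2B hM.a2) (touch_att (Or.inr rfl) ay)
      (touch_of rfl rfl st) (touch_of rfl rB rs.symm) (touch_of rfl (Or.inl rfl) sw)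
      (touch_symm tB) (touch_of rfl (Or.inl rfl) tw) hT
    intro b
    have := hBs b
    have := hM.disj b
    simp only [mem_singleton_iff, mem_union]
    repeat' (first | apply And.intro | intro _)
    all_goals grind
  · have hwY : w ∈ X \ {s, t} := by simp [hw, nsw.symm, ntw.symm]
    refine hM.Rc good IH hs ht as at' st ⟨sP.1.symm, tP.1.symm⟩ hwY fun h => ?_
    obtain ⟨a, ha, b, hb, hb', hab⟩ := comp_exit (Y' := X \ {s, t, w, y})
      (comp_symm hwY h) (fun h => (hBs _ h).2.2.2.1 rfl)
    refine hT ⟨a, ha, b, ?_, hab⟩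
    simp at hb hb' ⊢
    tauto

lemma MS.PD2a (good : Good H) (hM : MS H A X p0 p1 p2 L) (IH : IHM H X.ncard) {s t w y : W}
    (hs : s ∈ X) (ht : t ∈ X) (hw : w ∈ X) (hy : y ∈ X)
    (sP : s ≠ p1 ∧ s ≠ p2) (tP : t ≠ p1 ∧ t ≠ p2) (wP : w ≠ p1 ∧ w ≠ p2) (yP : y ≠ p1 ∧ y ≠ p2)
    (as : Att H A s) (at' : Att H A t) (st : H.Adj s t)
    (sw : H.Adj s w) (tw : H.Adj t w) (sy : H.Adj s y) (ty : H.Adj t y) (wy : H.Adj w y)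
    (hno : ¬ Touch H (comp H (X \ {s, t, w, y}) p1) {w}) : Col H X L := by
  have nst := st.ne
  have nsw := sw.ne
  have ntw := tw.ne
  have nwy := wy.ne
  have nsy := sy.ne
  have nty := ty.ne
  have m1 := hM.m1
  have m2 := hM.m2
  have p1Y : p1 ∈ X \ {s, t, w, y} := by simp [m1, sP.1.symm, tP.1.symm, wP.1.symm, yP.1.symm]
  have p2Y : p2 ∈ X \ {s, t, w, y} := by simp [m2, sP.2.symm, tP.2.symm, wP.2.symm, yP.2.symm]
  have cB := comp_conn (H := H) p1Y
  have hBs : ∀ b ∈ comp H (X \ {s, t, w, y}) p1, b ∈ X ∧ b ≠ s ∧ b ≠ t ∧ b ≠ w ∧ b ≠ y :=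
    fun b hb => by simpa using comp_sub p1Y hb
  have p2B : p2 ∈ comp H (X \ {s, t, w, y}) p1 := comp_closed (comp_self _ _) p2Y hM.e12
  have hwY : w ∈ X \ {s, t, y} := by simp [hw, nsw.symm, ntw.symm, nwy]
  have hpK : p1 ∉ comp H (X \ {s, t, y}) w := by
    intro h
    obtain ⟨a, ha, b, hb, hb', hab⟩ := comp_exit (Y' := X \ {s, t, w, y})
      (comp_symm hwY h) (fun h => (hBs _ h).2.2.2.1 rfl)
    refine hno ⟨a, ha, b, ?_, hab⟩
    simp at hb hb' ⊢
    tauto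
  by_cases hS : ∃ x ∈ comp H (X \ {s, t, y}) w, Att H A x
  swap
  · push Not at hS
    exact hM.RTc good IH hs ht hy st sy ty ⟨sP.1.symm, tP.1.symm, yP.1.symm⟩ hwY hpK hS
  obtain ⟨x, hx, ax⟩ := hS
  by_cases hT : Touch H (comp H (X \ {s, t, w, y}) p1) {y}
  · exfalso
    have hKs : ∀ b ∈ comp H (X \ {s, t, y}) w, b ∈ X ∧ b ≠ s ∧ b ≠ t ∧ b ≠ y :=
      fun b hb => by simpa using comp_sub hwY hb
    have hsub : X \ {s, t, w, y} ⊆ X \ {s, t, y} := by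
      intro x; simp; tauto
    have hdis : ∀ b ∈ comp H (X \ {s, t, y}) w, b ∉ comp H (X \ {s, t, w, y}) p1 := by
      intro b hb hb'
      exact hpK (comp_trans hb (comp_symm (hsub p1Y) (comp_mono hsub hb')))
    have hdis := hdis
    obtain ⟨b1, hb1, b2, hb2, hb12⟩ := hT
    refine noK5 good {s} {t} {y} (comp H (X \ {s, t, y}) w) (A ∪ comp H (X \ {s, t, w, y}) p1)
      (conn_singleton _) (conn_singleton _) (conn_singleton _) (comp_conn hwY)
      (conn_union hM.conn cB (touch_att p2B hM.a2)) ?_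
      (touch_of rfl rfl st) (touch_of rfl rfl sy) (touch_of rfl (comp_self _ _) sw)
      (touch_symm (touch_att rfl (att_union.2 (Or.inl as))))
      (touch_of rfl rfl ty) (touch_of rfl (comp_self _ _) tw)
      (touch_symm (touch_att rfl (att_union.2 (Or.inl at'))))
      (touch_of rfl (comp_self _ _) wy.symm) (touch_of hb2 (Or.inr hb1) hb12.symm)
      (touch_symm (touch_att hx (att_union.2 (Or.inl ax))))
    intro b
    have := hBs b
    have := hKs b
    have := hdis b
    have := hM.disj b
    simp only [mem_singleton_iff, mem_union]
    repeat' (first | apply And.intro | intro _)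
    all_goals grind
  · have hwY : w ∈ X \ {s, t} := by simp [hw, nsw.symm, ntw.symm]
    refine hM.Rc good IH hs ht as at' st ⟨sP.1.symm, tP.1.symm⟩ hwY fun h => ?_
    obtain ⟨a, ha, b, hb, hb', hab⟩ := comp_exit (Y' := X \ {s, t, w, y})
      (comp_symm hwY h) (fun h => (hBs _ h).2.2.2.1 rfl)
    have hb2 : b = w ∨ b = y := by
      simp at hb hb' ⊢
      tauto
    rcases hb2 with rfl | rfl
    · exact hno ⟨a, ha, b, rfl, hab⟩
    · exact hT ⟨a, ha, b, rfl, hab⟩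

/-- Second conflict of a pair deletion. -/
lemma MS.PD2 (good : Good H) (hM : MS H A X p0 p1 p2 L) (IH : IHM H X.ncard) {s t w y : W}
    (hs : s ∈ X) (ht : t ∈ X) (hw : w ∈ X) (hy : y ∈ X)
    (sP : s ≠ p1 ∧ s ≠ p2) (tP : t ≠ p1 ∧ t ≠ p2) (wP : w ≠ p1 ∧ w ≠ p2) (yP : y ≠ p1 ∧ y ≠ p2)
    (as : Att H A s) (at' : Att H A t) (st : H.Adj s t)
    (sw : H.Adj s w) (tw : H.Adj t w) (sy : H.Adj s y) (ty : H.Adj t y) (wy : H.Adj w y) :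
    Col H X L := by
  by_cases hTw : Touch H (comp H (X \ {s, t, w, y}) p1) {w}
  swap
  · exact hM.PD2a good IH hs ht hw hy sP tP wP yP as at' st sw tw sy ty wy hTw
  by_cases hTy : Touch H (comp H (X \ {s, t, w, y}) p1) {y}
  swap
  · refine hM.PD2a good IH hs ht hy hw sP tP yP wP as at' st sy ty sw tw wy.symm ?_
    rwa [pair_comm y w]
  exfalso
  have nst := st.ne
  have nsw := sw.ne
  have ntw := tw.ne
  have nwy := wy.ne
  have nsy := sy.ne
  have nty := ty.ne
  have m1 := hM.m1
  have m2 := hM.m2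
  have p1Y : p1 ∈ X \ {s, t, w, y} := by simp [m1, sP.1.symm, tP.1.symm, wP.1.symm, yP.1.symm]
  have p2Y : p2 ∈ X \ {s, t, w, y} := by simp [m2, sP.2.symm, tP.2.symm, wP.2.symm, yP.2.symm]
  have cB := comp_conn (H := H) p1Y
  have hBs : ∀ b ∈ comp H (X \ {s, t, w, y}) p1, b ∈ X ∧ b ≠ s ∧ b ≠ t ∧ b ≠ w ∧ b ≠ y :=
    fun b hb => by simpa using comp_sub p1Y hb
  have p2B : p2 ∈ comp H (X \ {s, t, w, y}) p1 := comp_closed (comp_self _ _) p2Y hM.e12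
  obtain ⟨b1, hb1, b2, hb2, hb12⟩ := hTw
  obtain ⟨b3, hb3, b4, hb4, hb34⟩ := hTy
  refine noK5 good (A ∪ comp H (X \ {s, t, w, y}) p1) {s} {t} {w} {y}
    (conn_union hM.conn cB (touch_att p2B hM.a2))
    (conn_singleton _) (conn_singleton _) (conn_singleton _) (conn_singleton _) ?_
    (touch_att rfl (att_union.2 (Or.inl as))) (touch_att rfl (att_union.2 (Or.inl at')))
    (touch_of (Or.inr hb1) hb2 hb12) (touch_of (Or.inr hb3) hb4 hb34)
    (touch_of rfl rfl st) (touch_of rfl rfl sw) (touch_of rfl rfl sy)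
    (touch_of rfl rfl tw) (touch_of rfl rfl ty) (touch_of rfl rfl wy)
  intro b
  have := hBs b
  have := hM.disj b
  simp only [mem_singleton_iff, mem_union]
  repeat' (first | apply And.intro | intro _)
  all_goals grind

/-- The middle of a fan has no other neighbours. -/
lemma MS.fan (good : Good H) (hM : MS H A X p0 p1 p2 L) (IH : IHM H X.ncard) {v1 v2 v3 w u : W}
    (hv1 : v1 ∈ X) (hv2 : v2 ∈ X) (hv3 : v3 ∈ X) (hw : w ∈ X) (hu : u ∈ X)
    (v1P : v1 ≠ p1 ∧ v1 ≠ p2) (v2P : v2 ≠ p1 ∧ v2 ≠ p2) (v3P : v3 ≠ p1 ∧ v3 ≠ p2)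
    (wP : w ≠ p1 ∧ w ≠ p2) (a1 : Att H A v1) (a2 : Att H A v2) (a3 : Att H A v3)
    (e12 : H.Adj v1 v2) (e23 : H.Adj v2 v3) (n13 : v1 ≠ v3) (v1p2 : H.Adj v1 p2)
    (w1 : H.Adj w v1) (w2 : H.Adj w v2) (w3 : H.Adj w v3)
    (u1 : u ≠ v1) (u3 : u ≠ v3) (uw : u ≠ w) (u2 : H.Adj v2 u) : Col H X L := by
  have n12 := e12.ne
  have n23 := e23.ne
  have nw1 := w1.ne
  have nw2 := w2.ne
  have nw3 := w3.ne
  have nu2 := u2.ne'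
  have m1 := hM.m1
  have m2 := hM.m2
  have p1Y : p1 ∈ X \ {v1, v2, v3, w} := by
    simp [m1, v1P.1.symm, v2P.1.symm, v3P.1.symm, wP.1.symm]
  have p2Y : p2 ∈ X \ {v1, v2, v3, w} := by
    simp [m2, v1P.2.symm, v2P.2.symm, v3P.2.symm, wP.2.symm]
  have uY : u ∈ X \ {v1, v2, v3, w} := by simp [*]
  have uK := comp_self (H := H) (X \ {v1, v2, v3, w}) u
  have cK := comp_conn (H := H) uY
  have hKs : ∀ b ∈ comp H (X \ {v1, v2, v3, w}) u, b ∈ X ∧ b ≠ v1 ∧ b ≠ v2 ∧ b ≠ v3 ∧ b ≠ w :=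
    fun b hb => by simpa using comp_sub uY hb
  by_cases hp : p1 ∈ comp H (X \ {v1, v2, v3, w}) u
  · have p2B := comp_closed hp p2Y hM.e12
    by_cases hT : Touch H ({w} ∪ {v3}) (comp H (X \ {v1, v2, v3, w}) u)
    · exfalso
      refine noK5 good A {v2} {v1} ({w} ∪ {v3}) (comp H (X \ {v1, v2, v3, w}) u) hM.conn
        (conn_singleton _) (conn_singleton _)
        (conn_union (conn_singleton _) (conn_singleton _) (touch_of rfl rfl w3)) cK ?_
        (touch_att rfl a2) (touch_att rfl a1) (touch_att (Or.inr rfl) a3) (touch_att p2B hM.a2)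
        (touch_of rfl rfl e12.symm) (touch_of rfl (Or.inl rfl) w2.symm) (touch_of rfl uK u2)
        (touch_of rfl (Or.inl rfl) w1.symm) (touch_of rfl p2B v1p2) hT
      intro b
      have := hKs b
      have := hM.disj b
      simp only [mem_singleton_iff, mem_union]
      repeat' (first | apply And.intro | intro _)
      all_goals grind
    · have hwY : w ∈ X \ {v1, v2} := by simp [hw, nw1, nw2]
      refine hM.Rc good IH hv1 hv2 a1 a2 e12 ⟨v1P.1.symm, v2P.1.symm⟩ hwY fun h => ?_
      have hsub : X \ {v1, v2, v3, w} ⊆ X \ {v1, v2} := by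
        intro x; simp; tauto
      have h' := comp_trans (comp_mono hsub hp) (comp_symm hwY h)
      obtain ⟨a, ha, b, hb, hb', hab⟩ := comp_exit (Y' := X \ {v1, v2, v3, w})
        h' (fun h => (hKs _ h).2.2.2.2 rfl)
      refine hT ⟨b, ?_, a, ha, hab.symm⟩
      simp at hb hb' ⊢
      tauto
  · have hfree := hM.pfree p1Y hp
    by_cases hT1 : Touch H {v1} (comp H (X \ {v1, v2, v3, w}) u)
    · by_cases hT3 : Touch H {v3} (comp H (X \ {v1, v2, v3, w}) u)
      · exfalso
        refine noK33 good {v1} {v2} {v3} (comp H (X \ {v1, v2, v3, w}) u) {w} A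
          (conn_singleton _) (conn_singleton _) (conn_singleton _) cK (conn_singleton _) hM.conn ?_
          hT1 (touch_of rfl rfl w1.symm) (touch_symm (touch_att rfl a1))
          (touch_of rfl uK u2) (touch_of rfl rfl w2.symm) (touch_symm (touch_att rfl a2))
          hT3 (touch_of rfl rfl w3.symm) (touch_symm (touch_att rfl a3))
        intro b
        have := hKs b
        have := hM.disj b
        simp only [mem_singleton_iff]
        repeat' (first | apply And.intro | intro _)
        all_goals grind
      · have hcl : ∀ x ∈ comp H (X \ {v1, v2, v3, w}) u, ∀ y ∈ X, H.Adj x y →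
            y = v1 ∨ y = v2 ∨ y = w ∨ y ∈ comp H (X \ {v1, v2, v3, w}) u := by
          intro x hx y hy hxy
          by_cases h : y ∈ X \ {v1, v2, v3, w}
          · exact Or.inr (Or.inr (Or.inr (comp_closed hx h hxy)))
          · have h3 : y ≠ v3 := by rintro rfl; exact hT3 ⟨y, rfl, x, hx, hxy.symm⟩
            simp [hy] at h
            tauto
        by_cases hTw : Touch H {w} (comp H (X \ {v1, v2, v3, w}) u)
        · by_cases hS : ∃ x ∈ comp H (X \ {v1, v2, v3, w}) u, Att H A x
          · exfalso
            obtain ⟨x, hx, ax⟩ := hS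
            refine noK33 good A {v2} {w} {v1} {v3} (comp H (X \ {v1, v2, v3, w}) u) hM.conn
              (conn_singleton _) (conn_singleton _) (conn_singleton _) (conn_singleton _) cK ?_
              (touch_att rfl a1) (touch_att rfl a3) (touch_att hx ax)
              (touch_of rfl rfl e12.symm) (touch_of rfl rfl e23) (touch_of rfl uK u2)
              (touch_of rfl rfl w1) (touch_of rfl rfl w3) hTw
            intro b
            have := hKs b
            have := hM.disj b
            simp only [mem_singleton_iff]
            repeat' (first | apply And.intro | intro _)
            all_goals grind
          · push Not at hS
            refine hM.RT good IH hv1 hv2 hw e12 w1.symm w2.symm uK (fun x hx => ?_) hcl hS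
            have := hKs x hx
            have := hfree x hx
            tauto
        · refine hM.R good IH hv1 hv2 a1 a2 e12 uK (fun x hx => ?_) ?_
          · have := hKs x hx
            have := hfree x hx
            tauto
          · intro x hx y hy hxy
            have h3 : y ≠ w := by rintro rfl; exact hTw ⟨y, rfl, x, hx, hxy.symm⟩
            have := hcl x hx y hy hxy
            tauto
    · have hcl : ∀ x ∈ comp H (X \ {v1, v2, v3, w}) u, ∀ y ∈ X, H.Adj x y →
          y = v2 ∨ y = v3 ∨ y = w ∨ y ∈ comp H (X \ {v1, v2, v3, w}) u := by
        intro x hx y hy hxy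
        by_cases h : y ∈ X \ {v1, v2, v3, w}
        · exact Or.inr (Or.inr (Or.inr (comp_closed hx h hxy)))
        · have h3 : y ≠ v1 := by rintro rfl; exact hT1 ⟨y, rfl, x, hx, hxy.symm⟩
          simp [hy] at h
          tauto
      by_cases hTw : Touch H {w} (comp H (X \ {v1, v2, v3, w}) u)
      · by_cases hS : ∃ x ∈ comp H (X \ {v1, v2, v3, w}) u, Att H A x
        · exfalso
          obtain ⟨x, hx, ax⟩ := hS
          refine noK33 good A {v2} {w} {v1} {v3} (comp H (X \ {v1, v2, v3, w}) u) hM.conn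
            (conn_singleton _) (conn_singleton _) (conn_singleton _) (conn_singleton _) cK ?_
            (touch_att rfl a1) (touch_att rfl a3) (touch_att hx ax)
            (touch_of rfl rfl e12.symm) (touch_of rfl rfl e23) (touch_of rfl uK u2)
            (touch_of rfl rfl w1) (touch_of rfl rfl w3) hTw
          intro b
          have := hKs b
          have := hM.disj b
          simp only [mem_singleton_iff]
          repeat' (first | apply And.intro | intro _)
          all_goals grind
        · push Not at hS
          refine hM.RT good IH hv2 hv3 hw e23 w2.symm w3.symm uK (fun x hx => ?_) hcl hS
          have := hKs x hx
          have := hfree x hx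
          tauto
      · refine hM.R good IH hv2 hv3 a2 a3 e23 uK (fun x hx => ?_) ?_
        · have := hKs x hx
          have := hfree x hx
          tauto
        · intro x hx y hy hxy
          have h3 : y ≠ w := by rintro rfl; exact hTw ⟨y, rfl, x, hx, hxy.symm⟩
          have := hcl x hx y hy hxy
          tauto

end Combi

section Combi

open scoped Classical

variable {W : Type} {H : SimpleGraph W}
variable {A X : Set W} {p0 p1 p2 : W} {L : W → Finset ℕ}

lemma sd_cases (s : Finset ℕ) (e : ℕ) :
    (e ∉ s ∧ s \ {e} = s) ∨ (e ∈ s ∧ (s \ {e}).card + 1 = s.card) := by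
  by_cases h : e ∈ s
  · right
    rw [Finset.sdiff_singleton_eq_erase]
    exact ⟨h, Finset.card_erase_add_one h⟩
  · left
    rw [Finset.sdiff_singleton_eq_erase]
    exact ⟨h, Finset.erase_eq_of_notMem h⟩

/-- Deleting a set `Z` and removing the colours `F`. -/
lemma MS.dl (hM : MS H A X p0 p1 p2 L) {Z : Set W}
    (hZ : ∀ z ∈ Z, z ≠ p0 ∧ z ≠ p1 ∧ z ≠ p2) (cZ : Conn H (A ∪ Z)) (F : W → Finset ℕ)
    (hF : ∀ v ∈ X, v ∉ Z → (∀ z ∈ Z, ¬ H.Adj z v) → F v = ∅)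
    (h3 : ∀ v ∈ X, v ∉ Z → v ≠ p0 → v ≠ p1 → v ≠ p2 → 3 ≤ (L v \ F v).card)
    (hind : ∀ u ∈ X, u ∉ Z → u ≠ p0 → u ≠ p1 → u ≠ p2 → ∀ v ∈ X, v ∉ Z → v ≠ p0 → v ≠ p1 →
      v ≠ p2 → H.Adj u v → (L u \ F u).card = 3 → (L v \ F v).card ≠ 3)
    (hsix : ∀ x ∈ X, x ∉ Z → H.Adj x p0 → H.Adj x p1 → H.Adj x p2 → (L x \ F x).card ≠ 3) :
    MS H (A ∪ Z) (X \ Z) p0 p1 p2 (fun v => if v = p0 ∨ v = p1 ∨ v = p2 then L v else L v \ F v) := by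
  set L' : W → Finset ℕ := fun v => if v = p0 ∨ v = p1 ∨ v = p2 then L v else L v \ F v with hL'
  have l0 : L' p0 = L p0 := by simp [hL']
  have l1 : L' p1 = L p1 := by simp [hL']
  have l2 : L' p2 = L p2 := by simp [hL']
  have lv : ∀ v, v ≠ p0 → v ≠ p1 → v ≠ p2 → L' v = L v \ F v := by
    intro v h0 h1 h2
    simp [hL', h0, h1, h2]
  have o0 := hM.o0
  have o1 := hM.o1
  have o2 := hM.o2
  have hnP : ∀ v, (L' v).card = 3 → v ≠ p0 ∧ v ≠ p1 ∧ v ≠ p2 := by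
    intro v hv
    refine ⟨?_, ?_, ?_⟩
    · rintro rfl; rw [l0] at hv; omega
    · rintro rfl; rw [l1] at hv; omega
    · rintro rfl; rw [l2] at hv; omega
  refine
    { conn := cZ
      disj := ?_
      m0 := ⟨hM.m0, fun h => (hZ _ h).1 rfl⟩
      m1 := ⟨hM.m1, fun h => (hZ _ h).2.1 rfl⟩
      m2 := ⟨hM.m2, fun h => (hZ _ h).2.2 rfl⟩
      n02 := hM.n02
      e01 := hM.e01
      e12 := hM.e12
      a0 := att_union.2 (Or.inl hM.a0)
      a2 := att_union.2 (Or.inl hM.a2)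
      o0 := by rw [l0]; exact o0
      o1 := by rw [l1]; exact o1
      o2 := by rw [l2]; exact o2
      d01 := by rw [l0, l1]; exact hM.d01
      d12 := by rw [l1, l2]; exact hM.d12
      d02 := by rw [l0, l2]; exact hM.d02
      three := ?_
      five := ?_
      ind := ?_
      six := ?_ }
  · rintro a (ha | ha) hx
    · exact hM.disj a ha hx.1
    · exact hx.2 ha
  · rintro v ⟨hv, hvZ⟩ v0 v1 v2
    rw [lv v v0 v1 v2]
    exact h3 v hv hvZ v0 v1 v2
  · rintro v ⟨hv, hvZ⟩ v0 v1 v2 ha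
    rw [att_union, not_or] at ha
    rw [lv v v0 v1 v2, hF v hv hvZ fun z hz h => ha.2 ⟨z, hz, h⟩, Finset.sdiff_empty]
    exact hM.five v hv v0 v1 v2 ha.1
  · rintro u ⟨hu, huZ⟩ v ⟨hv, hvZ⟩ huv h1 h2
    obtain ⟨u0, u1, u2⟩ := hnP u h1
    obtain ⟨v0, v1, v2⟩ := hnP v h2
    rw [lv u u0 u1 u2] at h1
    rw [lv v v0 v1 v2] at h2
    exact hind u hu huZ u0 u1 u2 v hv hvZ v0 v1 v2 huv h1 h2
  · rintro x ⟨hx, hxZ⟩ x0 x1 x2 he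
    rw [lv x x0.ne x1.ne x2.ne, l0, l1, l2] at he
    have h4 := h3 x hx hxZ x0.ne x1.ne x2.ne
    refine hsix x hx hxZ x0 x1 x2 ?_
    have u1 := Finset.card_union_le (L p0 ∪ L p1) (L p2)
    have u2 := Finset.card_union_le (L p0) (L p1)
    rw [← he] at u1
    omega

variable [Finite W]

/-- Deleting a single outer vertex. -/
lemma MS.D1 (hM : MS H A X p0 p1 p2 L) (IH : IHM H X.ncard)
    (F1 : ∀ v ∈ X, Att H A v → v ≠ p0 → v ≠ p2 → ¬ H.Adj v p1)
    {z : W} (hz : z ∈ X) (az : Att H A z) (z0 : z ≠ p0) (z1 : z ≠ p1) (z2 : z ≠ p2)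
    {e : ℕ} (he : e ∈ L z) (e0 : H.Adj z p0 → e ∉ L p0) (e2 : H.Adj z p2 → e ∉ L p2)
    (hS : ∀ u ∈ X, Att H A u → u ≠ p0 → u ≠ p1 → u ≠ p2 → H.Adj z u → e ∈ L u → 4 ≤ (L u).card ∧
      ∀ v ∈ X, Att H A v → v ≠ p0 → v ≠ p1 → v ≠ p2 → v ≠ z → H.Adj u v →
        (L v).card ≠ 3 ∧ ¬ H.Adj z v) : Col H X L := by
  have key : ∀ v ∈ X, v ≠ z → v ≠ p0 → v ≠ p1 → v ≠ p2 →
      3 ≤ (L v \ (if H.Adj z v then {e} else ∅)).card ∧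
      ((L v \ (if H.Adj z v then {e} else ∅)).card = 3 → Att H A v ∧
        ((L v).card = 3 ∨ H.Adj z v ∧ e ∈ L v)) := by
    intro v hv hvz v0 v1 v2
    have g3 := hM.three v hv v0 v1 v2
    have g5 := hM.five v hv v0 v1 v2
    by_cases hzv : H.Adj z v
    · simp only [hzv, if_true, true_and]
      rcases sd_cases (L v) e with ⟨h1, h2⟩ | ⟨h1, h2⟩
      · rw [h2]
        refine ⟨g3, fun h => ⟨?_, Or.inl h⟩⟩
        by_contra ha
        have := g5 ha
        omega
      · by_cases ha : Att H A v
        · have := (hS v hv ha v0 v1 v2 hzv h1).1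
          exact ⟨by omega, fun _ => ⟨ha, Or.inr h1⟩⟩
        · have := g5 ha
          exact ⟨by omega, fun _ => by omega⟩
    · simp only [hzv, if_false, Finset.sdiff_empty]
      refine ⟨g3, fun h => ⟨?_, Or.inl h⟩⟩
      by_contra ha
      have := g5 ha
      omega
  refine col_del {z} _ (fun _ => e) (by rintro u rfl; exact he)
    (by rintro a rfl b rfl hab; exact absurd hab H.irrefl)
    (IH _ _ _ _ _ _ (ncard_lt sdiff_subset hz (fun h => h.2 rfl))
      (hM.dl (Z := {z}) (by rintro u rfl; exact ⟨z0, z1, z2⟩) (conn_insert hM.conn az)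
        (fun v => if H.Adj z v then {e} else ∅) ?_ ?_ ?_ ?_)) ?_
  · intro v hv hvz h
    simp [h z rfl]
  · intro v hv hvz v0 v1 v2
    exact (key v hv hvz v0 v1 v2).1
  · intro u hu huz u0 u1 u2 v hv hvz v0 v1 v2 huv hu3 hv3
    obtain ⟨au, hu'⟩ := (key u hu huz u0 u1 u2).2 hu3
    obtain ⟨av, hv'⟩ := (key v hv hvz v0 v1 v2).2 hv3
    have hu'' : (L u).card = 3 ∧ (L v).card = 3 ∨ (H.Adj z u ∧ e ∈ L u) ∨ (H.Adj z v ∧ e ∈ L v) := by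
      tauto
    rcases hu'' with ⟨h1, h2⟩ | ⟨h1, h2⟩ | ⟨h1, h2⟩
    · exact hM.ind u hu v hv huv h1 h2
    · have := (hS u hu au u0 u1 u2 h1 h2).2 v hv av v0 v1 v2 hvz huv
      tauto
    · have := (hS v hv av v0 v1 v2 h1 h2).2 u hu au u0 u1 u2 huz huv.symm
      tauto
  · intro x hx hxz x0 x1 x2 h3
    exact F1 x hx ((key x hx hxz x0.ne x1.ne x2.ne).2 h3).1 x0.ne x2.ne x1
  · intro v hv hvz d hd
    by_cases hP : v = p0 ∨ v = p1 ∨ v = p2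
    · rw [if_pos hP] at hd
      refine ⟨hd, ?_⟩
      rintro u rfl huv hde
      subst hde
      rcases hP with rfl | rfl | rfl
      · exact e0 huv hd
      · exact F1 u hz az z0 z2 huv
      · exact e2 huv hd
    · rw [if_neg hP, Finset.mem_sdiff] at hd
      refine ⟨hd.1, ?_⟩
      rintro u rfl huv hde
      simp [huv, hde] at hd

/-- Deleting three consecutive outer vertices, the middle one being coloured last. -/
lemma MS.D3 (hM : MS H A X p0 p1 p2 L) (IH : IHM H X.ncard)
    (F1 : ∀ v ∈ X, Att H A v → v ≠ p0 → v ≠ p2 → ¬ H.Adj v p1)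
    {x y z w : W} (hx : x ∈ X) (hy : y ∈ X) (hz : z ∈ X)
    (ax : Att H A x) (ay : Att H A y) (az : Att H A z)
    (x0 : x ≠ p0) (x1 : x ≠ p1) (x2 : x ≠ p2) (y0 : y ≠ p0) (y1 : y ≠ p1) (y2 : y ≠ p2)
    (z0 : z ≠ p0) (z1 : z ≠ p1) (z2 : z ≠ p2)
    {e : ℕ} (hex : e ∈ L x) (hez : e ∈ L z) (hxz : ¬ H.Adj x z) (xy : H.Adj x y) (yz : H.Adj y z)
    (ex0 : H.Adj x p0 → e ∉ L p0) (ex2 : H.Adj x p2 → e ∉ L p2)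
    (ez0 : H.Adj z p0 → e ∉ L p0) (ez2 : H.Adj z p2 → e ∉ L p2)
    (hyw : ∀ u ∈ X, H.Adj y u → u = x ∨ u = z ∨ u = w) (hy3 : 3 ≤ (L y).card)
    (hS : ∀ u ∈ X, Att H A u → u ≠ p0 → u ≠ p1 → u ≠ p2 → u ≠ y → H.Adj x u ∨ H.Adj z u → e ∉ L u) :
    Col H X L := by
  have nxy := xy.ne
  have nyz := yz.ne
  have key : ∀ v ∈ X, v ∉ ({x, y, z} : Set W) → v ≠ p0 → v ≠ p1 → v ≠ p2 →
      3 ≤ (L v \ (if H.Adj x v ∨ H.Adj z v then {e} else ∅)).card ∧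
      ((L v \ (if H.Adj x v ∨ H.Adj z v then {e} else ∅)).card = 3 → Att H A v ∧
        (L v).card = 3) := by
    intro v hv hvz v0 v1 v2
    simp only [mem_insert_iff, mem_singleton_iff, not_or] at hvz
    have g3 := hM.three v hv v0 v1 v2
    have g5 := hM.five v hv v0 v1 v2
    by_cases hzv : H.Adj x v ∨ H.Adj z v
    · simp only [hzv, if_true]
      rcases sd_cases (L v) e with ⟨h1, h2⟩ | ⟨h1, h2⟩
      · rw [h2]
        refine ⟨g3, fun h => ⟨?_, h⟩⟩
        by_contra ha
        have := g5 ha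
        omega
      · by_cases ha : Att H A v
        · exact absurd h1 (hS v hv ha v0 v1 v2 hvz.2.1 hzv)
        · have := g5 ha
          exact ⟨by omega, fun _ => by omega⟩
    · simp only [hzv, if_false, Finset.sdiff_empty]
      refine ⟨g3, fun h => ⟨?_, h⟩⟩
      by_contra ha
      have := g5 ha
      omega
  have hset : A ∪ {x, y, z} = ((A ∪ {x}) ∪ {y}) ∪ {z} := by
    ext u
    simp only [mem_union, mem_insert_iff, mem_singleton_iff, or_assoc]
  have hZ : ∀ u ∈ ({x, y, z} : Set W), u ≠ p0 ∧ u ≠ p1 ∧ u ≠ p2 := by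
    intro u hu
    rcases hu with h | h | h
    · rw [h]; exact ⟨x0, x1, x2⟩
    · rw [h]; exact ⟨y0, y1, y2⟩
    · rw [mem_singleton_iff.1 h]; exact ⟨z0, z1, z2⟩
  have cZ : Conn H (A ∪ {x, y, z}) := by
    rw [hset]
    refine conn_insert (conn_insert (conn_insert hM.conn ax) ?_) ?_
    · exact att_union.2 (Or.inl ay)
    · exact att_union.2 (Or.inl (att_union.2 (Or.inl az)))
  have hlt : (X \ {x, y, z}).ncard < X.ncard := ncard_lt sdiff_subset hy (fun h => h.2 (by simp))
  have hMS := hM.dl hZ cZ (fun v => if H.Adj x v ∨ H.Adj z v then {e} else ∅) ?_ ?_ ?_ ?_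
  · obtain ⟨d, d1, d2⟩ := IH _ _ _ _ _ _ hlt hMS
    obtain ⟨g, hg, hg'⟩ := exists_mem_sdiff (L y) {e, d w}
      (lt_of_le_of_lt Finset.card_le_two (by omega))
    simp only [Finset.mem_insert, Finset.mem_singleton, not_or] at hg'
    refine col_del {x, y, z} (fun v => {d v}) (fun v => if v = y then g else e) ?_ ?_
      ⟨d, by simp, d2⟩ ?_
    · rintro u (rfl | rfl | rfl)
      · simpa [nxy] using hex
      · simpa using hg
      · simpa [nyz.symm] using hez
    · have := nyz.symm
      have := Ne.symm hg'.1
      rintro u (rfl | rfl | rfl) v (rfl | rfl | rfl) huv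
      · exact absurd huv H.irrefl
      · simpa [*] using this
      · exact absurd huv hxz
      · simpa [*] using hg'.1
      · exact absurd huv H.irrefl
      · simpa [*] using hg'.1
      · exact absurd huv.symm hxz
      · simpa [*] using this
      · exact absurd huv H.irrefl
    · intro v hv hvz c hc
      simp only [Finset.mem_singleton] at hc
      subst hc
      have hd := d1 v ⟨hv, hvz⟩
      beta_reduce at hd
      simp only [mem_insert_iff, mem_singleton_iff, not_or] at hvz
      have hmain : d v ∈ L v ∧ (H.Adj x v ∨ H.Adj z v → d v ≠ e) := by
        by_cases hP : v = p0 ∨ v = p1 ∨ v = p2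
        · rw [if_pos hP] at hd
          refine ⟨hd, ?_⟩
          rintro h hde
          rw [hde] at hd
          rcases hP with rfl | rfl | rfl
          · rcases h with h | h
            · exact ex0 h hd
            · exact ez0 h hd
          · rcases h with h | h
            · exact F1 x hx ax x0 x2 h
            · exact F1 z hz az z0 z2 h
          · rcases h with h | h
            · exact ex2 h hd
            · exact ez2 h hd
        · rw [if_neg hP, Finset.mem_sdiff] at hd
          refine ⟨hd.1, ?_⟩
          intro h hde
          simp [h, hde] at hd
      refine ⟨hmain.1, ?_⟩
      rintro u (rfl | rfl | rfl) huv
      · simpa [nxy] using hmain.2 (Or.inl huv)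
      · have hvw : v = w := by
          rcases hyw v hv huv with h | h | h
          · exact absurd h hvz.1
          · exact absurd h hvz.2.2
          · exact h
        subst hvw
        simpa using Ne.symm hg'.2
      · simpa [nyz.symm] using hmain.2 (Or.inr huv)
  · intro v hv hvz h
    simp [h x (by simp), h z (by simp)]
  · intro v hv hvz v0 v1 v2
    exact (key v hv hvz v0 v1 v2).1
  · intro u hu huz u0 u1 u2 v hv hvz v0 v1 v2 huv hu3 hv3
    exact hM.ind u hu v hv huv ((key u hu huz u0 u1 u2).2 hu3).2 ((key v hv hvz v0 v1 v2).2 hv3).2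
  · intro u hu hxz u0 u1 u2 h3
    exact F1 u hu ((key u hu hxz u0.ne u1.ne u2.ne).2 h3).1 u0.ne u2.ne u1

/-- Deleting two adjacent outer vertices. -/
lemma MS.D2 (good : Good H) (hM : MS H A X p0 p1 p2 L) (IH : IHM H X.ncard)
    (F1 : ∀ v ∈ X, Att H A v → v ≠ p0 → v ≠ p2 → ¬ H.Adj v p1)
    {s t r : W} (hs : s ∈ X) (ht : t ∈ X) (hr : r ∈ X)
    (as : Att H A s) (at' : Att H A t) (ar : Att H A r)
    (s0 : s ≠ p0) (s1 : s ≠ p1) (s2 : s ≠ p2) (t0 : t ≠ p0) (t1 : t ≠ p1) (t2 : t ≠ p2)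
    (st : H.Adj s t) (rs : H.Adj r s) (hr2 : r = p2 ∨ H.Adj r p2) (rt : r ≠ t) (r0 : r ≠ p0)
    (h3 : (L s).card = 3)
    {f g : ℕ} (hf : f ∈ L s) (hg : g ∈ L t) (hfg : f ≠ g)
    (f0 : H.Adj s p0 → f ∉ L p0) (f2 : H.Adj s p2 → f ∉ L p2)
    (g0 : H.Adj t p0 → g ∉ L p0) (g2 : H.Adj t p2 → g ∉ L p2)
    (hS : ∀ u ∈ X, Att H A u → u ≠ p0 → u ≠ p1 → u ≠ p2 → u ≠ s → u ≠ t →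
      (H.Adj s u ∧ f ∈ L u) ∨ (H.Adj t u ∧ g ∈ L u) → u = r ∧ ¬ H.Adj t r ∧ 4 ≤ (L r).card ∧
        (∀ v ∈ X, Att H A v → v ≠ p0 → v ≠ p1 → v ≠ p2 → H.Adj r v → v = s ∨ v = t) ∧
        (∀ w ∈ X, ¬ Att H A w → w ≠ p0 → w ≠ p1 → w ≠ p2 → H.Adj s w → H.Adj t w → ¬ H.Adj w r)) :
    Col H X L := by
  by_contra hcon
  have hr3 : (L r).card ≠ 3 := hM.ind s hs r hr rs.symm h3
  set F : W → Finset ℕ := fun v => (if H.Adj s v then {f} else ∅) ∪ (if H.Adj t v then {g} else ∅)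
    with hF
  have key : ∀ v ∈ X, v ∉ ({s, t} : Set W) → v ≠ p0 → v ≠ p1 → v ≠ p2 →
      3 ≤ (L v \ F v).card ∧ ((L v \ F v).card = 3 →
        (Att H A v ∧ (L v).card = 3 ∧ v ≠ r) ∨ (v = r ∧ ((H.Adj s v ∧ f ∈ L v) ∨ (H.Adj t v ∧ g ∈ L v))) ∨
        (¬ Att H A v ∧ H.Adj s v ∧ H.Adj t v)) := by
    intro v hv hvz v0 v1 v2
    simp only [mem_insert_iff, mem_singleton_iff, not_or] at hvz
    have e3 := hM.three v hv v0 v1 v2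
    by_cases ha : Att H A v
    · by_cases hch : (H.Adj s v ∧ f ∈ L v) ∨ (H.Adj t v ∧ g ∈ L v)
      · obtain ⟨h1, h2, h4, -, -⟩ := hS v hv ha v0 v1 v2 hvz.1 hvz.2 hch
        refine ⟨?_, fun _ => Or.inr (Or.inl ⟨h1, hch⟩)⟩
        subst h1
        have : F v = {f} := by simp [hF, h2, rs.symm]
        rw [this]
        exact card_sdiff_ge _ _ 3 1 h4 (by simp)
      · have : L v \ F v = L v := by
          rw [Finset.sdiff_eq_self_iff_disjoint, Finset.disjoint_left]
          intro c hc hcF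
          simp only [hF, Finset.mem_union] at hcF
          rcases hcF with h | h
          · split_ifs at h with h'
            · simp at h; exact hch (Or.inl ⟨h', h ▸ hc⟩)
            · simp at h
          · split_ifs at h with h'
            · simp at h; exact hch (Or.inr ⟨h', h ▸ hc⟩)
            · simp at h
        rw [this]
        exact ⟨e3, fun h => Or.inl ⟨ha, h, by rintro rfl; exact hr3 h⟩⟩
    · have e5 := hM.five v hv v0 v1 v2 ha
      refine ⟨card_sdiff_ge _ _ 3 2 e5 ?_, fun h => Or.inr (Or.inr ⟨ha, ?_⟩)⟩
      · refine (Finset.card_union_le _ _).trans ?_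
        split_ifs <;> simp
      · by_contra hn
        have hc1 : (F v).card ≤ 1 := by
          simp only [hF]
          by_cases h1 : H.Adj s v
          · have h2 : ¬ H.Adj t v := fun h => hn ⟨h1, h⟩
            simp [h1, h2]
          · by_cases h2 : H.Adj t v <;> simp [h1, h2]
        have := card_sdiff_ge (L v) (F v) 4 1 e5 hc1
        omega
  -- conflicts
  have conf1 : ∀ w ∈ X, ¬ Att H A w → w ≠ p0 → w ≠ p1 → w ≠ p2 → H.Adj s w → H.Adj t w →
      ∀ y ∈ X, Att H A y → y ≠ s → y ≠ t → y ≠ r → y ≠ p1 → y ≠ p2 → ¬ H.Adj w y := by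
    intro w hw aw w0 w1 w2 sw tw y hy ay ys yt yr y1 y2 wy
    exact hcon (hM.PD1 good IH hs ht hr hw hy ⟨s1, s2⟩ ⟨t1, t2⟩ ⟨w1, w2⟩ ⟨y1, y2⟩ as at' ay st rs hr2
      sw tw wy h3 ys yt yr rt (by rintro rfl; exact aw ar))
  have conf2 : ∀ w ∈ X, w ≠ p0 → w ≠ p1 → w ≠ p2 → H.Adj s w → H.Adj t w →
      ∀ y ∈ X, y ≠ p1 → y ≠ p2 → H.Adj s y → H.Adj t y → ¬ H.Adj w y := by
    intro w hw w0 w1 w2 sw tw y hy y1 y2 sy ty wy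
    exact hcon (hM.PD2 good IH hs ht hw hy ⟨s1, s2⟩ ⟨t1, t2⟩ ⟨w1, w2⟩ ⟨y1, y2⟩ as at' st sw tw sy ty wy)
  have nst := st.ne
  have hset : A ∪ {s, t} = (A ∪ {s}) ∪ {t} := by
    ext u
    simp only [mem_union, mem_insert_iff, mem_singleton_iff, or_assoc]
  have half : ∀ u ∈ X, u ∉ ({s, t} : Set W) → u ≠ p0 → u ≠ p1 → u ≠ p2 → ∀ v ∈ X,
      v ∉ ({s, t} : Set W) → v ≠ p0 → v ≠ p1 → v ≠ p2 → H.Adj u v →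
      (¬ Att H A u ∧ H.Adj s u ∧ H.Adj t u) → (L v \ F v).card = 3 → False := by
    intro u hu huz u0 u1 u2 v hv hvz v0 v1 v2 huv ⟨au, su, tu⟩ hv3
    rcases (key v hv hvz v0 v1 v2).2 hv3 with ⟨av, h, hvr⟩ | ⟨h1, h2⟩ | ⟨av, sv, tv⟩
    · simp only [mem_insert_iff, mem_singleton_iff, not_or] at hvz
      exact conf1 u hu au u0 u1 u2 su tu v hv av hvz.1 hvz.2 hvr v1 v2 huv
    · simp only [mem_insert_iff, mem_singleton_iff, not_or] at hvz
      subst h1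
      exact (hS v hv ar v0 v1 v2 hvz.1 hvz.2 h2).2.2.2.2 u hu au u0 u1 u2 su tu huv
    · exact conf2 u hu u0 u1 u2 su tu v hv v1 v2 sv tv huv
  have halfr : ∀ u ∈ X, u ∉ ({s, t} : Set W) → u ≠ p0 → u ≠ p1 → u ≠ p2 → ∀ v ∈ X,
      v ∉ ({s, t} : Set W) → v ≠ p0 → v ≠ p1 → v ≠ p2 → H.Adj u v →
      (u = r ∧ ((H.Adj s u ∧ f ∈ L u) ∨ (H.Adj t u ∧ g ∈ L u))) → Att H A v → False := by
    intro u hu huz u0 u1 u2 v hv hvz v0 v1 v2 huv ⟨hur, hch⟩ av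
    subst hur
    simp only [mem_insert_iff, mem_singleton_iff, not_or] at hvz huz
    have := (hS u hu ar u0 u1 u2 huz.1 huz.2 hch).2.2.2.1 v hv av v0 v1 v2 huv
    tauto
  have hZ : ∀ u ∈ ({s, t} : Set W), u ≠ p0 ∧ u ≠ p1 ∧ u ≠ p2 := by
    intro u hu
    rcases hu with h | h
    · rw [h]; exact ⟨s0, s1, s2⟩
    · rw [mem_singleton_iff.1 h]; exact ⟨t0, t1, t2⟩
  have cZ : Conn H (A ∪ {s, t}) := by
    rw [hset]
    exact conn_insert (conn_insert hM.conn as) (att_union.2 (Or.inl at'))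
  have hlt : (X \ {s, t}).ncard < X.ncard := ncard_lt sdiff_subset hs (fun h => h.2 (by simp))
  have hMS := hM.dl hZ cZ F ?_ ?_ ?_ ?_
  · have hC := IH _ _ _ _ _ _ hlt hMS
    refine hcon (col_del {s, t} _ (fun v => if v = s then f else g) ?_ ?_ hC ?_)
    · rintro u (rfl | rfl)
      · simpa using hf
      · simpa [nst.symm] using hg
    · rintro u (rfl | rfl) v (rfl | rfl) huv
      · exact absurd huv H.irrefl
      · simpa [nst.symm] using hfg
      · simpa [nst.symm] using hfg.symm
      · exact absurd huv H.irrefl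
    · intro v hv hvz d hd
      by_cases hP : v = p0 ∨ v = p1 ∨ v = p2
      · rw [if_pos hP] at hd
        refine ⟨hd, ?_⟩
        rintro u (rfl | rfl) huv hde
        · simp only [if_true] at hde
          subst hde
          rcases hP with rfl | rfl | rfl
          · exact f0 huv hd
          · exact F1 u hs as s0 s2 huv
          · exact f2 huv hd
        · simp only [nst.symm, if_false] at hde
          subst hde
          rcases hP with rfl | rfl | rfl
          · exact g0 huv hd
          · exact F1 u ht at' t0 t2 huv
          · exact g2 huv hd
      · rw [if_neg hP, Finset.mem_sdiff] at hd
        refine ⟨hd.1, ?_⟩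
        rintro u (rfl | rfl) huv hde
        · simp only [if_true] at hde
          subst hde
          simp [hF, huv] at hd
        · simp only [nst.symm, if_false] at hde
          subst hde
          simp [hF, huv] at hd
  · intro v hv hvz h
    simp [hF, h s (by simp), h t (by simp)]
  · intro v hv hvz v0 v1 v2
    exact (key v hv hvz v0 v1 v2).1
  · intro u hu huz u0 u1 u2 v hv hvz v0 v1 v2 huv hu3 hv3
    rcases (key u hu huz u0 u1 u2).2 hu3 with ⟨au, h, hur⟩ | h | h
    · rcases (key v hv hvz v0 v1 v2).2 hv3 with ⟨av, h', hvr⟩ | h' | h'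
      · exact hM.ind u hu v hv huv h h'
      · exact halfr v hv hvz v0 v1 v2 u hu huz u0 u1 u2 huv.symm h' au
      · exact half v hv hvz v0 v1 v2 u hu huz u0 u1 u2 huv.symm h' hu3
    · rcases (key v hv hvz v0 v1 v2).2 hv3 with ⟨av, h', hvr⟩ | h' | h'
      · exact halfr u hu huz u0 u1 u2 v hv hvz v0 v1 v2 huv h av
      · exact huv.ne (h.1.trans h'.1.symm)
      · exact half v hv hvz v0 v1 v2 u hu huz u0 u1 u2 huv.symm h' hu3
    · exact half u hu huz u0 u1 u2 v hv hvz v0 v1 v2 huv h hv3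
  · intro x hx hxz x0 x1 x2 hx3
    rcases (key x hx hxz x0.ne x1.ne x2.ne).2 hx3 with ⟨ax, h, -⟩ | ⟨h, -⟩ | ⟨ax, sx, tx⟩
    · exact F1 x hx ax x0.ne x2.ne x1
    · subst h
      exact F1 x hx ar x0.ne x2.ne x1
    · exact conf1 x hx ax x0.ne x1.ne x2.ne sx tx p0 hM.m0 hM.a0 s0.symm t0.symm r0.symm
        hM.e01.ne hM.n02 x0

end Combi

section Combi

open scoped Classical

variable {W : Type} {H : SimpleGraph W}
variable {A X : Set W} {p0 p1 p2 : W} {L : W → Finset ℕ}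
variable [Finite W]

lemma MS.step (good : Good H) (hM : MS H A X p0 p1 p2 L) (IH : IHM H X.ncard) : Col H X L := by
  by_contra hcon
  have F1 : ∀ v ∈ X, Att H A v → v ≠ p0 → v ≠ p2 → ¬ H.Adj v p1 :=
    fun v hv av v0 v2 h => hcon (hM.R4 good IH hv av v0 v2 h)
  have N : ∀ v ∈ X, Att H A v → v ≠ p0 → v ≠ p1 → v ≠ p2 → ∀ x ∈ X, Att H A x → H.Adj v x →
      ∀ y ∈ X, Att H A y → H.Adj v y → x ≠ y → ∀ z ∈ X, Att H A z → H.Adj v z → z = x ∨ z = y := by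
    intro v hv av v0 v1 v2 x hx ax vx y hy ay vy xy z hz az vz
    by_contra hn
    rw [not_or] at hn
    exact hcon (hM.F2 good IH F1 hv v0 v1 v2 hx hy hz av ax ay az vx vy vz xy
      (Ne.symm hn.1) (Ne.symm hn.2))
  have hex : ∃ v ∈ X, Att H A v ∧ v ≠ p0 ∧ v ≠ p1 ∧ H.Adj v p2 := by
    by_contra hn
    exact hcon (hM.delP good fun v hv av v0 v1 h => hn ⟨v, hv, av, v0, v1, h⟩)
  obtain ⟨v1, hv1, a1, v10, v11, v1p⟩ := hex
  have v12 : v1 ≠ p2 := v1p.ne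
  have o0 := hM.o0
  have o2 := hM.o2
  have pick : ∀ v ∈ X, v ≠ p0 → v ≠ p1 → v ≠ p2 → ∃ c ∈ L v, c ∉ L p0 ∧ c ∉ L p2 := by
    intro v hv h0 h1 h2
    have h3 := hM.three v hv h0 h1 h2
    have hu := Finset.card_union_le (L p0) (L p2)
    obtain ⟨c, hc, hc'⟩ := exists_mem_sdiff (L v) (L p0 ∪ L p2) (by omega)
    rw [Finset.mem_union, not_or] at hc'
    exact ⟨c, hc, hc'⟩
  by_cases hI : ∃ v2 ∈ X, Att H A v2 ∧ v2 ≠ p0 ∧ v2 ≠ p1 ∧ v2 ≠ p2 ∧ H.Adj v1 v2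
  swap
  · obtain ⟨c, hc, c0, c2⟩ := pick v1 hv1 v10 v11 v12
    exact hcon (hM.D1 IH F1 hv1 a1 v10 v11 v12 hc (fun _ => c0) (fun _ => c2)
      fun u hu au u0 u1 u2 h _ => absurd ⟨u, hu, au, u0, u1, u2, h⟩ hI)
  obtain ⟨v2, hv2, a2, v20, v21, v22, e12⟩ := hI
  have n1 := N v1 hv1 a1 v10 v11 v12 p2 hM.m2 hM.a2 v1p v2 hv2 a2 e12 (Ne.symm v22)
  have v1p0 : ¬ H.Adj v1 p0 := by
    intro h
    rcases n1 p0 hM.m0 hM.a0 h with h | h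
    · exact hM.n02 h
    · exact v20 h.symm
  have n1' : ∀ u ∈ X, Att H A u → u ≠ p2 → H.Adj v1 u → u = v2 :=
    fun u hu au u2 h => (n1 u hu au h).resolve_left u2
  have t1 := hM.three v1 hv1 v10 v11 v12
  have t2 := hM.three v2 hv2 v20 v21 v22
  obtain ⟨c, hc, -, c2⟩ := pick v1 hv1 v10 v11 v12
  by_cases h24 : 4 ≤ (L v2).card
  · by_cases hb : ∃ v3 ∈ X, Att H A v3 ∧ v3 ≠ p0 ∧ v3 ≠ p1 ∧ v3 ≠ p2 ∧ v3 ≠ v1 ∧ H.Adj v2 v3 ∧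
        (L v3).card = 3
    swap
    · refine hcon (hM.D1 IH F1 hv1 a1 v10 v11 v12 hc (fun h => absurd h v1p0) (fun _ => c2) ?_)
      intro u hu au u0 u1 u2 h _
      rw [n1' u hu au u2 h]
      refine ⟨h24, fun v hv av w0 w1 w2 wz huv => ⟨fun h3 => hb ⟨v, hv, av, w0, w1, w2, wz, huv, h3⟩,
        fun h1 => ?_⟩⟩
      exact huv.ne (n1' v hv av w2 h1).symm
    obtain ⟨v3, hv3, a3, v30, v31, v32, v3n, e23, h33⟩ := hb
    have n2 := N v2 hv2 a2 v20 v21 v22 v1 hv1 a1 e12.symm v3 hv3 a3 e23 (Ne.symm v3n)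
    have v2p0 : ¬ H.Adj v2 p0 := by
      intro h
      rcases n2 p0 hM.m0 hM.a0 h with h | h
      · exact v10 h.symm
      · exact v30 h.symm
    have v2p2 : ¬ H.Adj v2 p2 := by
      intro h
      rcases n2 p2 hM.m2 hM.a2 h with h | h
      · exact v12 h.symm
      · exact v32 h.symm
    obtain ⟨e, he, he3⟩ := exists_mem_sdiff (L v2) (L v3) (by omega)
    by_cases hd : e ∈ L v1 ∧ (L v1).card = 3
    swap
    · refine hcon (hM.D1 IH F1 hv2 a2 v20 v21 v22 he (fun h => absurd h v2p0)
        (fun h => absurd h v2p2) ?_)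
      intro u hu au u0 u1 u2 h heu
      rcases n2 u hu au h with rfl | rfl
      · refine ⟨?_, fun v hv av w0 w1 w2 wz huv => absurd (n1' v hv av w2 huv) wz⟩
        have : (L u).card ≠ 3 := fun h => hd ⟨heu, h⟩
        omega
      · exact absurd heu he3
    · have hu := Finset.card_union_le {e} (L p2)
      rw [Finset.card_singleton] at hu
      obtain ⟨f, hf, hf'⟩ := exists_mem_sdiff (L v1) ({e} ∪ L p2) (by omega)
      rw [Finset.mem_union, Finset.mem_singleton, not_or] at hf'
      refine hcon (hM.D2 good IH F1 hv1 hv2 hM.m2 a1 a2 hM.a2 v10 v11 v12 v20 v21 v22 e12 v1p.symm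
        (Or.inl rfl) (Ne.symm v22) (Ne.symm hM.n02) hd.2 hf he hf'.1 (fun h => absurd h v1p0)
        (fun _ => hf'.2) (fun h => absurd h v2p0) (fun h => absurd h v2p2) ?_)
      rintro u hu au u0 u1 u2 us ut (⟨h, -⟩ | ⟨h, heu⟩)
      · exact absurd (n1' u hu au u2 h) ut
      · rcases n2 u hu au h with rfl | rfl
        · exact absurd rfl us
        · exact absurd heu he3
  have h23 : (L v2).card = 3 := by omega
  have h14 : 4 ≤ (L v1).card := by
    have := hM.ind v2 hv2 v1 hv1 e12.symm h23
    omega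
  by_cases hc1 : ∃ v3 ∈ X, Att H A v3 ∧ v3 ≠ p0 ∧ v3 ≠ p1 ∧ v3 ≠ p2 ∧ v3 ≠ v1 ∧ H.Adj v2 v3
  swap
  · obtain ⟨b, hb, b0, b2⟩ := pick v2 hv2 v20 v21 v22
    refine hcon (hM.D1 IH F1 hv2 a2 v20 v21 v22 hb (fun _ => b0) (fun _ => b2) ?_)
    intro u hu au u0 u1 u2 h _
    by_cases huv : u = v1
    · subst huv
      exact ⟨h14, fun v hv av w0 w1 w2 wz huv => absurd (n1' v hv av w2 huv) wz⟩
    · exact absurd ⟨u, hu, au, u0, u1, u2, huv, h⟩ hc1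
  obtain ⟨v3, hv3, a3, v30, v31, v32, v3n, e23⟩ := hc1
  have n2 := N v2 hv2 a2 v20 v21 v22 v1 hv1 a1 e12.symm v3 hv3 a3 e23 (Ne.symm v3n)
  have v2p0 : ¬ H.Adj v2 p0 := by
    intro h
    rcases n2 p0 hM.m0 hM.a0 h with h | h
    · exact v10 h.symm
    · exact v30 h.symm
  have v2p2 : ¬ H.Adj v2 p2 := by
    intro h
    rcases n2 p2 hM.m2 hM.a2 h with h | h
    · exact v12 h.symm
    · exact v32 h.symm
  have t3 := hM.three v3 hv3 v30 v31 v32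
  have h34 : 4 ≤ (L v3).card := by
    have := hM.ind v2 hv2 v3 hv3 e23 h23
    omega
  have e13 : ¬ H.Adj v1 v3 := fun h => e23.ne (n1' v3 hv3 a3 v32 h).symm
  by_cases hc2 : ∃ v4 ∈ X, Att H A v4 ∧ v4 ≠ p0 ∧ v4 ≠ p1 ∧ v4 ≠ p2 ∧ v4 ≠ v2 ∧ H.Adj v3 v4 ∧
      (L v4).card = 3
  swap
  · obtain ⟨b, hb, b0, b2⟩ := pick v2 hv2 v20 v21 v22
    refine hcon (hM.D1 IH F1 hv2 a2 v20 v21 v22 hb (fun _ => b0) (fun _ => b2) ?_)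
    intro u hu au u0 u1 u2 h _
    rcases n2 u hu au h with rfl | rfl
    · exact ⟨h14, fun v hv av w0 w1 w2 wz huv => absurd (n1' v hv av w2 huv) wz⟩
    · refine ⟨h34, fun v hv av w0 w1 w2 wz huv =>
        ⟨fun h3 => hc2 ⟨v, hv, av, w0, w1, w2, wz, huv, h3⟩, fun h1 => ?_⟩⟩
      rcases n2 v hv av h1 with rfl | rfl
      · exact e13 huv.symm
      · exact huv.ne rfl
  obtain ⟨v4, hv4, a4, v40, v41, v42, v4n, e34, h43⟩ := hc2
  have n3 := N v3 hv3 a3 v30 v31 v32 v2 hv2 a2 e23.symm v4 hv4 a4 e34 (Ne.symm v4n)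
  have v3p0 : ¬ H.Adj v3 p0 := by
    intro h
    rcases n3 p0 hM.m0 hM.a0 h with h | h
    · exact v20 h.symm
    · exact v40 h.symm
  have v3p2 : ¬ H.Adj v3 p2 := by
    intro h
    rcases n3 p2 hM.m2 hM.a2 h with h | h
    · exact v22 h.symm
    · exact v42 h.symm
  have hsub : L v1 \ L p2 ⊆ L v2 := by
    intro c' hc'
    rw [Finset.mem_sdiff] at hc'
    by_contra hc2
    refine hcon (hM.D1 IH F1 hv1 a1 v10 v11 v12 hc'.1 (fun h => absurd h v1p0) (fun _ => hc'.2) ?_)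
    intro u hu au u0 u1 u2 h hcu
    rw [n1' u hu au u2 h] at hcu
    exact absurd hcu hc2
  have heq : L v1 \ L p2 = L v2 := by
    refine Finset.eq_of_subset_of_card_le hsub ?_
    have := card_sdiff_ge (L v1) (L p2) 3 1 h14 o2.le
    omega
  obtain ⟨e, he, he4⟩ := exists_mem_sdiff (L v3) (L v4) (by omega)
  by_cases he2 : e ∈ L v2
  swap
  · refine hcon (hM.D1 IH F1 hv3 a3 v30 v31 v32 he (fun h => absurd h v3p0)
      (fun h => absurd h v3p2) ?_)
    intro u hu au u0 u1 u2 h heu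
    rcases n3 u hu au h with rfl | rfl
    · exact absurd heu he2
    · exact absurd heu he4
  have he1 := he2
  rw [← heq, Finset.mem_sdiff] at he1
  by_cases hw : ∃ w ∈ X, ¬ Att H A w ∧ w ≠ p0 ∧ w ≠ p1 ∧ w ≠ p2 ∧ H.Adj v2 w ∧ H.Adj v3 w ∧ H.Adj w v1
  swap
  · obtain ⟨g, hg, hge⟩ := exists_mem_sdiff (L v2) {e} (by rw [Finset.card_singleton]; omega)
    rw [Finset.mem_singleton] at hge
    refine hcon (hM.D2 good IH F1 hv2 hv3 hv1 a2 a3 a1 v20 v21 v22 v30 v31 v32 e23 e12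
      (Or.inr v1p) (Ne.symm v3n) v10 h23 hg he hge (fun h => absurd h v2p0)
      (fun h => absurd h v2p2) (fun h => absurd h v3p0) (fun h => absurd h v3p2) ?_)
    intro u hu au u0 u1 u2 us ut h
    have huv : u = v1 := by
      rcases h with ⟨h, -⟩ | ⟨h, heu⟩
      · exact (n2 u hu au h).resolve_right ut
      · rcases n3 u hu au h with h | h
        · exact absurd h us
        · rw [h] at heu
          exact absurd heu he4
    refine ⟨huv, fun h => e13 h.symm, h14, fun v hv av w0 w1 w2 h1 => Or.inl (n1' v hv av w2 h1), ?_⟩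
    intro w hwX aw w0 w1 w2 h1 h2 h3
    exact hw ⟨w, hwX, aw, w0, w1, w2, h1, h2, h3⟩
  obtain ⟨w, hwX, aw, w0, w1, w2, e2w, e3w, ew1⟩ := hw
  by_cases hu : ∃ u ∈ X, u ≠ v1 ∧ u ≠ v3 ∧ u ≠ w ∧ H.Adj v2 u
  · obtain ⟨u, hu, u1, u3, uw, e2u⟩ := hu
    exact hcon (hM.fan good IH hv1 hv2 hv3 hwX hu ⟨v11, v12⟩ ⟨v21, v22⟩ ⟨v31, v32⟩ ⟨w1, w2⟩ a1 a2 a3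
      e12 e23 (Ne.symm v3n) v1p ew1 e2w.symm e3w.symm u1 u3 uw e2u)
  · refine hcon (hM.D3 (w := w) IH F1 hv1 hv2 hv3 a1 a2 a3 v10 v11 v12 v20 v21 v22 v30 v31 v32
      he1.1 he e13 e12 e23 (fun h => absurd h v1p0) (fun _ => he1.2) (fun h => absurd h v3p0)
      (fun h => absurd h v3p2) ?_ t2 ?_)
    · intro u huX h
      by_contra hn
      rw [not_or, not_or] at hn
      exact hu ⟨u, huX, hn.1, hn.2.1, hn.2.2, h⟩
    · rintro u huX au u0 u1 u2 uy (h | h) heu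
      · exact uy (n1' u huX au u2 h)
      · rcases n3 u huX au h with h | h
        · exact uy h
        · rw [h] at heu
          exact he4 heu

theorem thmM (good : Good H) : ∀ n, IHM H n := by
  intro n
  induction n with
  | zero => intro A X p0 p1 p2 L h; omega
  | succ n ih =>
    intro A X p0 p1 p2 L h hM
    refine hM.step good fun A' X' q0 q1 q2 L' h' hM' => ih A' X' q0 q1 q2 L' (by omega) hM'

theorem MS.main (good : Good H) (hM : MS H A X p0 p1 p2 L) : Col H X L :=
  thmM good _ A X p0 p1 p2 L (Nat.lt_succ_self _) hM

end Combi

section Combi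

variable {V : Type} {G : SimpleGraph V} (D : Drawing G)

lemma apex_att (v : V) : Att D.apex {none} (some v) ↔ D.OnOuter v := by
  constructor
  · rintro ⟨a, rfl, h⟩
    exact h
  · intro h
    exact ⟨none, rfl, h⟩

lemma apex_adj (u v : V) : D.apex.Adj (some u) (some v) ↔ G.Adj u v := Iff.rfl

lemma list_of_col {L : V → Finset ℕ}
    (h : Col D.apex (range some) (fun o => o.elim ∅ L)) : ListColorable G L := by
  obtain ⟨c, c1, c2⟩ := h
  exact ⟨fun v => c (some v), fun v => c1 (some v) ⟨v, rfl⟩,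
    fun u v h => c2 (some u) ⟨u, rfl⟩ (some v) ⟨v, rfl⟩ h⟩

lemma ts_apex [Fintype V] (hplane : D.IsPlane) {L : V → Finset ℕ} (Q : Set V)
    (hQ : ∃ p q, Q ⊆ {p, q}) (hout : ∀ v ∈ Q, D.OnOuter v)
    (hadj : ∀ p ∈ Q, ∀ q ∈ Q, p ≠ q → G.Adj p q)
    (h₁ : ∀ v : V, ¬ D.OnOuter v → 5 ≤ (L v).card)
    (h₂ : ∀ v : V, D.OnOuter v → v ∉ Q → 3 ≤ (L v).card)
    (h₃ : ∀ v ∈ Q, (L v).card = 1)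
    (h₅ : ∀ u ∈ Q, ∀ v ∈ Q, G.Adj u v → L u ≠ L v) : ListColorable G L := by
  obtain ⟨p, q, hpq⟩ := hQ
  apply list_of_col D
  refine thmT' (A := {none}) (P := some '' Q) (D.good_apex hplane) ?_ ⟨some p, some q, ?_⟩
  · refine
      { conn := conn_singleton _
        disj := ?_
        sub := ?_
        att := ?_
        adj := ?_
        ne := ?_
        one := ?_
        three := ?_
        five := ?_ }
    · rintro a rfl ⟨v, hv⟩
      simp at hv
    · rintro _ ⟨v, hv, rfl⟩
      exact ⟨v, rfl⟩
    · rintro _ ⟨v, hv, rfl⟩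
      exact (apex_att D v).2 (hout v hv)
    · rintro _ ⟨v, hv, rfl⟩ _ ⟨u, hu, rfl⟩ h
      exact hadj v hv u hu fun h' => h (by rw [h'])
    · rintro _ ⟨v, hv, rfl⟩ _ ⟨u, hu, rfl⟩ h
      exact h₅ v hv u hu (hadj v hv u hu fun h' => h (by rw [h']))
    · rintro _ ⟨v, hv, rfl⟩
      exact h₃ v hv
    · rintro _ ⟨v, rfl⟩ h
      change 3 ≤ (L v).card
      by_cases ho : D.OnOuter v
      · exact h₂ v ho fun h' => h ⟨v, h', rfl⟩
      · exact le_trans (by norm_num) (h₁ v ho)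
    · rintro _ ⟨v, rfl⟩ h ha
      exact h₁ v fun h' => ha ((apex_att D v).2 h')
  · rintro _ ⟨v, hv, rfl⟩
    rcases hpq hv with rfl | h
    · exact Or.inl rfl
    · exact Or.inr (by rw [mem_singleton_iff.1 h]; rfl)

end Combi

/-- A plane graph with a precolored path `P` of length at most two on the outer face,
lists of size at least 5 inside, at least 3 on the outer face, no two adjacent vertices
with lists of size three, `L` proper on `P`, and no common neighbor of the three vertices
of `P` whose list is exactly the union of their lists, is `L`-colorable. -/
theorem planar_choosable_precolored_path
    {V : Type} [Fintype V] (G : SimpleGraph V) (D : Drawing G) (hplane : D.IsPlane)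
    {a b : V} (P : G.Walk a b) (hPpath : P.IsPath) (hPlen : P.length ≤ 2)
    (hPbd : D.walkSet P ⊆ frontier D.outerFace)
    (L : V → Finset ℕ)
    (h₁ : ∀ v : V, ¬ D.OnOuter v → 5 ≤ (L v).card)
    (h₂ : ∀ v : V, D.OnOuter v → v ∉ P.support → 3 ≤ (L v).card)
    (h₃ : ∀ v ∈ P.support, (L v).card = 1)
    (h₄ : ∀ u v : V, G.Adj u v → (L u).card = 3 → (L v).card ≠ 3)
    (h₅ : ∀ u ∈ P.support, ∀ v ∈ P.support, G.Adj u v → L u ≠ L v)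
    (h₆ : ∀ p₀ p₁ p₂ : V, P.support = [p₀, p₁, p₂] →
      ∀ x : V, G.Adj x p₀ → G.Adj x p₁ → G.Adj x p₂ → L x ≠ L p₀ ∪ L p₁ ∪ L p₂) :
    ListColorable G L := by
  have hout : ∀ v ∈ P.support, D.OnOuter v := fun v hv => hPbd (Or.inl ⟨v, hv, rfl⟩)
  clear hPbd
  match P, hPpath, hPlen with
  | .nil, hPpath, hPlen =>
    refine ts_apex D hplane {a} ⟨a, a, by simp⟩ ?_ ?_ h₁ ?_ ?_ ?_
    · intro v hv; exact hout v (by simpa using hv)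
    · rintro p rfl q rfl h; exact absurd rfl h
    · intro v ho hv; exact h₂ v ho (by simpa using hv)
    · intro v hv; exact h₃ v (by simpa using hv)
    · rintro p rfl q rfl h; exact absurd h G.irrefl
  | .cons hab .nil, hPpath, hPlen =>
    refine ts_apex D hplane {a, b} ⟨a, b, le_rfl⟩ ?_ ?_ h₁ ?_ ?_ ?_
    · intro v hv; exact hout v (by simpa using hv)
    · rintro p (rfl | rfl) q (rfl | rfl) h
      · exact absurd rfl h
      · exact hab
      · exact hab.symm
      · exact absurd rfl h
    · intro v ho hv; exact h₂ v ho (by simpa using hv)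
    · intro v hv; exact h₃ v (by simpa using hv)
    · intro u hu v hv; exact h₅ u (by simpa using hu) v (by simpa using hv)
  | .cons (v := m) ham (.cons hmb .nil), hPpath, hPlen =>
    have hab : a ≠ b := by
      have := hPpath.support_nodup
      simp at this
      tauto
    have hsup : ∀ v, v ≠ a → v ≠ m → v ≠ b →
        v ∉ (SimpleGraph.Walk.cons ham (.cons hmb .nil)).support := by
      intro v h1 h2 h3
      simp [h1, h2, h3]
    have sa : a ∈ (SimpleGraph.Walk.cons ham (.cons hmb .nil)).support := by simp
    have sm : m ∈ (SimpleGraph.Walk.cons ham (.cons hmb .nil)).support := by simp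
    have sb : b ∈ (SimpleGraph.Walk.cons ham (.cons hmb .nil)).support := by simp
    apply list_of_col D
    refine MS.main (D.good_apex hplane) (A := {none}) (p0 := some a) (p1 := some m) (p2 := some b) ?_
    refine
      { conn := conn_singleton _
        disj := ?_
        m0 := ⟨_, rfl⟩
        m1 := ⟨_, rfl⟩
        m2 := ⟨_, rfl⟩
        n02 := fun h => hab (Option.some_injective _ h)
        e01 := ham
        e12 := hmb
        a0 := (apex_att D a).2 (hout a sa)
        a2 := (apex_att D b).2 (hout b sb)
        o0 := h₃ a sa
        o1 := h₃ m sm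
        o2 := h₃ b sb
        d01 := h₅ a sa m sm ham
        d12 := h₅ m sm b sb hmb
        d02 := fun h => h₅ a sa b sb h
        three := ?_
        five := ?_
        ind := ?_
        six := ?_ }
    · rintro x rfl ⟨v, hv⟩
      simp at hv
    · rintro _ ⟨v, rfl⟩ v0 v1 v2
      change 3 ≤ (L v).card
      by_cases ho : D.OnOuter v
      · exact h₂ v ho (hsup v (fun h => v0 (by rw [h])) (fun h => v1 (by rw [h]))
          (fun h => v2 (by rw [h])))
      · exact le_trans (by norm_num) (h₁ v ho)
    · rintro _ ⟨v, rfl⟩ v0 v1 v2 ha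
      exact h₁ v fun h' => ha ((apex_att D v).2 h')
    · rintro _ ⟨u, rfl⟩ _ ⟨v, rfl⟩ h
      exact h₄ u v h
    · rintro _ ⟨x, rfl⟩ x0 x1 x2
      exact h₆ a m b (by simp) x x0 x1 x2
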